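/- arXiv:2506.06263 — 5 statements merged into one kernel-verified Lean document; each statement's English description precedes it below -/
import Mathlib

section
/- Let ν_0 be a compactly supported probability measure on [0, ∞). For each n ≥ 1 let (r^{(n)}_j)_{1 ≤ j ≤ n} be an increasing sequence of positive reals such that the empirical measures (1/n) Σ_{j=1}^n δ_{r^{(n)}_j} converge weakly to ν_0, and let (m_n)_{n ≥ 1} be a sequence of positive integers with m_n/(n log n) → ∞. Then for every t ∈ (0,1), the empirical measure of the roots (counted with multiplicity) of the ⌊n m_n t⌋-th derivative of P_{n,m_n} converges weakly, as n → ∞, to the probability measure μ_t on ℂ defined as the law of R·e^{iΘ}, where Θ is uniformly distributed on [0, 2π), R is independent of Θ and distributed according to ν_t, and ν_t is the law of (1 − t/V_t)·q_{ν_0}(V_t) with V_t uniformly distributed on [t, 1]. -/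
/-!
Write `m = m_n`, `K = ⌊n m t⌋`. The polynomial `P_{n,m}` is `Q₀(z ^ m)` with
`Q₀ = ∏ (X - r_j ^ m)`. Differentiating `z ^ a Q(z ^ m)` gives `z ^ (a - 1) (a Q + m X Q')(z ^ m)`,
or `m z ^ (m - 1) Q'(z ^ m)` if `a = 0`. Both operations preserve the polynomials all of whose
roots are positive: `a Q + m X Q'` divides the derivative of the real-rooted polynomial
`X ^ a Q ^ m`, so Rolle's theorem applies. Hence the `K`-th derivative is `z ^ a Q(z ^ m)` with
`a < m` and `Q` having only positive roots (`exists_iterate_derivative`).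

The coefficients of `Q` are explicit: the `k`-th elementary symmetric function of its roots is that
of the `r_j ^ m` times a quotient of falling factorials. An elementary symmetric function of at
most `n` positive numbers is the product of the `k` largest ones up to a factor `2 ^ n`, so
quotients of consecutive elementary symmetric functions recover the individual roots up to
`4 ^ n` (`compare_of_esymm`). Taking `m`-th roots, the radius of the roots of the derivative that
corresponds to `r_j` is `r_j (1 - K / (m j))` up to a factor `4 ^ (n / m)` and a shift of `j` by one
(`structure_derivative`). Since `n / m → 0`, only the factor `1 - t / v` survives when `j ≈ n v`.

Each radius carries `m` equidistributed roots, and the empirical quantiles of the `r_j` converge to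
`q_{ν₀}` at its continuity points (`tendsto_empirical_quantile`), that is, almost everywhere. Writing
averages as integrals of step functions over `[0, 1]` (`average_eq_integral`), dominated
convergence gives the limit in the angle (`tendsto_circle_average`) and then in the radius.
-/

open Polynomial MeasureTheory Filter Topology

/-- The quantile function of a finite measure `ν` on `[0,∞)`:
`q_ν(α) = inf {y ≥ 0 : ν([0,y]) ≥ α}`. -/
noncomputable def quantileFn (ν : MeasureTheory.Measure ℝ) (α : ℝ) : ℝ :=
  sInf {y : ℝ | 0 ≤ y ∧ ENNReal.ofReal α ≤ ν (Set.Icc 0 y)}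

/-- The uniform probability measure on the interval `[a,b]`. -/
noncomputable def unifOn (a b : ℝ) : MeasureTheory.Measure ℝ :=
  (ENNReal.ofReal (b - a))⁻¹ • (MeasureTheory.volume.restrict (Set.Icc a b))

/-- The empirical measure of the roots (with multiplicity) of a complex polynomial:
`(1/deg) Σ δ_z` over the roots `z`. -/
noncomputable def rootMeasureC (P : Polynomial ℂ) : MeasureTheory.Measure ℂ :=
  (P.natDegree : ENNReal)⁻¹ • (P.roots.map MeasureTheory.Measure.dirac).sum

/-! ### Real-rootedness of the derivatives -/

/-- `Q` splits over `ℝ` and all its roots are positive. -/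
def PosSplits (Q : ℝ[X]) : Prop := Q.Splits ∧ ∀ x ≤ 0, Q.eval x ≠ 0

lemma PosSplits.ne_zero {Q : ℝ[X]} (h : PosSplits Q) : Q ≠ 0 := by
  rintro rfl
  exact h.2 0 le_rfl (by simp)

lemma PosSplits.pos_of_mem_roots {Q : ℝ[X]} (h : PosSplits Q) {x : ℝ} (hx : x ∈ Q.roots) :
    0 < x := by
  by_contra hx'
  exact h.2 x (not_lt.mp hx') (by simpa using (mem_roots'.mp hx).2)

lemma sum_one_div_sub_nonpos {s : Multiset ℝ} (hs : ∀ z ∈ s, 0 < z) {x : ℝ} (hx : x ≤ 0) :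
    (s.map fun z => 1 / (x - z)).sum ≤ 0 := by
  have := Multiset.sum_le_card_nsmul (s.map fun z => 1 / (x - z)) 0 (by
    intro w hw
    obtain ⟨z, hz, rfl⟩ := Multiset.mem_map.mp hw
    exact (one_div_neg.mpr (by linarith [hs z hz])).le)
  simpa using this

/-- The derivative of a real-rooted polynomial is real-rooted (Rolle). -/
lemma splits_derivative_real {p : ℝ[X]} (hp : p.Splits) : (derivative p).Splits := by
  rw [splits_iff_card_roots] at hp ⊢
  have h1 := card_roots_le_derivative p
  have h2 := card_roots' (derivative p)
  have h3 := natDegree_derivative_le p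
  by_cases h0 : p.natDegree = 0
  · omega
  · omega

lemma PosSplits.deriv {Q : ℝ[X]} (h : PosSplits Q) (hd : 0 < Q.natDegree) :
    PosSplits (derivative Q) := by
  refine ⟨splits_derivative_real h.1, fun x hx h0 => ?_⟩
  have h1 := h.1.eval_derivative_div_eval_of_ne_zero (h.2 x hx)
  rw [h0, zero_div] at h1
  have hcard : 0 < Q.roots.card := by rw [← h.1.natDegree_eq_card_roots]; exact hd
  obtain ⟨y, hy⟩ := Multiset.card_pos_iff_exists_mem.mp hcard
  obtain ⟨s, hs⟩ := Multiset.exists_cons_of_mem hy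
  rw [hs, Multiset.map_cons, Multiset.sum_cons] at h1
  have hneg : ∀ z ∈ Q.roots, 1 / (x - z) < 0 := fun z hz =>
    one_div_neg.mpr (by linarith [h.pos_of_mem_roots hz])
  have h2 : (s.map fun z => 1 / (x - z)).sum ≤ 0 :=
    sum_one_div_sub_nonpos
      (fun z hz => h.pos_of_mem_roots (by rw [hs]; exact Multiset.mem_cons_of_mem hz)) hx
  linarith [hneg y hy]

/-- The polynomial `a Q + m X Q'` is a factor of the derivative of the real-rooted
polynomial `X ^ a * Q ^ m`, hence real-rooted. -/
lemma PosSplits.euler {Q : ℝ[X]} (h : PosSplits Q) {a m : ℕ} (ha : 0 < a) (hm : 0 < m) :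
    PosSplits (C (a : ℝ) * Q + C (m : ℝ) * X * derivative Q) := by
  have hev : ∀ x ≤ 0, (C (a : ℝ) * Q + C (m : ℝ) * X * Polynomial.derivative Q).eval x ≠ 0 := by
    intro x hx h0
    have hQ := h.2 x hx
    have h1 := h.1.eval_derivative_div_eval_of_ne_zero hQ
    rw [div_eq_iff hQ] at h1
    simp only [eval_add, eval_mul, eval_C, eval_X, h1] at h0
    have h2 : (a + m * x * (Q.roots.map fun z => 1 / (x - z)).sum) = 0 := by
      apply mul_right_cancel₀ hQ
      linarith
    have h3 : (Q.roots.map fun z => 1 / (x - z)).sum ≤ 0 :=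
      sum_one_div_sub_nonpos (fun z hz => h.pos_of_mem_roots hz) hx
    have h4 : 0 ≤ m * x * (Q.roots.map fun z => 1 / (x - z)).sum :=
      mul_nonneg_of_nonpos_of_nonpos
        (mul_nonpos_of_nonneg_of_nonpos (Nat.cast_nonneg m) hx) h3
    have h5 : (0 : ℝ) < a := by exact_mod_cast ha
    linarith
  refine ⟨?_, hev⟩
  have hne : C (a : ℝ) * Q + C (m : ℝ) * X * Polynomial.derivative Q ≠ 0 := by
    intro h0
    exact hev 0 le_rfl (by rw [h0, eval_zero])
  have hder : Polynomial.derivative (X ^ a * Q ^ m : ℝ[X]) =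
      (X ^ (a - 1) * Q ^ (m - 1)) *
        (C (a : ℝ) * Q + C (m : ℝ) * X * Polynomial.derivative Q) := by
    obtain ⟨a, rfl⟩ : ∃ b, a = b + 1 := ⟨a - 1, by omega⟩
    obtain ⟨m, rfl⟩ : ∃ b, m = b + 1 := ⟨m - 1, by omega⟩
    simp only [derivative_mul, derivative_pow, derivative_X, Nat.add_sub_cancel]
    ring
  have hs : (Polynomial.derivative (X ^ a * Q ^ m : ℝ[X])).Splits :=
    splits_derivative_real ((Splits.X_pow a).mul (h.1.pow m))
  refine hs.of_dvd ?_ ⟨_, by rw [hder, mul_comm]⟩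
  rw [hder]
  exact mul_ne_zero (mul_ne_zero (pow_ne_zero _ X_ne_zero) (pow_ne_zero _ h.ne_zero)) hne

/-- Every derivative of `Q(z ^ m)` of order at most its degree is again of the form
`z ^ a * Q₁(z ^ m)` with `Q₁` having only positive roots. -/
lemma exists_iterate_derivative {Q : ℝ[X]} (h : PosSplits Q) {m : ℕ} (hm : 0 < m) (K : ℕ)
    (hK : K ≤ Q.natDegree * m) :
    ∃ (a : ℕ) (Q₁ : ℝ[X]), a < m ∧ PosSplits Q₁ ∧ a + m * Q₁.natDegree + K = m * Q.natDegree ∧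
      derivative^[K] (expand ℝ m Q) = X ^ a * expand ℝ m Q₁ := by
  induction K with
  | zero => exact ⟨0, Q, hm, h, by simp, by simp⟩
  | succ K ih =>
    obtain ⟨a, R, ham, hR, hdeg, hF⟩ := ih (by omega)
    rw [Function.iterate_succ_apply', hF]
    rcases Nat.eq_zero_or_pos a with rfl | ha
    · have hd : 0 < R.natDegree := by
        rcases Nat.eq_zero_or_pos R.natDegree with h0 | h0
        · rw [h0] at hdeg; nlinarith
        · exact h0
      have hd' : (derivative R).natDegree + 1 = R.natDegree := by
        rw [natDegree_derivative R]; omega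
      refine ⟨m - 1, C (m : ℝ) * derivative R, by omega, ?_, ?_, ?_⟩
      · have hm0 : (m : ℝ) ≠ 0 := by exact_mod_cast hm.ne'
        exact ⟨(hR.deriv hd).1.C_mul _, fun x hx => by
          rw [eval_mul, eval_C]; exact mul_ne_zero hm0 ((hR.deriv hd).2 x hx)⟩
      · rw [natDegree_C_mul (by exact_mod_cast hm.ne')]
        rw [← hd'] at hdeg
        have := mul_add m (derivative R).natDegree 1
        omega
      · rw [pow_zero, one_mul, derivative_expand, map_mul, expand_C, C_eq_natCast]; ring
    · have hE := hR.euler ha hm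
      refine ⟨a - 1, _, by omega, hE, ?_, ?_⟩
      · have : (C (a : ℝ) * R + C (m : ℝ) * X * derivative R).natDegree = R.natDegree := by
          apply le_antisymm
          · rw [natDegree_le_iff_coeff_eq_zero]
            intro N hN
            rw [coeff_add, coeff_C_mul, coeff_eq_zero_of_natDegree_lt hN, mul_assoc, coeff_C_mul]
            obtain ⟨N, rfl⟩ : ∃ k, N = k + 1 := ⟨N - 1, by omega⟩
            rw [coeff_X_mul, coeff_derivative, coeff_eq_zero_of_natDegree_lt hN]
            simp
          · apply le_natDegree_of_ne_zero
            rw [coeff_add, coeff_C_mul, mul_assoc, coeff_C_mul]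
            have hlc : R.coeff R.natDegree ≠ 0 := by
              simpa using hR.ne_zero
            have h5 : (0 : ℝ) < a := by exact_mod_cast ha
            rcases hN : R.natDegree with _ | N
            · rw [hN] at hlc; simpa [ha.ne'] using hlc
            · rw [hN] at hlc
              rw [coeff_X_mul, coeff_derivative]
              have : (a : ℝ) * R.coeff (N + 1) + m * (R.coeff (N + 1) * (N + 1)) =
                (a + m * (N + 1)) * R.coeff (N + 1) := by ring
              rw [this]
              exact mul_ne_zero (by positivity) hlc
        rw [this]; omega
      · obtain ⟨b, rfl⟩ : ∃ b, a = b + 1 := ⟨a - 1, by omega⟩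
        obtain ⟨k, rfl⟩ : ∃ k, m = k + 1 := ⟨m - 1, by omega⟩
        simp only [derivative_mul, derivative_X_pow, derivative_expand, map_add, map_mul,
          expand_X, Nat.add_sub_cancel, map_natCast]
        ring

/-! ### Elementary symmetric functions and falling factorials -/

/-- Among products of a given number of distinct members of a decreasing positive family, the
product of the first ones is the largest. -/
lemma prod_le_prod_range_card {d : ℕ} {x : ℕ → ℝ} (hpos : ∀ i < d, 0 < x i)
    (hanti : ∀ i j, i ≤ j → j < d → x j ≤ x i) (s : Finset ℕ) (hs : ∀ i ∈ s, i < d) :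
    ∏ i ∈ s, x i ≤ ∏ i ∈ Finset.range s.card, x i := by
  induction s using Finset.induction_on_max with
  | empty => simp
  | insert a s ha ih =>
    have hnot : a ∉ s := fun h => lt_irrefl _ (ha a h)
    have hcard : s.card ≤ a := by
      have : s ⊆ Finset.range a := fun i hi => Finset.mem_range.mpr (ha i hi)
      simpa using Finset.card_le_card this
    have had : a < d := hs a (Finset.mem_insert_self _ _)
    rw [Finset.prod_insert hnot, Finset.card_insert_of_notMem hnot, Finset.prod_range_succ,
      mul_comm]
    refine mul_le_mul (ih fun i hi => hs i (Finset.mem_insert_of_mem hi)) (hanti _ _ hcard had)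
      (hpos a had).le (Finset.prod_nonneg fun i hi => (hpos i ?_).le)
    exact lt_of_lt_of_le (Finset.mem_range.mp hi) (hcard.trans had.le)

/-- The `k`-th elementary symmetric function of positive numbers in decreasing order is
comparable to the product of the `k` largest ones. -/
lemma esymm_bounds {d : ℕ} {x : ℕ → ℝ} (hpos : ∀ i < d, 0 < x i)
    (hanti : ∀ i j, i ≤ j → j < d → x j ≤ x i) {k : ℕ} (hk : k ≤ d) :
    ∏ i ∈ Finset.range k, x i ≤ ((Multiset.range d).map x).esymm k ∧
    ((Multiset.range d).map x).esymm k ≤ 2 ^ d * ∏ i ∈ Finset.range k, x i := by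
  have hE := Finset.esymm_map_val x (Finset.range d) k
  rw [Finset.range_val] at hE
  rw [hE]
  constructor
  · have hmem : Finset.range k ∈ (Finset.range d).powersetCard k :=
      Finset.mem_powersetCard.mpr ⟨Finset.range_mono hk, Finset.card_range k⟩
    refine Finset.single_le_sum (f := fun t : Finset ℕ => ∏ i ∈ t, x i) (fun s hs => ?_) hmem
    exact Finset.prod_nonneg fun i hi =>
      (hpos i (Finset.mem_range.mp ((Finset.mem_powersetCard.mp hs).1 hi))).le
  · have h1 : ∀ s ∈ (Finset.range d).powersetCard k,
        ∏ i ∈ s, x i ≤ ∏ i ∈ Finset.range k, x i := by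
      intro s hs
      obtain ⟨hsub, hc⟩ := Finset.mem_powersetCard.mp hs
      have := prod_le_prod_range_card hpos hanti s fun i hi => Finset.mem_range.mp (hsub hi)
      rwa [hc] at this
    refine (Finset.sum_le_card_nsmul _ _ _ h1).trans ?_
    rw [Finset.card_powersetCard, Finset.card_range, nsmul_eq_mul]
    have h2 : ((d.choose k : ℕ) : ℝ) ≤ 2 ^ d := by exact_mod_cast Nat.choose_le_two_pow d k
    exact mul_le_mul_of_nonneg_right h2
      (Finset.prod_nonneg fun i hi => (hpos i (lt_of_lt_of_le (Finset.mem_range.mp hi) hk)).le)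

/-- The `k`-th largest of positive numbers is, up to a factor `2 ^ d`, the ratio of consecutive
elementary symmetric functions. -/
lemma esymm_ratio_bounds {d : ℕ} {x : ℕ → ℝ} (hpos : ∀ i < d, 0 < x i)
    (hanti : ∀ i j, i ≤ j → j < d → x j ≤ x i) {k : ℕ} (hk : k < d) :
    x k * ((Multiset.range d).map x).esymm k ≤ 2 ^ d * ((Multiset.range d).map x).esymm (k + 1) ∧
    ((Multiset.range d).map x).esymm (k + 1) ≤ 2 ^ d * (x k * ((Multiset.range d).map x).esymm k) ∧
    0 < ((Multiset.range d).map x).esymm k := by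
  obtain ⟨h1, h2⟩ := esymm_bounds hpos hanti hk.le
  obtain ⟨h3, h4⟩ := esymm_bounds hpos hanti (Nat.succ_le_of_lt hk)
  rw [Nat.succ_eq_add_one, Finset.prod_range_succ] at h3 h4
  have hx := hpos k hk
  have hT : 0 < ∏ i ∈ Finset.range k, x i :=
    Finset.prod_pos fun i hi => hpos i ((Finset.mem_range.mp hi).trans hk)
  have h2d : (0 : ℝ) < 2 ^ d := by positivity
  refine ⟨?_, ?_, hT.trans_le h1⟩
  · calc _ ≤ x k * (2 ^ d * ∏ i ∈ Finset.range k, x i) := by gcongr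
      _ = 2 ^ d * ((∏ i ∈ Finset.range k, x i) * x k) := by ring
      _ ≤ _ := by gcongr
  · refine h4.trans ?_
    rw [mul_comm (x k)]
    gcongr

/-- If the elementary symmetric functions of two decreasing families agree up to factors `c k`,
their members agree up to the ratios `c (i + 1) / c i` and the factor `4 ^ n`. -/
lemma compare_of_esymm {d n : ℕ} (hdn : d ≤ n) {x y c : ℕ → ℝ} (hx : ∀ i < d, 0 < x i)
    (hxa : ∀ i j, i ≤ j → j < d → x j ≤ x i) (hy : ∀ i < n, 0 < y i)
    (hya : ∀ i j, i ≤ j → j < n → y j ≤ y i) (hc : ∀ k ≤ d, 0 < c k)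
    (he : ∀ k ≤ d, ((Multiset.range d).map x).esymm k = ((Multiset.range n).map y).esymm k * c k)
    {i : ℕ} (hi : i < d) :
    x i * c i ≤ 4 ^ n * (y i * c (i + 1)) ∧ y i * c (i + 1) ≤ 4 ^ n * (x i * c i) := by
  obtain ⟨a1, a2, a3⟩ := esymm_ratio_bounds hx hxa hi
  obtain ⟨b1, b2, b3⟩ := esymm_ratio_bounds hy hya (hi.trans_le hdn)
  rw [he i hi.le, he (i + 1) hi] at a1 a2
  have hc0 := hc i hi.le
  have hc1 := hc (i + 1) hi
  have hx0 := hx i hi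
  have hy0 := hy i (hi.trans_le hdn)
  have h2 : (2 : ℝ) ^ d ≤ 2 ^ n := pow_le_pow_right₀ (by norm_num) hdn
  have h4 : (4 : ℝ) ^ n = 2 ^ n * 2 ^ n := by rw [← mul_pow]; norm_num
  have h2n : (0 : ℝ) < 2 ^ n := by positivity
  set e := ((Multiset.range n).map y).esymm i
  set e' := ((Multiset.range n).map y).esymm (i + 1)
  have he' : 0 < e' := by
    have h := mul_pos hy0 b3
    by_contra hne
    have := mul_nonpos_of_nonneg_of_nonpos h2n.le (not_lt.mp hne)
    linarith
  rw [h4]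
  constructor
  · refine le_of_mul_le_mul_right ?_ b3
    calc x i * c i * e = x i * (e * c i) := by ring
      _ ≤ 2 ^ d * (e' * c (i + 1)) := a1
      _ ≤ 2 ^ n * ((2 ^ n * (y i * e)) * c (i + 1)) := by gcongr
      _ = _ := by ring
  · refine le_of_mul_le_mul_right ?_ b3
    calc y i * c (i + 1) * e = (y i * e) * c (i + 1) := by ring
      _ ≤ (2 ^ n * e') * c (i + 1) := by gcongr
      _ = 2 ^ n * (e' * c (i + 1)) := by ring
      _ ≤ 2 ^ n * (2 ^ d * (x i * (e * c i))) := by gcongr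
      _ ≤ 2 ^ n * (2 ^ n * (x i * (e * c i))) := by gcongr
      _ = _ := by ring

lemma descFactorial_swap {M m K : ℕ} (hK : K ≤ M) :
    M.descFactorial K * (M + m).descFactorial m =
      (M + m - K).descFactorial m * (M + m).descFactorial K := by
  have h1 := Nat.descFactorial_mul_descFactorial (n := M + m) (k := m) (m := m + K) (by omega)
  have h2 := Nat.descFactorial_mul_descFactorial (n := M + m) (k := K) (m := m + K) (by omega)
  rw [show M + m - m = M by omega, show m + K - m = K by omega] at h1
  rw [show m + K - K = m by omega] at h2
  rw [h1, h2]

/-- The quotient of the falling factorials of order `K` at `M` and `M + m` equals the quotient of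
those of order `m` at `M + m - K` and `M + m` (`descFactorial_swap`); each of the `m` factors
of the latter lies between `1 - K / M` and `1 - K / (M + m)`. -/
lemma descFactorial_ratio_bounds {M m K : ℕ} (hK : K ≤ M) :
    (M.descFactorial K : ℝ) ≤ (1 - K / ((M : ℝ) + m)) ^ m * (M + m).descFactorial K ∧
    (1 - K / (M : ℝ)) ^ m * (M + m).descFactorial K ≤ (M.descFactorial K : ℝ) := by
  have hD : ∀ N : ℕ, m ≤ N → (N.descFactorial m : ℝ) = ∏ i ∈ Finset.range m, ((N : ℝ) - i) := by
    intro N hN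
    rw [Nat.descFactorial_eq_prod_range, Nat.cast_prod]
    refine Finset.prod_congr rfl fun i hi => ?_
    rw [Nat.cast_sub ((Finset.mem_range.mp hi).le.trans hN)]
  have hs : (M.descFactorial K : ℝ) * (M + m).descFactorial m =
      (M + m - K).descFactorial m * (M + m).descFactorial K := by
    exact_mod_cast descFactorial_swap hK
  have hpos : (0 : ℝ) < (M + m).descFactorial m := by
    exact_mod_cast Nat.descFactorial_pos.mpr (by omega)
  have hKM : (K : ℝ) ≤ M := by exact_mod_cast hK
  have hK0 : (0 : ℝ) ≤ K := Nat.cast_nonneg K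
  have hL : 0 ≤ 1 - K / (M : ℝ) := by
    have := div_le_one_of_le₀ hKM (Nat.cast_nonneg M)
    linarith
  have hU : 0 ≤ 1 - K / ((M : ℝ) + m) := by
    have := div_le_one_of_le₀ (show (K : ℝ) ≤ M + m by
      linarith [Nat.cast_nonneg (α := ℝ) m]) (by positivity)
    linarith
  have e1 := hD (M + m) (by omega)
  have e2 := hD (M + m - K) (by omega)
  rw [Nat.cast_sub (by omega)] at e2
  push_cast at e1 e2
  have hprod : ∀ q : ℝ, q ^ m * (M + m).descFactorial m =
      ∏ i ∈ Finset.range m, (q * ((M : ℝ) + m - i)) := by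
    intro q
    rw [Finset.prod_mul_distrib, e1]; simp
  have him : ∀ i ∈ Finset.range m, (i : ℝ) ≤ m := fun i hi => by
    exact_mod_cast (Finset.mem_range.mp hi).le
  constructor
  · refine le_of_mul_le_mul_right ?_ hpos
    rw [hs, mul_right_comm, hprod, e2]
    refine mul_le_mul_of_nonneg_right (Finset.prod_le_prod (fun i hi => ?_) fun i hi => ?_)
      (Nat.cast_nonneg _)
    · linarith [him i hi]
    · have hmi := Finset.mem_range.mp hi
      have hpos' : (0 : ℝ) < M + m := by
        have : 0 < M + m := by omega
        exact_mod_cast this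
      have : (K : ℝ) / (M + m) * (M + m - i) ≤ K := by
        rw [div_mul_eq_mul_div, div_le_iff₀ hpos']
        nlinarith [Nat.cast_nonneg (α := ℝ) i]
      linarith
  · refine le_of_mul_le_mul_right ?_ hpos
    rw [hs, mul_right_comm, hprod, e2]
    refine mul_le_mul_of_nonneg_right (Finset.prod_le_prod (fun i hi => ?_) fun i hi => ?_)
      (Nat.cast_nonneg _)
    · exact mul_nonneg hL (by linarith [him i hi, Nat.cast_nonneg (α := ℝ) M])
    · rcases Nat.eq_zero_or_pos M with rfl | hM
      · have : K = 0 := by omega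
        subst this; simp
      · have hM' : (0 : ℝ) < M := by exact_mod_cast hM
        have : K ≤ (K : ℝ) / M * (M + m - i) := by
          rw [div_mul_eq_mul_div, le_div_iff₀ hM']
          nlinarith [him i hi]
        linarith

lemma exists_antitone_enum (s : Multiset ℝ) :
    ∃ x : ℕ → ℝ, s = (Multiset.range s.card).map x ∧ ∀ i j, i ≤ j → j < s.card → x j ≤ x i := by
  refine ⟨fun i => (s.sort (· ≥ ·)).getD i 0, ?_, ?_⟩
  · conv_lhs => rw [← Multiset.sort_eq s (· ≥ ·)]
    rw [← Multiset.coe_range, Multiset.map_coe, Multiset.coe_eq_coe]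
    apply List.Perm.of_eq
    apply List.ext_getElem
    · simp
    · intro i h1 h2
      rw [List.getElem_map, List.getElem_range, List.getD_eq_getElem _ _ h1]
  · intro i j hij hj
    have hl : (s.sort (· ≥ ·)).length = s.card := Multiset.length_sort _
    simp only
    rw [List.getD_eq_getElem _ _ (by omega), List.getD_eq_getElem _ _ (by omega)]
    rcases hij.eq_or_lt with rfl | h
    · exact le_rfl
    · exact List.pairwise_iff_getElem.mp (Multiset.pairwise_sort s (· ≥ ·)) i j _ _ h

/-! ### The roots of the derivative -/

lemma integrable_sum_dirac (f : ℂ → ℝ) (s : Multiset ℂ) :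
    Integrable f (s.map Measure.dirac).sum := by
  induction s using Multiset.induction_on with
  | empty => simp
  | cons a s ih =>
    rw [Multiset.map_cons, Multiset.sum_cons]
    exact (integrable_dirac (by simp)).add_measure ih

lemma integral_sum_dirac (f : ℂ → ℝ) (s : Multiset ℂ) :
    ∫ z, f z ∂(s.map Measure.dirac).sum = (s.map f).sum := by
  induction s using Multiset.induction_on with
  | empty => simp
  | cons a s ih =>
    rw [Multiset.map_cons, Multiset.sum_cons, integral_add_measure (integrable_dirac (by simp))
      (integrable_sum_dirac f s), ih, integral_dirac, Multiset.map_cons, Multiset.sum_cons]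

lemma integral_rootMeasureC (f : ℂ → ℝ) (P : ℂ[X]) :
    ∫ z, f z ∂(rootMeasureC P) = (P.natDegree : ℝ)⁻¹ * (P.roots.map f).sum := by
  rw [rootMeasureC, integral_smul_measure, integral_sum_dirac]
  simp

lemma nthRoots_ofReal_pow {m : ℕ} (hm : 0 < m) (ρ : ℝ) :
    nthRoots m ((ρ : ℂ) ^ m) = (Multiset.range m).map
      fun l : ℕ => (ρ : ℂ) * Complex.exp (((2 * Real.pi * (l / m) : ℝ) : ℂ) * Complex.I) := by
  rw [(Complex.isPrimitiveRoot_exp m hm.ne').nthRoots_eq rfl]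
  refine Multiset.map_congr rfl fun l _ => ?_
  rw [← Complex.exp_nat_mul, mul_comm]
  congr 2
  push_cast
  ring

/-- The roots of `z ^ a * Q(z ^ m)` when `Q` has the positive roots `ρ i ^ m`. -/
lemma roots_X_pow_mul_expand {Q : ℝ[X]} (h : PosSplits Q) {m : ℕ} (hm : 0 < m) (a : ℕ)
    {ρ : ℕ → ℝ} {d : ℕ} (hρ : Q.roots = (Multiset.range d).map fun i => ρ i ^ m) :
    ((X ^ a * expand ℝ m Q).map (algebraMap ℝ ℂ)).roots =
      Multiset.replicate a 0 + (Multiset.range d).bind fun i => (Multiset.range m).map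
        fun l : ℕ => (ρ i : ℂ) * Complex.exp (((2 * Real.pi * (l / m) : ℝ) : ℂ) * Complex.I) := by
  have hQ : (expand ℝ m Q).map (algebraMap ℝ ℂ) = C (Q.leadingCoeff : ℂ) *
      ((Multiset.range d).map fun i => (X ^ m - C ((ρ i : ℂ) ^ m) : ℂ[X])).prod := by
    conv_lhs => rw [h.1.eq_prod_roots]
    rw [hρ, map_mul, expand_C, Polynomial.map_mul, map_C, map_multiset_prod,
      Polynomial.map_multiset_prod, Multiset.map_map, Multiset.map_map, Multiset.map_map]
    congr 2
    refine Multiset.map_congr rfl fun i _ => ?_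
    simp
  have hne : ∀ c : ℂ, (X ^ m - C c : ℂ[X]) ≠ 0 := fun c => X_pow_sub_C_ne_zero hm c
  have hlc : (Q.leadingCoeff : ℂ) ≠ 0 := by
    exact_mod_cast leadingCoeff_ne_zero.mpr h.ne_zero
  have hnz : (0 : ℂ[X]) ∉ (Multiset.range d).map fun i => (X ^ m - C ((ρ i : ℂ) ^ m) : ℂ[X]) := by
    intro h0
    obtain ⟨i, _, hi⟩ := Multiset.mem_map.mp h0
    exact hne _ hi
  rw [Polynomial.map_mul, hQ, Polynomial.map_pow, map_X, roots_mul, roots_X_pow,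
    roots_C_mul _ hlc, roots_multiset_prod _ hnz, Multiset.bind_map, Multiset.nsmul_singleton]
  · congr 1
    refine Multiset.bind_congr fun i _ => ?_
    exact nthRoots_ofReal_pow hm (ρ i)
  · refine mul_ne_zero (pow_ne_zero _ X_ne_zero) (mul_ne_zero (C_ne_zero.mpr hlc) ?_)
    exact Multiset.prod_ne_zero hnz

lemma map_ofReal_prod (n m : ℕ) (r : Fin n → ℝ) :
    (∏ j, (X ^ m - C ((r j : ℂ) ^ m)) : ℂ[X]) =
      (expand ℝ m (∏ j, (X - C (r j ^ m)))).map (algebraMap ℝ ℂ) := by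
  rw [map_prod, Polynomial.map_prod]
  refine Finset.prod_congr rfl fun j _ => ?_
  simp

/-- The roots of the `K`-th derivative are `0`, with multiplicity `a < m`, and the vertices of `d`
regular `m`-gons centred at `0` with radii `ρ i`. The radius `ρ i` is close to
`r j * (1 - K / (m j))`, where `j` is the mirror index of `i` (both counted from `0`); the error
is the factor `4 ^ (n / m)` and the shift from `j` to `j + 1`. If `j = 0` and `i < d`, then `K = 0`,
so that the quotient `K / 0 = 0` in the lower bound is harmless. -/
lemma structure_derivative {n m : ℕ} (hm : 0 < m) {r : Fin n → ℝ} (hmono : StrictMono r)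
    (hpos : ∀ j, 0 < r j) {K : ℕ} (hK : K ≤ n * m) :
    ∃ (d a : ℕ) (ρ : ℕ → ℝ), a < m ∧ a + m * d + K = m * n ∧
      (∀ i < d, ∀ j : Fin n, (j : ℕ) + i + 1 = n →
        ρ i ≤ (4 : ℝ) ^ ((n : ℝ) / m) * (r j * (1 - K / (m * ((j : ℕ) + 1 : ℝ)))) ∧
        r j * (1 - K / (m * ((j : ℕ) : ℝ))) ≤ (4 : ℝ) ^ ((n : ℝ) / m) * ρ i) ∧
      ∀ f : ℂ → ℝ, ∫ z, f z ∂(rootMeasureC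
          (derivative^[K] (∏ j, (X ^ m - C ((r j : ℂ) ^ m))))) =
        ((a + m * d : ℕ) : ℝ)⁻¹ * (a * f 0 + ∑ i ∈ Finset.range d, ∑ l ∈ Finset.range m,
          f ((ρ i : ℂ) * Complex.exp (((2 * Real.pi * (l / m) : ℝ) : ℂ) * Complex.I))) := by
  -- `y` lists the `m`-th powers of the radii in decreasing order
  set y : ℕ → ℝ := fun i => if h : n - 1 - i < n then r ⟨n - 1 - i, h⟩ ^ m else 0 with hy
  have hy_eq : ∀ i, ∀ j : Fin n, (j : ℕ) + i + 1 = n → y i = r j ^ m := by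
    intro i j hij
    have h : n - 1 - i = j := by omega
    simp only [hy, h, j.2, dite_true]
  have hypos : ∀ i < n, 0 < y i := fun i hi => by
    rw [hy_eq i ⟨n - 1 - i, by omega⟩ (by simp; omega)]
    exact pow_pos (hpos _) m
  have hyanti : ∀ i j, i ≤ j → j < n → y j ≤ y i := fun i j hij hj => by
    rw [hy_eq i ⟨n - 1 - i, by omega⟩ (by simp; omega),
      hy_eq j ⟨n - 1 - j, by omega⟩ (by simp; omega)]
    refine pow_le_pow_left₀ (hpos _).le (hmono.monotone ?_) m
    rw [Fin.mk_le_mk]; omega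
  set Q₀ : ℝ[X] := ∏ j, (X - C (r j ^ m)) with hQ₀
  have hQ₀' : Q₀ = (((Multiset.range n).map y).map fun t => X - C t).prod := by
    rw [hQ₀, Multiset.map_map]
    have : (∏ i ∈ Finset.range n, (X - C (y i)) : ℝ[X]) =
      ((Multiset.range n).map ((fun t => X - C t) ∘ y)).prod := rfl
    rw [← this, ← Finset.prod_range_reflect, Finset.prod_range]
    refine Finset.prod_congr rfl fun j _ => ?_
    rw [hy_eq (n - 1 - j) j (by omega)]
  have hdeg₀ : Q₀.natDegree = n := by
    rw [hQ₀, natDegree_finsetProd_X_sub_C_eq_card]; simp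
  have hQ₀pos : PosSplits Q₀ := by
    refine ⟨Splits.prod fun j _ => Splits.X_sub_C _, fun x hx => ?_⟩
    rw [hQ₀, eval_prod]
    refine Finset.prod_ne_zero_iff.mpr fun j _ => ?_
    rw [eval_sub, eval_X, eval_C]
    have := pow_pos (hpos j) m
    linarith
  obtain ⟨a, Q, ham, hQ, hdeg, hF⟩ := exists_iterate_derivative hQ₀pos hm K (by rwa [hdeg₀])
  rw [hdeg₀] at hdeg
  set d := Q.natDegree with hd
  have hcard : Q.roots.card = d := hQ.1.natDegree_eq_card_roots.symm
  have hdn : d ≤ n := by nlinarith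
  obtain ⟨x, hx, hxanti⟩ := exists_antitone_enum Q.roots
  rw [hcard] at hx hxanti
  have hxpos : ∀ i < d, 0 < x i := fun i hi => hQ.pos_of_mem_roots (by
    rw [hx]; exact Multiset.mem_map_of_mem _ (Multiset.mem_range.mpr hi))
  -- Compare the coefficients of `z ^ (m (n - k) - K)` in the two forms of the derivative.
  have hcoeff : ∀ k ≤ d, Q.coeff (d - k) =
      (m * (n - k)).descFactorial K * ((-1) ^ k * ((Multiset.range n).map y).esymm k) := by
    intro k hk
    have h1 : (derivative^[K] (expand ℝ m Q₀)).coeff ((d - k) * m + a) = Q.coeff (d - k) := by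
      rw [hF, mul_comm (X ^ a), coeff_mul_X_pow, coeff_expand_mul hm]
    have h2 : (d - k) * m + a + K = (n - k) * m := by
      obtain ⟨b, hb⟩ : ∃ b, d = k + b := ⟨d - k, by omega⟩
      obtain ⟨c, hc⟩ : ∃ c, n = k + c := ⟨n - k, by omega⟩
      rw [hb, hc] at hdeg
      rw [hb, hc, Nat.add_sub_cancel_left, Nat.add_sub_cancel_left]
      nlinarith
    have h3 : (Multiset.card ((Multiset.range n).map y)) - (n - k) = k := by
      rw [Multiset.card_map, Multiset.card_range]; omega
    rw [← h1, coeff_iterate_derivative, h2, coeff_expand_mul hm, hQ₀',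
      Multiset.prod_X_sub_C_coeff _ (by simp), h3, nsmul_eq_mul, mul_comm (n - k) m]
  have hDpos : ∀ k ≤ d, (0 : ℝ) < (m * (n - k)).descFactorial K := by
    intro k hk
    have : K ≤ m * (n - k) := by
      obtain ⟨b, hb⟩ : ∃ b, d = k + b := ⟨d - k, by omega⟩
      obtain ⟨c, hc⟩ : ∃ c, n = k + c := ⟨n - k, by omega⟩
      rw [hb, hc] at hdeg
      rw [hc, Nat.add_sub_cancel_left]
      nlinarith
    exact_mod_cast Nat.descFactorial_pos.mpr this
  have hesymm : ∀ k ≤ d, ((Multiset.range d).map x).esymm k = ((Multiset.range n).map y).esymm k *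
      ((m * (n - k)).descFactorial K / (m * n).descFactorial K) := by
    intro k hk
    have h1 := coeff_eq_esymm_roots_of_splits hQ.1 (k := d - k) (by omega)
    have h0 := hcoeff 0 (Nat.zero_le d)
    rw [Nat.sub_zero, Nat.sub_zero, pow_zero, one_mul] at h0
    have hE0 : ((Multiset.range n).map y).esymm 0 = 1 := by simp [Multiset.esymm]
    rw [hE0, mul_one] at h0
    rw [hcoeff k hk, ← hd, show d - (d - k) = k by omega, hx, leadingCoeff, ← hd, h0] at h1
    have hp := hDpos 0 (Nat.zero_le d)
    rw [Nat.sub_zero] at hp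
    have hs : ((-1 : ℝ)) ^ k ≠ 0 := pow_ne_zero _ (by norm_num)
    rw [mul_div_assoc', eq_div_iff hp.ne']
    apply mul_left_cancel₀ hs
    linarith
  have hcmp := fun i hi => compare_of_esymm (c := fun k =>
      ((m * (n - k)).descFactorial K / (m * n).descFactorial K : ℝ)) hdn hxpos hxanti hypos hyanti
    (fun k hk => div_pos (hDpos k hk) (by simpa using hDpos 0 (Nat.zero_le d))) hesymm (i := i) hi
  have hmR : (0 : ℝ) < m := by exact_mod_cast hm
  set E : ℝ := (4 : ℝ) ^ ((n : ℝ) / m) with hE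
  have hE0 : 0 < E := by positivity
  have hEm : E ^ m = 4 ^ n := by
    rw [hE, ← Real.rpow_natCast, ← Real.rpow_mul (by norm_num), div_mul_cancel₀ _ hmR.ne',
      Real.rpow_natCast]
  have hρpow : ∀ i < d, (x i ^ ((m : ℝ)⁻¹)) ^ m = x i := fun i hi =>
    Real.rpow_inv_natCast_pow (hxpos i hi).le hm.ne'
  refine ⟨d, a, fun i => x i ^ ((m : ℝ)⁻¹), ham, hdeg, ?_, ?_⟩
  · intro i hi j hij
    obtain ⟨u1, u2⟩ := hcmp i hi
    have hρ := hρpow i hi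
    have hρ0 : 0 < x i ^ ((m : ℝ)⁻¹) := Real.rpow_pos_of_pos (hxpos i hi) _
    set ρ := x i ^ ((m : ℝ)⁻¹)
    rw [← hρ, hy_eq i j hij] at u1 u2
    have hD0 : (0 : ℝ) < (m * n).descFactorial K := by simpa using hDpos 0 (Nat.zero_le d)
    have hDi := hDpos i hi.le
    have hDi1 := hDpos (i + 1) hi
    have e1 : n - (i + 1) = j := by omega
    have e2 : m * (n - i) = m * j + m := by
      rw [show n - i = (j : ℕ) + 1 by omega]; ring
    rw [e1] at hDi1
    rw [e2] at hDi
    simp only [e1, e2] at u1 u2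
    -- otherwise the coefficient number `i + 1 ≤ d` of `Q` would vanish
    have hKj : K ≤ m * j := by
      by_contra hlt
      rw [Nat.descFactorial_of_lt (by omega)] at hDi1
      simp at hDi1
    obtain ⟨g1, g2⟩ := descFactorial_ratio_bounds (m := m) hKj
    push_cast at g1 g2
    set D := ((m * (j : ℕ) + m).descFactorial K : ℝ)
    set D' := ((m * (j : ℕ)).descFactorial K : ℝ)
    rw [mul_div_assoc', mul_div_assoc', mul_div_assoc', div_le_div_iff_of_pos_right hD0] at u1 u2
    have hr := hpos j
    have hrm : 0 < r j ^ m := pow_pos hr m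
    have hKj' : (K : ℝ) ≤ m * (j : ℕ) := by exact_mod_cast hKj
    constructor
    · have hU : 0 ≤ 1 - K / (m * ((j : ℕ) + 1 : ℝ)) := by
        have := div_le_one_of_le₀ (show (K : ℝ) ≤ m * ((j : ℕ) + 1 : ℝ) by linarith)
          (by positivity)
        linarith
      rw [← pow_le_pow_iff_left₀ hρ0.le (by positivity) hm.ne', mul_pow, mul_pow, hEm]
      refine le_of_mul_le_mul_right ?_ hDi
      calc ρ ^ m * D ≤ 4 ^ n * (r j ^ m * D') := u1
        _ ≤ 4 ^ n * (r j ^ m * ((1 - K / ((m : ℝ) * (j : ℕ) + m)) ^ m * D)) := by gcongr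
        _ = _ := by rw [show (m : ℝ) * ((j : ℕ) + 1) = m * (j : ℕ) + m by ring]; ring
    · have hL : 0 ≤ 1 - K / (m * ((j : ℕ) : ℝ)) := by
        have := div_le_one_of_le₀ hKj' (by positivity)
        linarith
      rw [← pow_le_pow_iff_left₀ (by positivity) (by positivity) hm.ne', mul_pow, mul_pow, hEm]
      refine le_of_mul_le_mul_right ?_ hDi
      calc r j ^ m * (1 - K / ((m : ℝ) * (j : ℕ))) ^ m * D
          = r j ^ m * ((1 - K / ((m : ℝ) * (j : ℕ))) ^ m * D) := by ring
        _ ≤ r j ^ m * D' := by gcongr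
        _ ≤ 4 ^ n * (ρ ^ m * D) := u2
        _ = _ := by ring
  · intro f
    have hroots : Q.roots = (Multiset.range d).map fun i => (x i ^ ((m : ℝ)⁻¹)) ^ m := by
      conv_lhs => rw [hx]
      exact Multiset.map_congr rfl fun i hi => (hρpow i (Multiset.mem_range.mp hi)).symm
    have hP : derivative^[K] (∏ j, (X ^ m - C ((r j : ℂ) ^ m))) =
        (X ^ a * expand ℝ m Q).map (algebraMap ℝ ℂ) := by
      rw [map_ofReal_prod, iterate_derivative_map, hF]
    have hdegP : ((X ^ a * expand ℝ m Q).map (algebraMap ℝ ℂ)).natDegree = a + m * d := by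
      have : expand ℝ m Q ≠ 0 := by
        rw [Ne, expand_eq_zero hm]; exact hQ.ne_zero
      rw [natDegree_map, natDegree_mul (pow_ne_zero _ X_ne_zero) this, natDegree_X_pow,
        natDegree_expand, mul_comm m]
    rw [hP, integral_rootMeasureC, hdegP, roots_X_pow_mul_expand hQ hm a hroots]
    congr 1
    rw [Multiset.map_add, Multiset.sum_add, Multiset.map_replicate, Multiset.sum_replicate,
      nsmul_eq_mul, Multiset.map_bind, Multiset.sum_bind]
    congr 1
    simp only [Multiset.map_map]
    rfl

/-! ### Step functions, quantiles and circle averages -/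

lemma measurable_comp_floor (h : ℕ → ℝ) (c : ℝ) : Measurable fun u : ℝ => h ⌊c * u⌋₊ :=
  (measurable_from_nat (f := h)).comp (Nat.measurable_floor.comp (measurable_const_mul c))

/-- An average over `n` indices is an integral over `[0, 1]` of a step function. -/
lemma average_eq_integral {n : ℕ} (hn : 0 < n) (h : ℕ → ℝ) :
    (n : ℝ)⁻¹ * ∑ i ∈ Finset.range n, h i = ∫ u in (0 : ℝ)..1, h ⌊(n : ℝ) * u⌋₊ := by
  have hn' : (n : ℝ) ≠ 0 := by exact_mod_cast hn.ne'
  rw [intervalIntegral.integral_comp_mul_left (fun x => h ⌊x⌋₊) hn', mul_zero, mul_one,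
    smul_eq_mul]
  congr 1
  have hae : ∀ k : ℕ, ∀ᵐ x : ℝ, x ∈ Set.uIoc (k : ℝ) ((k + 1 : ℕ) : ℝ) → h k = h ⌊x⌋₊ := by
    intro k
    have hne : ∀ᵐ x : ℝ, x ≠ ((k + 1 : ℕ) : ℝ) := by
      simp [ae_iff, measure_singleton]
    filter_upwards [hne] with x hx hmem
    rw [Set.uIoc_of_le (by push_cast; linarith)] at hmem
    have : ⌊x⌋₊ = k := by
      rw [Nat.floor_eq_iff (le_trans (Nat.cast_nonneg k) hmem.1.le)]
      refine ⟨hmem.1.le, ?_⟩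
      have := lt_of_le_of_ne hmem.2 hx
      push_cast at this
      exact this
    rw [this]
  have hinteg : ∀ k < n, IntervalIntegrable (fun x : ℝ => h ⌊x⌋₊) volume (k : ℝ)
      ((k + 1 : ℕ) : ℝ) := by
    intro k _
    refine (intervalIntegrable_const (c := h k)).congr_ae ?_
    rw [Filter.EventuallyEq, ae_restrict_iff' measurableSet_uIoc]
    exact hae k
  have hsum := intervalIntegral.sum_integral_adjacent_intervals
    (f := fun x : ℝ => h ⌊x⌋₊) (μ := volume) (a := fun k : ℕ => (k : ℝ)) (n := n) hinteg
  rw [Nat.cast_zero] at hsum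
  rw [← hsum]
  refine Finset.sum_congr rfl fun k _ => ?_
  rw [← intervalIntegral.integral_congr_ae (hae k)]
  simp

/-- A continuous cutoff equal to `1` below `a` and to `0` above `b`. -/
lemma exists_ramp {a b : ℝ} (hab : a < b) : ∃ f : BoundedContinuousFunction ℝ ℝ,
    (∀ x, 0 ≤ f x) ∧ (∀ x, f x ≤ 1) ∧ (∀ x ≤ a, f x = 1) ∧ ∀ x, b ≤ x → f x = 0 := by
  have hba : 0 < b - a := by linarith
  let g : ℝ → ℝ := fun x => max 0 (min 1 ((b - x) / (b - a)))
  have h0 : ∀ x, 0 ≤ g x := fun x => le_max_left _ _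
  have h1 : ∀ x, g x ≤ 1 := fun x => max_le zero_le_one (min_le_left _ _)
  refine ⟨BoundedContinuousFunction.ofNormedAddCommGroup g (by fun_prop) 1 fun x => ?_,
    h0, h1, fun x hx => ?_, fun x hx => ?_⟩
  · rw [Real.norm_eq_abs, abs_of_nonneg (h0 x)]; exact h1 x
  · have : 1 ≤ (b - x) / (b - a) := by rw [le_div_iff₀ hba]; linarith
    simp [g, this]
  · have : (b - x) / (b - a) ≤ 0 := div_nonpos_of_nonpos_of_nonneg (by linarith) hba.le
    simp only [BoundedContinuousFunction.coe_ofNormedAddCommGroup, g]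
    exact max_eq_left ((min_le_right _ _).trans this)

section quantile
variable {ν : Measure ℝ}

lemma quantile_set_nonempty [IsProbabilityMeasure ν] (h0 : ν (Set.Iio 0) = 0)
    (hA : ∃ A : ℝ, ν (Set.Ioi A) = 0) {v : ℝ} (hv : v ≤ 1) :
    {y : ℝ | 0 ≤ y ∧ ENNReal.ofReal v ≤ ν (Set.Icc 0 y)}.Nonempty := by
  obtain ⟨A, hA⟩ := hA
  refine ⟨max A 0, le_max_right _ _, ?_⟩
  have h1 : ν (Set.Icc 0 (max A 0))ᶜ = 0 := by
    refine measure_mono_null (t := Set.Iio 0 ∪ Set.Ioi A) ?_ (measure_union_null h0 hA)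
    intro x hx
    by_contra hne
    simp only [Set.mem_union, Set.mem_Iio, Set.mem_Ioi, not_or, not_lt] at hne
    exact hx ⟨hne.1, hne.2.trans (le_max_left _ _)⟩
  rw [prob_compl_eq_zero_iff measurableSet_Icc] at h1
  rw [h1]
  exact ENNReal.ofReal_le_one.mpr hv

lemma quantile_bddBelow (v : ℝ) :
    BddBelow {y : ℝ | 0 ≤ y ∧ ENNReal.ofReal v ≤ ν (Set.Icc 0 y)} := ⟨0, fun _ hy => hy.1⟩

/-- Capping the argument at `1` avoids the values `α > 1`, where the infimum is over the
empty set. -/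
lemma monotone_quantile_min [IsProbabilityMeasure ν] (h0 : ν (Set.Iio 0) = 0)
    (hA : ∃ A : ℝ, ν (Set.Ioi A) = 0) : Monotone fun v : ℝ => quantileFn ν (min v 1) := by
  intro v w hvw
  refine csInf_le_csInf (quantile_bddBelow _) (quantile_set_nonempty h0 hA (min_le_right _ _)) ?_
  intro y hy
  exact ⟨hy.1, (ENNReal.ofReal_le_ofReal (min_le_min_right 1 hvw)).trans hy.2⟩

/-- Convergence of the empirical quantiles at the continuity points of the limit quantile
function. -/
lemma tendsto_empirical_quantile [IsProbabilityMeasure ν] (h0 : ν (Set.Iio 0) = 0)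
    (hA : ∃ A : ℝ, ν (Set.Ioi A) = 0) {r : (n : ℕ) → Fin n → ℝ}
    (hrmono : ∀ n, StrictMono (r n)) (hrpos : ∀ n j, 0 < r n j)
    (hconv : ∀ f : BoundedContinuousFunction ℝ ℝ,
      Tendsto (fun n : ℕ => ((n : ℝ))⁻¹ * ∑ j, f (r n j)) atTop (𝓝 (∫ x, f x ∂ν)))
    {v : ℝ} (hv0 : 0 < v) (hv1 : v < 1)
    (hcont : ContinuousAt (fun v : ℝ => quantileFn ν (min v 1)) v) :
    Tendsto (fun n : ℕ => if h : ⌊(n : ℝ) * v⌋₊ < n then r n ⟨⌊(n : ℝ) * v⌋₊, h⟩ else 0) atTop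
      (𝓝 (quantileFn ν v)) := by
  have hlt : ∀ n : ℕ, 0 < n → ⌊(n : ℝ) * v⌋₊ < n := by
    intro n hn
    have hn' : (0 : ℝ) < n := by exact_mod_cast hn
    rw [Nat.floor_lt (by positivity)]
    nlinarith
  have hqv : quantileFn ν (min v 1) = quantileFn ν v := by rw [min_eq_left hv1.le]
  rw [tendsto_order]
  constructor
  · intro y hy
    rcases lt_or_ge y 0 with hy0 | hy0
    · filter_upwards [eventually_gt_atTop 0] with n hn
      rw [dif_pos (hlt n hn)]
      exact hy0.trans (hrpos _ _)
    · obtain ⟨y', hyy', hy'⟩ := exists_between hy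
      obtain ⟨f, f0, f1, fa, fb⟩ := exists_ramp hyy'
      have hν : ν (Set.Icc 0 y') < ENNReal.ofReal v := by
        by_contra hge
        exact absurd (csInf_le (quantile_bddBelow v) ⟨hy0.trans hyy'.le, not_lt.mp hge⟩)
          (not_le.mpr hy')
      have hinteg : ∫ x, f x ∂ν < v := by
        have hle : ∫ x, f x ∂ν ≤ ∫ x, (Set.Icc 0 y').indicator (fun _ => (1 : ℝ)) x ∂ν := by
          refine integral_mono_ae (f.integrable ν)
            ((integrable_const 1).indicator measurableSet_Icc) ?_
          have hae : ∀ᵐ x ∂ν, ¬ x < 0 := by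
            rw [ae_iff]; simp only [not_not]; exact h0
          filter_upwards [hae] with x hx
          by_cases hx' : x ≤ y'
          · rw [Set.indicator_of_mem (show x ∈ Set.Icc 0 y' from ⟨not_lt.mp hx, hx'⟩)]; exact f1 x
          · rw [fb x (not_le.mp hx').le]
            exact Set.indicator_nonneg (fun _ _ => zero_le_one) x
        rw [integral_indicator measurableSet_Icc, setIntegral_const, smul_eq_mul, mul_one] at hle
        refine hle.trans_lt ?_
        rw [Measure.real, ← ENNReal.lt_ofReal_iff_toReal_lt (measure_ne_top _ _)]
        exact hν
      filter_upwards [(hconv f).eventually (gt_mem_nhds hinteg), eventually_gt_atTop 0] with n hn hn0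
      rw [dif_pos (hlt n hn0)]
      by_contra hle
      set j : Fin n := ⟨⌊(n : ℝ) * v⌋₊, hlt n hn0⟩ with hj
      have hn' : (0 : ℝ) < n := by exact_mod_cast hn0
      have hsum : ((j : ℕ) + 1 : ℝ) ≤ ∑ i, f (r n i) := by
        calc ((j : ℕ) + 1 : ℝ) = ∑ i ∈ Finset.Iic j, f (r n i) := by
              rw [Finset.sum_congr rfl (g := fun _ => (1 : ℝ))]
              · simp
              · intro i hi
                exact fa _ (((hrmono n).monotone (Finset.mem_Iic.mp hi)).trans (not_lt.mp hle))
          _ ≤ _ := Finset.sum_le_sum_of_subset_of_nonneg (Finset.subset_univ _)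
              fun i _ _ => f0 _
      have hfl : (n : ℝ) * v < (j : ℕ) + 1 := Nat.lt_floor_add_one _
      rw [inv_mul_lt_iff₀ hn'] at hn
      linarith
  · intro y hy
    have hev : ∀ᶠ w in 𝓝 v, quantileFn ν (min w 1) < y :=
      hcont.eventually (gt_mem_nhds (hqv.trans_lt hy))
    have hev' : ∀ᶠ w in 𝓝[>] v, quantileFn ν (min w 1) < y ∧ w < 1 ∧ v < w :=
      (hev.filter_mono nhdsWithin_le_nhds).and
        (((gt_mem_nhds hv1).filter_mono nhdsWithin_le_nhds).and self_mem_nhdsWithin)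
    obtain ⟨w, hw, hw1, hvw⟩ := hev'.exists
    rw [min_eq_left hw1.le] at hw
    obtain ⟨z, ⟨hz0, hzν⟩, hzy⟩ :=
      exists_lt_of_csInf_lt (quantile_set_nonempty h0 hA hw1.le) hw
    obtain ⟨f, f0, f1, fa, fb⟩ := exists_ramp hzy
    have hinteg : v < ∫ x, f x ∂ν := by
      have hle : ∫ x, (Set.Icc 0 z).indicator (fun _ => (1 : ℝ)) x ∂ν ≤ ∫ x, f x ∂ν := by
        refine integral_mono ((integrable_const 1).indicator measurableSet_Icc) (f.integrable ν) ?_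
        intro x
        by_cases hx : x ∈ Set.Icc 0 z
        · rw [Set.indicator_of_mem hx]; exact (fa x hx.2).ge
        · rw [Set.indicator_of_notMem hx]; exact f0 x
      rw [integral_indicator measurableSet_Icc, setIntegral_const, smul_eq_mul, mul_one] at hle
      refine hvw.trans_le (le_trans ?_ hle)
      rw [Measure.real]
      exact (ENNReal.ofReal_le_iff_le_toReal (measure_ne_top _ _)).mp hzν
    filter_upwards [(hconv f).eventually (lt_mem_nhds hinteg), eventually_gt_atTop 0] with n hn hn0
    rw [dif_pos (hlt n hn0)]
    by_contra hge
    set j : Fin n := ⟨⌊(n : ℝ) * v⌋₊, hlt n hn0⟩ with hj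
    have hn' : (0 : ℝ) < n := by exact_mod_cast hn0
    have hsum : ∑ i, f (r n i) ≤ ((j : ℕ) : ℝ) := by
      calc ∑ i, f (r n i) = ∑ i ∈ Finset.Iio j, f (r n i) := by
            symm
            refine Finset.sum_subset (Finset.subset_univ _) fun i _ hi => ?_
            rw [Finset.mem_Iio, not_lt] at hi
            exact fb _ ((not_lt.mp hge).trans ((hrmono n).monotone hi))
        _ ≤ ∑ i ∈ Finset.Iio j, (1 : ℝ) := Finset.sum_le_sum fun i _ => f1 _
        _ = _ := by simp
    have hfl : ((j : ℕ) : ℝ) ≤ (n : ℝ) * v := Nat.floor_le (by positivity)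
    rw [lt_inv_mul_iff₀ hn'] at hn
    linarith

end quantile

/-- Averages of `f` over `m` equidistributed points on circles converge to circle averages. -/
lemma tendsto_circle_average (f : BoundedContinuousFunction ℂ ℝ) {m : ℕ → ℕ}
    (hm : Tendsto m atTop atTop) {ρ : ℕ → ℝ} {ρ' : ℝ} (hρ : Tendsto ρ atTop (𝓝 ρ')) :
    Tendsto (fun n => (m n : ℝ)⁻¹ * ∑ l ∈ Finset.range (m n),
        f ((ρ n : ℂ) * Complex.exp (((2 * Real.pi * (l / m n) : ℝ) : ℂ) * Complex.I))) atTop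
      (𝓝 (∫ u in (0 : ℝ)..1,
        f ((ρ' : ℂ) * Complex.exp (((2 * Real.pi * u : ℝ) : ℂ) * Complex.I)))) := by
  have hmR : Tendsto (fun n => (m n : ℝ)) atTop atTop := tendsto_natCast_atTop_atTop.comp hm
  have hlim : Tendsto (fun n => ∫ u in (0 : ℝ)..1, f ((ρ n : ℂ) *
      Complex.exp (((2 * Real.pi * ((⌊(m n : ℝ) * u⌋₊ : ℕ) / m n) : ℝ) : ℂ) * Complex.I))) atTop
      (𝓝 (∫ u in (0 : ℝ)..1,
        f ((ρ' : ℂ) * Complex.exp (((2 * Real.pi * u : ℝ) : ℂ) * Complex.I)))) := by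
    refine intervalIntegral.tendsto_integral_filter_of_dominated_convergence (fun _ => ‖f‖)
      (Eventually.of_forall fun n => ?_) (Eventually.of_forall fun n => ae_of_all _ fun u _ =>
        f.norm_coe_le_norm _) intervalIntegrable_const (ae_of_all _ fun u hu => ?_)
    · exact (measurable_comp_floor (fun k : ℕ => f ((ρ n : ℂ) *
        Complex.exp (((2 * Real.pi * (k / m n) : ℝ) : ℂ) * Complex.I)))
        (m n : ℝ)).aestronglyMeasurable
    · rw [Set.uIoc_of_le zero_le_one] at hu
      have h1 : Tendsto (fun n => ((⌊(m n : ℝ) * u⌋₊ : ℕ) : ℝ) / m n) atTop (𝓝 u) := by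
        have := (tendsto_nat_floor_mul_div_atTop hu.1.le).comp hmR
        refine this.congr fun n => ?_
        simp only [Function.comp, mul_comm]
      have h2 : Continuous fun p : ℝ × ℝ =>
          f ((p.1 : ℂ) * Complex.exp (((2 * Real.pi * p.2 : ℝ) : ℂ) * Complex.I)) := by
        fun_prop
      exact (h2.tendsto (ρ', u)).comp (hρ.prodMk_nhds h1)
  refine hlim.congr' ?_
  filter_upwards [hm.eventually (eventually_gt_atTop 0)] with n hn
  rw [average_eq_integral hn (fun l : ℕ => f ((ρ n : ℂ) *
    Complex.exp (((2 * Real.pi * (l / m n) : ℝ) : ℂ) * Complex.I)))]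

instance isFiniteMeasure_unifOn_aux {a b : ℝ} [Fact (a < b)] : IsFiniteMeasure (unifOn a b) := by
  have hab : a < b := Fact.out
  refine ⟨?_⟩
  rw [unifOn, Measure.smul_apply, smul_eq_mul, Measure.restrict_apply_univ, Real.volume_Icc]
  exact ENNReal.mul_lt_top (ENNReal.inv_lt_top.mpr (ENNReal.ofReal_pos.mpr (by linarith)))
    ENNReal.ofReal_lt_top

lemma integral_unifOn {a b : ℝ} (hab : a < b) (g : ℝ → ℝ) :
    ∫ x, g x ∂(unifOn a b) = (b - a)⁻¹ * ∫ x in a..b, g x := by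
  rw [unifOn, integral_smul_measure, integral_Icc_eq_integral_Ioc,
    ← intervalIntegral.integral_of_le hab.le, ENNReal.toReal_inv,
    ENNReal.toReal_ofReal (by linarith), smul_eq_mul]

/-- The limit integral as an iterated integral over `[t, 1] × [0, 1]`. -/
lemma integral_limit {t : ℝ} (ht : t < 1) {h : ℝ → ℝ} (hh : AEMeasurable h (unifOn t 1))
    (f : BoundedContinuousFunction ℂ ℝ) :
    ∫ z, f z ∂(Measure.map
          (fun p : ℝ × ℝ => (p.1 : ℂ) * Complex.exp ((p.2 : ℂ) * Complex.I))
          ((Measure.map h (unifOn t 1)).prod (unifOn 0 (2 * Real.pi)))) =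
      (1 - t)⁻¹ * ∫ v in t..1, ∫ u in (0 : ℝ)..1,
        f ((h v : ℂ) * Complex.exp (((2 * Real.pi * u : ℝ) : ℂ) * Complex.I)) := by
  have : Fact (t < 1) := ⟨ht⟩
  have : Fact ((0 : ℝ) < 2 * Real.pi) := ⟨by positivity⟩
  have hg : Continuous fun p : ℝ × ℝ => (p.1 : ℂ) * Complex.exp ((p.2 : ℂ) * Complex.I) := by
    fun_prop
  have hfg : Continuous fun p : ℝ × ℝ =>
      f ((p.1 : ℂ) * Complex.exp ((p.2 : ℂ) * Complex.I)) := f.continuous.comp hg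
  rw [integral_map hg.measurable.aemeasurable f.continuous.aestronglyMeasurable, integral_prod]
  · rw [integral_map hh, integral_unifOn ht]
    · congr 1
      refine intervalIntegral.integral_congr fun v _ => ?_
      simp only
      rw [integral_unifOn (by positivity), sub_zero]
      have := intervalIntegral.integral_comp_mul_left (a := 0) (b := 1)
        (fun θ : ℝ => f ((h v : ℂ) * Complex.exp ((θ : ℂ) * Complex.I)))
        (show 2 * Real.pi ≠ 0 by positivity)
      rw [mul_zero, mul_one, smul_eq_mul] at this
      exact this.symm
    · exact hfg.stronglyMeasurable.integral_prod_right.aestronglyMeasurable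
  · refine Integrable.of_bound hfg.aestronglyMeasurable ‖f‖ (ae_of_all _ fun p => ?_)
    exact f.norm_coe_le_norm _

/-! ### Convergence of the root measures -/

/-- (Main theorem.) Let `ν₀` be a compactly supported probability
measure on `[0,∞)`, sampled by increasing sequences `(r^{(n)}_j)_{1≤j≤n}` of positive
reals whose empirical measures converge weakly to `ν₀`, and let `m_n/(n log n) → ∞`.
Then for every `t ∈ (0,1)`, the empirical root measure of the `⌊n m_n t⌋`-th derivative of
`P_{n,m_n}(z) = Π_j (z^{m_n} - (r^{(n)}_j)^{m_n})` converges weakly, as `n → ∞`, to the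
law `μ_t` of `R·e^{iΘ}` where `Θ` is uniform on `[0,2π)`, independent of `R ~ ν_t`, and
`ν_t` is the law of `(1 - t/V_t)·q_{ν₀}(V_t)` with `V_t` uniform on `[t,1]`. Weak
convergence is expressed through integrals of bounded continuous functions. -/
theorem stmt12 (ν0 : Measure ℝ) [IsProbabilityMeasure ν0]
    (hsupp0 : ν0 (Set.Iio 0) = 0) (hcomp : ∃ A : ℝ, ν0 (Set.Ioi A) = 0)
    (r : (n : ℕ) → Fin n → ℝ)
    (hrmono : ∀ n, StrictMono (r n)) (hrpos : ∀ n j, 0 < r n j)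
    (hconv : ∀ f : BoundedContinuousFunction ℝ ℝ,
      Tendsto (fun n : ℕ => ((n : ℝ))⁻¹ * ∑ j, f (r n j)) atTop (𝓝 (∫ x, f x ∂ν0)))
    (mseq : ℕ → ℕ) (hm : ∀ n, 1 ≤ mseq n)
    (hgrowth : Tendsto (fun n : ℕ => (mseq n : ℝ) / ((n : ℝ) * Real.log n)) atTop atTop)
    (t : ℝ) (ht : t ∈ Set.Ioo (0 : ℝ) 1) :
    ∀ f : BoundedContinuousFunction ℂ ℝ,
      Tendsto (fun n : ℕ => ∫ z, f z ∂(rootMeasureC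
          (derivative^[⌊((n : ℝ) * (mseq n : ℝ)) * t⌋₊]
            (∏ j, (X ^ (mseq n) - C ((r n j : ℂ) ^ (mseq n)))))))
        atTop
        (𝓝 (∫ z, f z ∂(Measure.map
          (fun p : ℝ × ℝ => (p.1 : ℂ) * Complex.exp ((p.2 : ℂ) * Complex.I))
          ((Measure.map (fun v => (1 - t / v) * quantileFn ν0 v) (unifOn t 1)).prod
            (unifOn 0 (2 * Real.pi)))))) := by
  intro f
  obtain ⟨ht0, ht1⟩ := ht
  have hmR0 : ∀ n : ℕ, (0 : ℝ) < mseq n := fun n => by exact_mod_cast hm n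
  have hnm : Tendsto (fun n : ℕ => (n : ℝ) / mseq n) atTop (𝓝 0) := by
    have h1 : Tendsto (fun n : ℕ => (mseq n : ℝ) / n) atTop atTop := by
      refine tendsto_atTop_mono' _ ?_ hgrowth
      filter_upwards [eventually_ge_atTop 3] with n hn
      have hn' : (3 : ℝ) ≤ n := by exact_mod_cast hn
      have hlog : 1 ≤ Real.log n := by
        rw [Real.le_log_iff_exp_le (by linarith)]
        linarith [Real.exp_one_lt_d9]
      have hn0 : (0 : ℝ) < n := by linarith
      refine div_le_div_of_nonneg_left (hmR0 n).le hn0 ?_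
      nlinarith
    refine (tendsto_inv_atTop_zero.comp h1).congr fun n => ?_
    simp
  have hmT : Tendsto mseq atTop atTop := by
    rw [← tendsto_natCast_atTop_iff (R := ℝ)]
    refine tendsto_atTop_mono' _ ?_ (tendsto_natCast_atTop_atTop (R := ℝ))
    filter_upwards [hnm.eventually (gt_mem_nhds one_pos)] with n hn
    rw [div_lt_one (hmR0 n)] at hn
    exact hn.le
  have hE : Tendsto (fun n : ℕ => (4 : ℝ) ^ ((n : ℝ) / mseq n)) atTop (𝓝 1) := by
    have := (Real.continuous_const_rpow (a := 4) (by norm_num)).tendsto 0 |>.comp hnm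
    rw [Real.rpow_zero] at this
    exact this
  have hNT : Tendsto (fun n : ℕ => (n : ℝ) * mseq n) atTop atTop :=
    tendsto_natCast_atTop_atTop.atTop_mul_atTop₀ (tendsto_natCast_atTop_atTop.comp hmT)
  set K : ℕ → ℕ := fun n => ⌊((n : ℝ) * (mseq n : ℝ)) * t⌋₊ with hKdef
  have hKle : ∀ n : ℕ, (K n : ℝ) ≤ (n : ℝ) * mseq n * t := fun n => Nat.floor_le (by positivity)
  have hKgt : ∀ n : ℕ, (n : ℝ) * mseq n * t < K n + 1 := fun n => Nat.lt_floor_add_one _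
  have hKnm : ∀ n : ℕ, K n ≤ n * mseq n := by
    intro n
    have h1 : (0 : ℝ) ≤ (n : ℝ) * mseq n := by positivity
    have : (K n : ℝ) ≤ ((n * mseq n : ℕ) : ℝ) := by
      push_cast
      nlinarith [hKle n]
    exact_mod_cast this
  have hKT : Tendsto (fun n : ℕ => (K n : ℝ) / ((n : ℝ) * mseq n)) atTop (𝓝 t) := by
    refine ((tendsto_nat_floor_mul_div_atTop ht0.le).comp hNT).congr fun n => ?_
    simp only [Function.comp, hKdef, mul_comm t]
  choose d a ρ ham hsum hbd hinteg using fun n : ℕ =>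
    structure_derivative (Nat.pos_of_ne_zero (Nat.one_le_iff_ne_zero.mp (hm n))) (hrmono n)
      (hrpos n) (hKnm n)
  have hsumR : ∀ n : ℕ, (a n : ℝ) + mseq n * d n + K n = mseq n * n := fun n => by
    exact_mod_cast hsum n
  set A : ℕ → ℝ → ℝ := fun n x => (mseq n : ℝ)⁻¹ * ∑ l ∈ Finset.range (mseq n),
    f ((x : ℂ) * Complex.exp (((2 * Real.pi * (l / mseq n) : ℝ) : ℂ) * Complex.I)) with hAdef
  have hA_le : ∀ n x, ‖A n x‖ ≤ ‖f‖ := by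
    intro n x
    rw [hAdef]
    simp only
    rw [norm_mul, norm_inv, Real.norm_of_nonneg (hmR0 n).le, inv_mul_le_iff₀ (hmR0 n)]
    refine (norm_sum_le _ _).trans ?_
    refine (Finset.sum_le_card_nsmul _ _ ‖f‖ fun l _ => f.norm_coe_le_norm _).trans ?_
    simp
  -- `H n j` is the circle average at the `j`-th smallest of `n` radii, the `n - d n` smallest ones
  -- being absent (the derivative has only `d n` circles of nonzero roots)
  set H : ℕ → ℕ → ℝ := fun n j => if n - 1 - j < d n then A n (ρ n (n - 1 - j)) else 0 with hHdef
  set h : ℝ → ℝ := fun v => (1 - t / v) * quantileFn ν0 v with hhdef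
  set Φ : ℝ → ℝ := fun v => ∫ u in (0 : ℝ)..1,
    f ((h v : ℂ) * Complex.exp (((2 * Real.pi * u : ℝ) : ℂ) * Complex.I)) with hΦdef
  -- The radius with quantile level `v > t` lies between two multiples of the empirical quantile
  -- `r n ⌊n v⌋`, and both multipliers tend to `1 - t / v`.
  have hradius : ∀ v, t < v → v < 1 → ContinuousAt (fun v : ℝ => quantileFn ν0 (min v 1)) v →
      (∀ᶠ n : ℕ in atTop, n - 1 - ⌊(n : ℝ) * v⌋₊ < d n) ∧
      Tendsto (fun n : ℕ => ρ n (n - 1 - ⌊(n : ℝ) * v⌋₊)) atTop (𝓝 (h v)) := by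
    intro v htv hv1 hcv
    have hv0 : 0 < v := ht0.trans htv
    have hq := tendsto_empirical_quantile hsupp0 hcomp hrmono hrpos hconv hv0 hv1 hcv
    have hlt : ∀ n : ℕ, 0 < n → ⌊(n : ℝ) * v⌋₊ < n := by
      intro n hn
      have hn' : (0 : ℝ) < n := by exact_mod_cast hn
      rw [Nat.floor_lt (by positivity)]
      nlinarith
    have hev : ∀ᶠ n : ℕ in atTop, n - 1 - ⌊(n : ℝ) * v⌋₊ < d n := by
      have h2 : ∀ᶠ n : ℕ in atTop, 2 / (v - t) < (n : ℝ) :=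
        tendsto_natCast_atTop_atTop.eventually (eventually_gt_atTop _)
      filter_upwards [h2, eventually_gt_atTop 0] with n hn hn0
      rw [div_lt_iff₀ (by linarith)] at hn
      have h3 : (n : ℝ) * v < ⌊(n : ℝ) * v⌋₊ + 1 := Nat.lt_floor_add_one _
      have h4 : (a n : ℝ) < mseq n := by exact_mod_cast ham n
      have h5 : (n : ℝ) - n * t - 1 < d n := by
        refine lt_of_mul_lt_mul_left ?_ (hmR0 n).le
        nlinarith [hsumR n, hKle n]
      have h6 : (n : ℝ) < d n + ⌊(n : ℝ) * v⌋₊ := by nlinarith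
      have h7 : n < d n + ⌊(n : ℝ) * v⌋₊ := by exact_mod_cast h6
      have := hlt n hn0
      omega
    refine ⟨hev, ?_⟩
    have hj : Tendsto (fun n : ℕ => (⌊(n : ℝ) * v⌋₊ : ℝ) / n) atTop (𝓝 v) := by
      refine ((tendsto_nat_floor_mul_div_atTop hv0.le).comp
        (tendsto_natCast_atTop_atTop (R := ℝ))).congr fun n => ?_
      simp only [Function.comp, mul_comm v]
    have hj1 : Tendsto (fun n : ℕ => ((⌊(n : ℝ) * v⌋₊ : ℝ) + 1) / n) atTop (𝓝 v) := by
      have := hj.add (tendsto_inv_atTop_nhds_zero_nat (𝕜 := ℝ))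
      rw [add_zero] at this
      refine this.congr fun n => ?_
      rw [add_div, one_div]
    have hL : Tendsto (fun n : ℕ => 1 - (K n : ℝ) / (mseq n * (⌊(n : ℝ) * v⌋₊ : ℝ))) atTop
        (𝓝 (1 - t / v)) := by
      refine tendsto_const_nhds.sub ((hKT.div hj hv0.ne').congr' ?_)
      filter_upwards [eventually_gt_atTop 0] with n hn
      have hn' : (n : ℝ) ≠ 0 := by exact_mod_cast hn.ne'
      simp only [Pi.div_apply]
      rw [div_div, mul_comm (n : ℝ) (mseq n : ℝ), mul_assoc, mul_div_cancel₀ _ hn']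
    have hU : Tendsto (fun n : ℕ => 1 - (K n : ℝ) / (mseq n * ((⌊(n : ℝ) * v⌋₊ : ℝ) + 1))) atTop
        (𝓝 (1 - t / v)) := by
      refine tendsto_const_nhds.sub ((hKT.div hj1 hv0.ne').congr' ?_)
      filter_upwards [eventually_gt_atTop 0] with n hn
      have hn' : (n : ℝ) ≠ 0 := by exact_mod_cast hn.ne'
      simp only [Pi.div_apply]
      rw [div_div, mul_comm (n : ℝ) (mseq n : ℝ), mul_assoc, mul_div_cancel₀ _ hn']
    have hlow := (hE.inv₀ one_ne_zero).mul (hq.mul hL)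
    have hupp := hE.mul (hq.mul hU)
    rw [inv_one, one_mul, mul_comm (quantileFn ν0 v)] at hlow
    rw [one_mul, mul_comm (quantileFn ν0 v)] at hupp
    refine tendsto_of_tendsto_of_tendsto_of_le_of_le' hlow hupp ?_ ?_
    · filter_upwards [hev, eventually_gt_atTop 0] with n hn hn0
      have hjn := hlt n hn0
      have hb := (hbd n _ hn ⟨⌊(n : ℝ) * v⌋₊, hjn⟩ (by simp only; omega)).2
      rw [dif_pos hjn, inv_mul_le_iff₀ (by positivity)]
      exact hb
    · filter_upwards [hev, eventually_gt_atTop 0] with n hn hn0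
      have hjn := hlt n hn0
      have hb := (hbd n _ hn ⟨⌊(n : ℝ) * v⌋₊, hjn⟩ (by simp only; omega)).1
      rw [dif_pos hjn]
      exact hb
  have hmonoq := monotone_quantile_min hsupp0 hcomp
  -- Dominated convergence: levels `v < t` correspond to absent radii, and almost every level is a
  -- continuity point of the monotone quantile function.
  have hmain : Tendsto (fun n : ℕ => ∫ v in (0 : ℝ)..1, H n ⌊(n : ℝ) * v⌋₊) atTop
      (𝓝 (∫ v in (0 : ℝ)..1, (Set.Ioi t).indicator Φ v)) := by
    refine intervalIntegral.tendsto_integral_filter_of_dominated_convergence (fun _ => ‖f‖)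
      (Eventually.of_forall fun n => (measurable_comp_floor (H n) n).aestronglyMeasurable)
      (Eventually.of_forall fun n => ae_of_all _ fun v _ => ?_) intervalIntegrable_const ?_
    · simp only [hHdef]
      split_ifs
      · exact hA_le _ _
      · simp
    · have hne : ∀ c : ℝ, ∀ᵐ v : ℝ, v ≠ c := fun c => by simp [ae_iff, measure_singleton]
      have hc : ∀ᵐ v : ℝ, ContinuousAt (fun v : ℝ => quantileFn ν0 (min v 1)) v := by
        rw [ae_iff]
        exact hmonoq.countable_not_continuousAt.measure_zero _
      filter_upwards [hne t, hne 1, hc] with v hvt hv1 hcv hmem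
      rw [Set.uIoc_of_le zero_le_one] at hmem
      have hv1' : v < 1 := lt_of_le_of_ne hmem.2 hv1
      rcases lt_or_gt_of_ne hvt with hlt | hgt
      · rw [Set.indicator_of_notMem (by simpa using hlt.le)]
        refine tendsto_const_nhds.congr' ?_
        have h2 : ∀ᶠ n : ℕ in atTop, 1 / (t - v) < (n : ℝ) :=
          tendsto_natCast_atTop_atTop.eventually (eventually_gt_atTop _)
        filter_upwards [h2] with n hn
        rw [div_lt_iff₀ (by linarith)] at hn
        simp only [hHdef]
        rw [if_neg]
        intro hlt'
        have h3 : (⌊(n : ℝ) * v⌋₊ : ℝ) ≤ n * v :=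
          Nat.floor_le (mul_nonneg (Nat.cast_nonneg n) hmem.1.le)
        have h4 : (n : ℝ) ≤ d n + ⌊(n : ℝ) * v⌋₊ := by
          have : n ≤ d n + ⌊(n : ℝ) * v⌋₊ := by omega
          exact_mod_cast this
        have h5 : (mseq n : ℝ) * n ≤ mseq n * (d n + n * v) :=
          mul_le_mul_of_nonneg_left (by linarith) (hmR0 n).le
        have h6 : (1 : ℝ) ≤ mseq n := by exact_mod_cast hm n
        have h7 : (0 : ℝ) ≤ a n := Nat.cast_nonneg _
        nlinarith [hsumR n, hKgt n]
      · rw [Set.indicator_of_mem (show v ∈ Set.Ioi t from hgt)]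
        obtain ⟨hev, hT⟩ := hradius v hgt hv1' hcv
        refine (tendsto_circle_average f hmT hT).congr' ?_
        filter_upwards [hev] with n hn
        simp only [hHdef]
        rw [if_pos hn]
  have hindic : ∫ v in (0 : ℝ)..1, (Set.Ioi t).indicator Φ v = ∫ v in t..1, Φ v := by
    rw [intervalIntegral.integral_of_le zero_le_one, intervalIntegral.integral_of_le ht1.le,
      setIntegral_indicator measurableSet_Ioi]
    congr 2
    ext v
    simp only [Set.mem_inter_iff, Set.mem_Ioc, Set.mem_Ioi]
    constructor
    · rintro ⟨⟨_, h1⟩, h2⟩; exact ⟨h2, h1⟩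
    · rintro ⟨h1, h2⟩; exact ⟨⟨ht0.trans h1, h2⟩, h1⟩
  rw [hindic] at hmain
  have hmeas : AEMeasurable h (unifOn t 1) := by
    have h1 : Measurable fun v : ℝ => (1 - t / v) * quantileFn ν0 (min v 1) :=
      (measurable_const.sub (measurable_const.div measurable_id)).mul hmonoq.measurable
    refine ⟨_, h1, ?_⟩
    refine Measure.ae_smul_measure ?_ _
    filter_upwards [ae_restrict_mem measurableSet_Icc] with v hv
    rw [hhdef, min_eq_left hv.2]
  rw [integral_limit ht1 hmeas f]
  -- The degree of the derivative is `n m - K`, and its root at `0` has multiplicity `a < m`, which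
  -- is negligible.
  have hN : Tendsto (fun n : ℕ => (n : ℝ) * mseq n / ((a n + mseq n * d n : ℕ) : ℝ)) atTop
      (𝓝 (1 - t)⁻¹) := by
    refine ((tendsto_const_nhds.sub hKT).inv₀ (by linarith)).congr' ?_
    filter_upwards [eventually_gt_atTop 0] with n hn
    have hn' : (0 : ℝ) < n := by exact_mod_cast hn
    have hp : (0 : ℝ) < n * mseq n := mul_pos hn' (hmR0 n)
    have : ((a n + mseq n * d n : ℕ) : ℝ) = n * mseq n - K n := by
      push_cast; linarith [hsumR n]
    rw [this, one_sub_div hp.ne', inv_div]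
  have haT : Tendsto (fun n : ℕ => (a n : ℝ) / (n * mseq n)) atTop (𝓝 0) := by
    refine squeeze_zero' (Eventually.of_forall fun n => by positivity) ?_
      (tendsto_inv_atTop_nhds_zero_nat (𝕜 := ℝ))
    filter_upwards [eventually_gt_atTop 0] with n hn
    have hn' : (0 : ℝ) < n := by exact_mod_cast hn
    have h4 : (a n : ℝ) < mseq n := by exact_mod_cast ham n
    have := hmR0 n
    rw [div_le_iff₀ (mul_pos hn' this), inv_mul_cancel_left₀ hn'.ne']
    exact h4.le
  have hfinal := hN.mul ((haT.mul_const (f 0)).add hmain)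
  rw [zero_mul, zero_add] at hfinal
  refine hfinal.congr' ?_
  filter_upwards [eventually_gt_atTop 0] with n hn
  have hn' : (n : ℝ) ≠ 0 := by exact_mod_cast hn.ne'
  have hm' := (hmR0 n).ne'
  have hdn : d n ≤ n := by
    have h1 := hsum n
    have h2 := hm n
    nlinarith
  -- `ρ` is indexed by decreasing size and `H` by increasing size
  have hsumH : ∑ i ∈ Finset.range (d n), ∑ l ∈ Finset.range (mseq n),
      f ((ρ n i : ℂ) * Complex.exp (((2 * Real.pi * (l / mseq n) : ℝ) : ℂ) * Complex.I)) =
      mseq n * ∑ j ∈ Finset.range n, H n j := by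
    have e1 : ∑ j ∈ Finset.range n, H n j =
        ∑ i ∈ Finset.range n, if i < d n then A n (ρ n i) else 0 :=
      Finset.sum_range_reflect (fun i => if i < d n then A n (ρ n i) else 0) n
    have e2 : (Finset.range n).filter (fun i => i < d n) = Finset.range (d n) := by
      ext i; simp only [Finset.mem_filter, Finset.mem_range]; omega
    rw [e1, ← Finset.sum_filter, e2, Finset.mul_sum]
    refine Finset.sum_congr rfl fun i _ => ?_
    rw [hAdef]
    simp only
    rw [mul_inv_cancel_left₀ hm']
  rw [hinteg n f, hsumH, ← average_eq_integral hn (H n)]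
  field_simp
end

section
/- Let ν_0 be a compactly supported probability measure on [0, ∞) and let t ∈ (0,1). Let ν_t be the law of (1 − t/V_t)·q_{ν_0}(V_t), where V_t is uniformly distributed on [t, 1]. Then the quantile function of the finite measure (1−t)·ν_t (of total mass 1−t) satisfies q_{(1−t)ν_t}(x) = x·q_{ν_0}(x+t)/(x+t) for all x ∈ [0, 1−t]. -/
/-!
Write `Q` for the quantile function of `ν₀` and `g v = (1 - t / v) * Q v`. On `(0, 1]` the
quantile function satisfies the Galois relation `Q v ≤ y ↔ v ≤ ν₀ [0, y]` for `y ≥ 0`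
(`quantileFn_le_iff`), so it is nondecreasing and left-continuous there. Hence `g` is nondecreasing
on `[t, 1]`, vanishes at `t`, and is left-continuous on `(t, 1]` (the last property is used in the
form of `exists_lt_of_lt_weighted`).

The mass that `(1 - t) ν_t` gives to `[0, y]` is the Lebesgue measure of
`{v ∈ [t, 1] | g v ≤ y}`. By monotonicity and left-continuity of `g` this is at least `x` exactly
when `g (x + t) ≤ y`. The set whose infimum defines the quantile of `(1 - t) ν_t` at `x` is
therefore `[g (x + t), ∞)`, and `g (x + t) = x * Q (x + t) / (x + t)`.
-/



open MeasureTheory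

lemma quantileFn_nonneg (ν : Measure ℝ) (α : ℝ) : 0 ≤ quantileFn ν α :=
  Real.sInf_nonneg fun _ hy => hy.1

lemma exists_full_mass (ν : Measure ℝ) [IsProbabilityMeasure ν]
    (h0 : ν (Set.Iio 0) = 0) (hA : ∃ A : ℝ, ν (Set.Ioi A) = 0) :
    ∃ B : ℝ, 0 ≤ B ∧ ν (Set.Icc 0 B) = 1 := by
  obtain ⟨A, hA⟩ := hA
  refine ⟨max A 0, le_max_right _ _, ?_⟩
  rw [← prob_compl_eq_zero_iff measurableSet_Icc]
  refine measure_mono_null (t := Set.Iio 0 ∪ Set.Ioi A) ?_ (measure_union_null h0 hA)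
  intro y hy
  by_contra hc
  simp only [Set.mem_union, Set.mem_Iio, Set.mem_Ioi, not_or, not_lt] at hc
  exact hy ⟨hc.1, hc.2.trans (le_max_left _ _)⟩

lemma quantileFn_le (ν : Measure ℝ) {v y : ℝ} (hy : 0 ≤ y)
    (h : ENNReal.ofReal v ≤ ν (Set.Icc 0 y)) : quantileFn ν v ≤ y :=
  csInf_le ⟨0, fun _ hz => hz.1⟩ ⟨hy, h⟩

/-- The Galois relation between a quantile function and the distribution function; the converse
of `quantileFn_le` is right-continuity of `y ↦ ν [0, y]`. -/
lemma quantileFn_le_iff (ν : Measure ℝ) [IsProbabilityMeasure ν]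
    (h0 : ν (Set.Iio 0) = 0) (hA : ∃ A : ℝ, ν (Set.Ioi A) = 0)
    {v y : ℝ} (hv : v ≤ 1) (hy : 0 ≤ y) :
    quantileFn ν v ≤ y ↔ ENNReal.ofReal v ≤ ν (Set.Icc 0 y) := by
  refine ⟨fun h => ?_, quantileFn_le ν hy⟩
  have hne : {z : ℝ | 0 ≤ z ∧ ENNReal.ofReal v ≤ ν (Set.Icc 0 z)}.Nonempty := by
    obtain ⟨B, hB, hB1⟩ := exists_full_mass ν h0 hA
    exact ⟨B, hB, by rw [hB1]; exact ENNReal.ofReal_le_one.2 hv⟩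
  have key : ∀ z > y, ENNReal.ofReal v ≤ ν (Set.Icc 0 z) := by
    intro z hz
    obtain ⟨w, hw, hwz⟩ := exists_lt_of_csInf_lt hne (lt_of_le_of_lt h hz)
    exact hw.2.trans (measure_mono (Set.Icc_subset_Icc_right hwz.le))
  have hlim := tendsto_measure_biInter_gt (μ := ν) (s := fun z => Set.Icc (0 : ℝ) z) (a := y)
    (fun _ _ => measurableSet_Icc.nullMeasurableSet)
    (fun i j _ hij => Set.Icc_subset_Icc_right hij) ⟨y + 1, by simp, measure_ne_top _ _⟩
  have hInter : (⋂ r > y, Set.Icc (0 : ℝ) r) = Set.Icc 0 y := by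
    ext w
    simp only [Set.mem_iInter, Set.mem_Icc]
    refine ⟨fun hw => ⟨(hw (y + 1) (by simp)).1, le_of_forall_gt_imp_ge_of_dense fun r hr =>
      (hw r hr).2⟩, fun hw r hr => ⟨hw.1, hw.2.trans (le_of_lt hr)⟩⟩
  rw [hInter] at hlim
  refine ge_of_tendsto hlim ?_
  filter_upwards [self_mem_nhdsWithin] with z hz using key z hz

lemma quantileFn_mono (ν : Measure ℝ) [IsProbabilityMeasure ν]
    (h0 : ν (Set.Iio 0) = 0) (hA : ∃ A : ℝ, ν (Set.Ioi A) = 0)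
    {u v : ℝ} (huv : u ≤ v) (hv : v ≤ 1) : quantileFn ν u ≤ quantileFn ν v :=
  quantileFn_le ν (quantileFn_nonneg ν v) <| (ENNReal.ofReal_le_ofReal huv).trans <|
    (quantileFn_le_iff ν h0 hA hv (quantileFn_nonneg ν v)).1 le_rfl

/-- Left-continuity of the quantile function, stated as stability of strict lower bounds. -/
lemma exists_lt_of_lt_quantileFn (ν : Measure ℝ) [IsProbabilityMeasure ν]
    (h0 : ν (Set.Iio 0) = 0) (hA : ∃ A : ℝ, ν (Set.Ioi A) = 0)
    {u c : ℝ} (hu : u ≤ 1) (hc : 0 ≤ c) (h : c < quantileFn ν u) :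
    ∃ s < u, ∀ w, s < w → w ≤ 1 → c < quantileFn ν w := by
  have h1 : ν (Set.Icc 0 c) < ENNReal.ofReal u := by
    rw [← not_le, ← quantileFn_le_iff ν h0 hA hu hc]
    exact not_le.2 h
  have h2 : (ν (Set.Icc 0 c)).toReal < u :=
    (ENNReal.lt_ofReal_iff_toReal_lt (measure_ne_top _ _)).1 h1
  refine ⟨_, h2, fun w hw hw1 => ?_⟩
  rw [← not_le, quantileFn_le_iff ν h0 hA hw1 hc, not_le]
  exact (ENNReal.lt_ofReal_iff_toReal_lt (measure_ne_top _ _)).2 hw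

lemma weight_mono {t u v : ℝ} (ht : 0 < t) (hu : t ≤ u) (huv : u ≤ v) :
    1 - t / u ≤ 1 - t / v := by
  have : t / v ≤ t / u := div_le_div_of_nonneg_left ht.le (ht.trans_le hu) huv
  linarith

lemma weight_nonneg {t u : ℝ} (ht : 0 < t) (hu : t ≤ u) : 0 ≤ 1 - t / u :=
  sub_nonneg.2 ((div_le_one (ht.trans_le hu)).2 hu)

lemma weighted_monotoneOn (ν : Measure ℝ) [IsProbabilityMeasure ν]
    (h0 : ν (Set.Iio 0) = 0) (hA : ∃ A : ℝ, ν (Set.Ioi A) = 0) {t : ℝ} (ht : 0 < t) :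
    MonotoneOn (fun v => (1 - t / v) * quantileFn ν v) (Set.Icc t 1) := by
  intro u hu v hv huv
  exact mul_le_mul (weight_mono ht hu.1 huv) (quantileFn_mono ν h0 hA huv hv.2)
    (quantileFn_nonneg ν u) (weight_nonneg ht hv.1)

/-- Left-continuity of `v ↦ (1 - t / v) * quantileFn ν v` at `u`, in the form needed for a
monotone function: a strict lower bound `y` at `u` persists at some point to the left of `u`. -/
lemma exists_lt_of_lt_weighted (ν : Measure ℝ) [IsProbabilityMeasure ν]
    (h0 : ν (Set.Iio 0) = 0) (hA : ∃ A : ℝ, ν (Set.Ioi A) = 0) {t u y : ℝ} (ht : 0 < t)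
    (htu : t < u) (hu : u ≤ 1) (hy : 0 ≤ y) (h : y < (1 - t / u) * quantileFn ν u) :
    ∃ s, t < s ∧ s < u ∧ y < (1 - t / s) * quantileFn ν s := by
  have hu0 : 0 < u := ht.trans htu
  have hw : 0 < 1 - t / u := sub_pos.2 ((div_lt_one hu0).2 htu)
  -- A level `c` strictly between `y / (1 - t / u)` and `Q u` separates the two factors.
  obtain ⟨c, hc1, hc2⟩ := exists_between ((div_lt_iff₀' hw).2 h)
  have hc0 : 0 ≤ c := (div_nonneg hy hw.le).trans hc1.le
  obtain ⟨s, hs, hsw⟩ := exists_lt_of_lt_quantileFn ν h0 hA hu hc0 hc2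
  have hcont : ContinuousAt (fun r : ℝ => (1 - t / r) * c) u :=
    (continuousAt_const.sub (continuousAt_const.div continuousAt_id hu0.ne')).mul
      continuousAt_const
  have hev : ∀ᶠ r in nhdsWithin u (Set.Iio u), y < (1 - t / r) * c :=
    (hcont.eventually (lt_mem_nhds ((div_lt_iff₀' hw).1 hc1))).filter_mono nhdsWithin_le_nhds
  have hev2 : ∀ᶠ r in nhdsWithin u (Set.Iio u), r ∈ Set.Ioo (max s t) u :=
    Ioo_mem_nhdsLT (max_lt hs htu)
  obtain ⟨r, hr1, hr2⟩ := (hev.and hev2).exists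
  have hsr : s < r := (le_max_left _ _).trans_lt hr2.1
  have htr : t < r := (le_max_right _ _).trans_lt hr2.1
  refine ⟨r, htr, hr2.2, hr1.trans_le ?_⟩
  exact mul_le_mul_of_nonneg_left (hsw r hsr (hr2.2.le.trans hu)).le (weight_nonneg ht htr.le)

/-- The rescaled law of `f V`, for `V` uniform on `[t, 1]` and `f` nondecreasing and nonnegative
there, gives `[0, y]` the length of the sublevel set of `f`. -/
lemma scaled_map_Icc {f : ℝ → ℝ} {t : ℝ} (ht1 : t < 1) (hf : MonotoneOn f (Set.Icc t 1))
    (hf0 : ∀ v ∈ Set.Icc t 1, 0 ≤ f v) (y : ℝ) :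
    (ENNReal.ofReal (1 - t) • Measure.map f (unifOn t 1)) (Set.Icc 0 y)
      = volume {v ∈ Set.Icc t 1 | f v ≤ y} := by
  have hm : AEMeasurable f (volume.restrict (Set.Icc t 1)) :=
    aemeasurable_restrict_of_monotoneOn measurableSet_Icc hf
  have hpos : ENNReal.ofReal (1 - t) ≠ 0 := by simpa using ht1
  rw [unifOn, Measure.map_smul, smul_smul, ENNReal.mul_inv_cancel hpos ENNReal.ofReal_ne_top,
    one_smul, Measure.map_apply_of_aemeasurable hm measurableSet_Icc,
    Measure.restrict_apply' measurableSet_Icc]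
  congr 1
  ext v
  simp only [Set.mem_inter_iff, Set.mem_preimage, Set.mem_Icc, Set.mem_ofPred_eq]
  exact ⟨fun h => ⟨h.2, h.1.2⟩, fun h => ⟨⟨hf0 v h.1, h.2⟩, h.1⟩⟩

/-- Let `ν₀` be a compactly supported probability measure on `[0,∞)`,
`t ∈ (0,1)`, and let `ν_t` be the law of `(1 - t/V_t)·q_{ν₀}(V_t)` where `V_t` is uniform
on `[t,1]`. Then the quantile function of the finite measure `(1-t)·ν_t` satisfies
`q_{(1-t)ν_t}(x) = x·q_{ν₀}(x+t)/(x+t)` for all `x ∈ [0, 1-t]`. -/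
theorem stmt13 (ν0 : Measure ℝ) [IsProbabilityMeasure ν0]
    (hsupp0 : ν0 (Set.Iio 0) = 0) (hcomp : ∃ A : ℝ, ν0 (Set.Ioi A) = 0)
    (t : ℝ) (ht : t ∈ Set.Ioo (0 : ℝ) 1)
    (νt : Measure ℝ)
    (hνt : νt = Measure.map (fun v => (1 - t / v) * quantileFn ν0 v) (unifOn t 1)) :
    ∀ x ∈ Set.Icc (0 : ℝ) (1 - t),
      quantileFn (ENNReal.ofReal (1 - t) • νt) x = x * quantileFn ν0 (x + t) / (x + t) := by
  obtain ⟨ht0, ht1⟩ := ht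
  intro x hx
  have hxt : 0 < x + t := by linarith [hx.1]
  have hmem : x + t ∈ Set.Icc t 1 := ⟨by linarith [hx.1], by linarith [hx.2]⟩
  set g : ℝ → ℝ := fun v => (1 - t / v) * quantileFn ν0 v with hg
  have hmono : MonotoneOn g (Set.Icc t 1) := weighted_monotoneOn ν0 hsupp0 hcomp ht0
  have hnn : ∀ v ∈ Set.Icc t 1, 0 ≤ g v := fun v hv =>
    mul_nonneg (weight_nonneg ht0 hv.1) (quantileFn_nonneg ν0 v)
  have hgx : g (x + t) = x * quantileFn ν0 (x + t) / (x + t) := by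
    simp only [hg]
    field_simp
    ring
  have hset : {y : ℝ | 0 ≤ y ∧ ENNReal.ofReal x ≤ (ENNReal.ofReal (1 - t) • νt) (Set.Icc 0 y)}
      = Set.Ici (g (x + t)) := by
    ext y
    simp only [Set.mem_ofPred_eq, Set.mem_Ici]
    rw [hνt, scaled_map_Icc ht1 hmono hnn]
    constructor
    · rintro ⟨hy, hle⟩
      by_contra! hlt
      -- `g t = 0 ≤ y`, so `y < g (x + t)` excludes `x = 0`.
      have hx0 : 0 < x := by
        refine lt_of_le_of_ne hx.1 fun h0 => ?_
        rw [hgx, ← h0] at hlt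
        simp at hlt
        linarith
      obtain ⟨s, hts, hsx, hs⟩ := exists_lt_of_lt_weighted ν0 hsupp0 hcomp ht0
        (by linarith) hmem.2 hy hlt
      have hsub : {v ∈ Set.Icc t 1 | g v ≤ y} ⊆ Set.Icc t s := by
        rintro v ⟨hv, hvy⟩
        refine ⟨hv.1, ?_⟩
        by_contra! hsv
        have := hmono ⟨hts.le, hsv.le.trans hv.2⟩ hv hsv.le
        exact absurd (hs.trans_le (this.trans hvy)) (lt_irrefl y)
      have hle2 := hle.trans (measure_mono hsub)
      rw [Real.volume_Icc, ENNReal.ofReal_le_ofReal_iff (by linarith)] at hle2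
      linarith
    · intro hy
      refine ⟨(hnn _ hmem).trans hy, ?_⟩
      have hsub : Set.Icc t (x + t) ⊆ {v ∈ Set.Icc t 1 | g v ≤ y} := fun v hv =>
        ⟨⟨hv.1, hv.2.trans hmem.2⟩, (hmono ⟨hv.1, hv.2.trans hmem.2⟩ hmem hv.2).trans hy⟩
      refine le_trans (le_of_eq ?_) (measure_mono hsub)
      rw [Real.volume_Icc, add_sub_cancel_right]
  rw [quantileFn, hset, csInf_Ici, hgx]
end

section
/- Let ν_0 be a compactly supported probability measure on [0, ∞), let A > 0, and assume the distribution function Ψ_0 of ν_0 restricts to a continuous, strictly increasing bijection from [0, A] onto [0, 1]. Let t ∈ (0,1) and let ν_t be the law of (1 − t/V_t)·q_{ν_0}(V_t), where V_t is uniformly distributed on [t, 1]. Then the distribution function Ψ_t of (1−t)·ν_t restricts to a continuous, strictly increasing bijection from [0, A(1−t)] onto [0, 1−t], and its inverse bijection satisfies Ψ_t^{⟨−1⟩}(x)/x = Ψ_0^{⟨−1⟩}(x+t)/(x+t) for all 0 < x < 1−t. -/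
/-!
Write `q` for the quantile function of `ν₀` and `g v = (1 - t / v) * q v`. Since `Ψ₀` is a strictly
increasing bijection `[0, A] → [0, 1]`, `q` is its inverse (`quantileFn_apply_cdf`), so `g` is a
strictly increasing bijection from `[t, 1]` onto `[0, A (1 - t)]`. The law of `g` under Lebesgue
measure on `[t, 1]` therefore has a distribution function sending `g v` to the length `v - t` of
`[t, v]` (`map_unifOn_Icc`). Thus `Ψ_t` is the inverse of `x ↦ g (x + t)`; it is continuous because
it is an increasing bijection between intervals, and the formula for the inverse is
`g (x + t) = x / (x + t) * q (x + t)`.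
-/

open MeasureTheory

/-- On an interval where the distribution function is strictly increasing, the quantile function is
a left inverse of it. -/
lemma quantileFn_apply_cdf (ν : Measure ℝ) [IsProbabilityMeasure ν] {A : ℝ}
    (hmono : StrictMonoOn (fun x => (ν (Set.Icc 0 x)).toReal) (Set.Icc 0 A))
    {y : ℝ} (hy : y ∈ Set.Icc 0 A) : quantileFn ν (ν (Set.Icc 0 y)).toReal = y := by
  have hset : {z : ℝ | 0 ≤ z ∧ ENNReal.ofReal (ν (Set.Icc 0 y)).toReal ≤ ν (Set.Icc 0 z)}
      = Set.Ici y := by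
    ext z
    rw [ENNReal.ofReal_toReal (measure_ne_top _ _)]
    simp only [Set.mem_ofPred_eq, Set.mem_Ici]
    constructor
    · rintro ⟨hz, hle⟩
      by_contra! hzy
      have h1 := hmono ⟨hz, hzy.le.trans hy.2⟩ hy hzy
      have h2 := ENNReal.toReal_mono (measure_ne_top _ _) hle
      exact absurd h1 (not_lt.mpr h2)
    · intro hz
      exact ⟨hy.1.trans hz, measure_mono (Set.Icc_subset_Icc_right hz)⟩
  rw [quantileFn, hset, csInf_Ici]

/-- The distribution function of the image of Lebesgue measure on `[t, 1]`, written as `1 - t` times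
the uniform law, under a strictly increasing `g` vanishing at `t`. -/
lemma map_unifOn_Icc {t : ℝ} (ht : t < 1) {g : ℝ → ℝ} (hg : StrictMonoOn g (Set.Icc t 1))
    (hgt : g t = 0) {v : ℝ} (hv : v ∈ Set.Icc t 1) :
    ((ENNReal.ofReal (1 - t) • Measure.map g (unifOn t 1)) (Set.Icc 0 (g v))).toReal = v - t := by
  have hae : AEMeasurable g (unifOn t 1) :=
    (aemeasurable_restrict_of_monotoneOn measurableSet_Icc hg.monotoneOn).smul_measure _
  have htm : t ∈ Set.Icc t 1 := ⟨le_rfl, ht.le⟩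
  have hpre : g ⁻¹' Set.Icc 0 (g v) ∩ Set.Icc t 1 = Set.Icc t v := by
    ext w
    constructor
    · rintro ⟨hw, hw'⟩
      exact ⟨hw'.1, (hg.le_iff_le hw' hv).1 hw.2⟩
    · intro hw
      have hw' : w ∈ Set.Icc t 1 := ⟨hw.1, hw.2.trans hv.2⟩
      exact ⟨⟨hgt ▸ (hg.le_iff_le htm hw').2 hw.1, (hg.le_iff_le hw' hv).2 hw.2⟩, hw'⟩
  have hne : ENNReal.ofReal (1 - t) ≠ 0 := by
    simpa using ht
  rw [Measure.smul_apply, Measure.map_apply_of_aemeasurable hae measurableSet_Icc, unifOn,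
    Measure.smul_apply, Measure.restrict_apply' measurableSet_Icc, hpre, Real.volume_Icc,
    smul_eq_mul, smul_eq_mul, ← mul_assoc, ENNReal.mul_inv_cancel hne ENNReal.ofReal_ne_top,
    one_mul, ENNReal.toReal_ofReal (sub_nonneg.2 hv.1)]

lemma StrictMonoOn.continuousOn_of_image_eq_Icc {f : ℝ → ℝ} {a b c d : ℝ}
    (hf : StrictMonoOn f (Set.Icc a b)) (him : f '' Set.Icc a b = Set.Icc c d) :
    ContinuousOn f (Set.Icc a b) := by
  rw [continuousOn_iff_continuous_domRestrict]
  have : (f '' Set.Icc a b).OrdConnected := him ▸ Set.ordConnected_Icc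
  exact continuous_subtype_val.comp (hf.orderIso f (Set.Icc a b)).continuous

/-- Let `ν₀` be a compactly supported probability measure on `[0,∞)`
whose distribution function `Ψ₀` restricts to a continuous strictly increasing bijection
from `[0,A]` onto `[0,1]`. Let `t ∈ (0,1)` and let `ν_t` be the law of
`(1 - t/V_t)·q_{ν₀}(V_t)` with `V_t` uniform on `[t,1]`. Then the distribution function
`Ψ_t` of `(1-t)·ν_t` restricts to a continuous strictly increasing bijection from
`[0, A(1-t)]` onto `[0, 1-t]`, and the inverse bijections satisfy
`Ψ_t⁻¹(x)/x = Ψ₀⁻¹(x+t)/(x+t)` for `0 < x < 1-t` (the inverse relation being expressed by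
`Ψ_t(y) = x` and `Ψ₀(y₀) = x+t`). -/
theorem stmt14 (ν0 : Measure ℝ) [IsProbabilityMeasure ν0]
    (hsupp0 : ν0 (Set.Iio 0) = 0)
    (A : ℝ) (hA : 0 < A) (hcomp : ν0 (Set.Ioi A) = 0)
    (Ψ0 : ℝ → ℝ) (hΨ0 : Ψ0 = fun x => (ν0 (Set.Icc 0 x)).toReal)
    (hbij0 : Set.BijOn Ψ0 (Set.Icc 0 A) (Set.Icc 0 1))
    (hmono0 : StrictMonoOn Ψ0 (Set.Icc 0 A))
    (hcont0 : ContinuousOn Ψ0 (Set.Icc 0 A))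
    (t : ℝ) (ht : t ∈ Set.Ioo (0 : ℝ) 1)
    (νt : Measure ℝ)
    (hνt : νt = Measure.map (fun v => (1 - t / v) * quantileFn ν0 v) (unifOn t 1))
    (Ψt : ℝ → ℝ)
    (hΨt : Ψt = fun x => ((ENNReal.ofReal (1 - t) • νt) (Set.Icc 0 x)).toReal) :
    Set.BijOn Ψt (Set.Icc 0 (A * (1 - t))) (Set.Icc 0 (1 - t)) ∧
    StrictMonoOn Ψt (Set.Icc 0 (A * (1 - t))) ∧
    ContinuousOn Ψt (Set.Icc 0 (A * (1 - t))) ∧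
    (∀ x ∈ Set.Ioo (0 : ℝ) (1 - t),
      ∀ y ∈ Set.Icc (0 : ℝ) (A * (1 - t)), Ψt y = x →
      ∀ y0 ∈ Set.Icc (0 : ℝ) A, Ψ0 y0 = x + t →
      y / x = y0 / (x + t)) := by
  obtain ⟨ht0, ht1⟩ := ht
  set g : ℝ → ℝ := fun v => (1 - t / v) * quantileFn ν0 v with hgdef
  have hq : ∀ y ∈ Set.Icc 0 A, quantileFn ν0 (Ψ0 y) = y := by
    subst hΨ0
    exact fun y hy => quantileFn_apply_cdf ν0 hmono0 hy
  have hA0 : A ∈ Set.Icc 0 A := ⟨hA.le, le_rfl⟩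
  have hΨA : Ψ0 A = 1 := by
    obtain ⟨z, hz, hz1⟩ := hbij0.surjOn (⟨zero_le_one, le_rfl⟩ : (1 : ℝ) ∈ Set.Icc 0 1)
    exact le_antisymm (hbij0.mapsTo hA0).2 (hz1 ▸ hmono0.monotoneOn hz hA0 hz.2)
  have hgΨ : ∀ y ∈ Set.Icc 0 A, g (Ψ0 y) = (1 - t / Ψ0 y) * y := fun y hy => by
    simp only [hgdef, hq y hy]
  have hsub : ∀ v ∈ Set.Icc t 1, v ∈ Set.Icc (0 : ℝ) 1 := fun v hv => ⟨ht0.le.trans hv.1, hv.2⟩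
  have hgt : g t = 0 := by simp [hgdef, ht0.ne']
  have hg1 : g 1 = A * (1 - t) := by rw [← hΨA, hgΨ A hA0, hΨA]; ring
  have htm : t ∈ Set.Icc t 1 := ⟨le_rfl, ht1.le⟩
  have h1m : (1 : ℝ) ∈ Set.Icc t 1 := ⟨ht1.le, le_rfl⟩
  have hgmono : StrictMonoOn g (Set.Icc t 1) := by
    intro v hv w hw hvw
    obtain ⟨a, ha, rfl⟩ := hbij0.surjOn (hsub v hv)
    obtain ⟨b, hb, rfl⟩ := hbij0.surjOn (hsub w hw)
    have hab : a < b := (hmono0.lt_iff_lt ha hb).1 hvw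
    have hv0 : 0 < Ψ0 a := ht0.trans_le hv.1
    have h1 : t / Ψ0 b < t / Ψ0 a := div_lt_div_of_pos_left ht0 hv0 hvw
    have h2 : t / Ψ0 a ≤ 1 := (div_le_one hv0).2 hv.1
    rw [hgΨ a ha, hgΨ b hb]
    exact mul_lt_mul'' (by linarith) hab (by linarith) ha.1
  -- Surjectivity by the intermediate value theorem, in the coordinate `z = q v`, where continuity
  -- is that of `Ψ₀`.
  have hgsurj : ∀ y ∈ Set.Icc 0 (A * (1 - t)), ∃ v ∈ Set.Icc t 1, g v = y := by
    intro y hy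
    obtain ⟨a, ha, hat⟩ := hbij0.surjOn (hsub t htm)
    have hss : Set.Icc a A ⊆ Set.Icc 0 A := Set.Icc_subset_Icc_left ha.1
    have hge : ∀ z ∈ Set.Icc a A, t ≤ Ψ0 z := fun z hz =>
      hat ▸ hmono0.monotoneOn ha (hss hz) hz.1
    have hc : ContinuousOn (fun z => (1 - t / Ψ0 z) * z) (Set.Icc a A) :=
      (continuousOn_const.sub (continuousOn_const.div (hcont0.mono hss)
        fun z hz => (ht0.trans_le (hge z hz)).ne')).mul continuousOn_id
    have hy' : y ∈ Set.Icc ((1 - t / Ψ0 a) * a) ((1 - t / Ψ0 A) * A) := by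
      rw [← hgΨ a ha, ← hgΨ A hA0, hat, hΨA, hgt, hg1]
      exact hy
    obtain ⟨z, hz, hzy⟩ := intermediate_value_Icc ha.2 hc hy'
    exact ⟨Ψ0 z, ⟨hge z hz, (hbij0.mapsTo (hss hz)).2⟩, (hgΨ z (hss hz)).trans hzy⟩
  have hΨg : ∀ v ∈ Set.Icc t 1, Ψt (g v) = v - t := by
    intro v hv
    rw [hΨt, hνt]
    exact map_unifOn_Icc ht1 hgmono hgt hv
  have hmono : StrictMonoOn Ψt (Set.Icc 0 (A * (1 - t))) := by
    intro y hy y' hy' hyy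
    obtain ⟨v, hv, rfl⟩ := hgsurj y hy
    obtain ⟨w, hw, rfl⟩ := hgsurj y' hy'
    rw [hΨg v hv, hΨg w hw]
    exact sub_lt_sub_right ((hgmono.lt_iff_lt hv hw).1 hyy) t
  have hbij : Set.BijOn Ψt (Set.Icc 0 (A * (1 - t))) (Set.Icc 0 (1 - t)) := by
    refine ⟨?_, hmono.injOn, ?_⟩
    · intro y hy
      obtain ⟨v, hv, rfl⟩ := hgsurj y hy
      rw [hΨg v hv]
      exact ⟨sub_nonneg.2 hv.1, sub_le_sub_right hv.2 t⟩
    · intro x hx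
      have hv : x + t ∈ Set.Icc t 1 := ⟨by linarith [hx.1], by linarith [hx.2]⟩
      refine ⟨g (x + t), ⟨?_, ?_⟩, by rw [hΨg _ hv]; ring⟩
      · exact hgt ▸ hgmono.monotoneOn htm hv hv.1
      · exact hg1 ▸ hgmono.monotoneOn hv h1m hv.2
  refine ⟨hbij, hmono, hmono.continuousOn_of_image_eq_Icc hbij.image_eq, ?_⟩
  intro x hx y hy hyx y0 hy0 hy0x
  obtain ⟨v, hv, rfl⟩ := hgsurj y hy
  have hvx : v = Ψ0 y0 := by linarith [hΨg v hv]
  rw [hvx, hgΨ y0 hy0, hy0x]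
  have hx0 : x ≠ 0 := hx.1.ne'
  have hxt : x + t ≠ 0 := (add_pos hx.1 ht0).ne'
  field_simp
  ring
end

section
/- Let A > 0 and let ν_0 be a probability measure on [0, ∞), absolutely continuous with respect to Lebesgue measure, supported on [0, A], with a density that is continuous and strictly positive on (0, A). For t ∈ [0,1), let ν_t be the law of (1 − t/V_t)·q_{ν_0}(V_t), where V_t is uniformly distributed on [t, 1]. Then for all t ∈ [0,1): the measure (1−t)·ν_t is supported on [0, A(1−t)]; its distribution function Ψ_t is continuous, differentiable on (0, A(1−t)) with a strictly positive derivative x ↦ ψ(x, t), which is a Lebesgue density of (1−t)·ν_t; the map (t, x) ↦ Ψ_t(x) is continuously differentiable on the set {(t, x) : t ∈ [0,1), 0 < x < A(1−t)}; and on this set the partial differential equation ∂Ψ_t(x)/∂t = x·(∂Ψ_t(x)/∂x)/Ψ_t(x) − 1 holds. -/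
/-!
Let `F` be the distribution function of `ν₀`. It is `C¹` with positive derivative `f` on `(0, A)`, and
the quantile function is its inverse there. Writing `v = F y`, the transported variable becomes
`x = shrink F t y = (1 - t / F y) * y`, which for `t ≥ 0` is strictly increasing in `y` on
`{y ∈ (0, A) : t < F y}` with image `(0, A (1 - t))`. Since `(1 - t) ν_t` is the image of Lebesgue
measure on `(t, 1)`, its distribution function is characterised by the level identity

  `Ψ_t (shrink F t y) = F y - t`   (`IsRegularCdf.map_transport_shrink`).

The map `(t, y) ↦ (t, shrink F t y)` is `C¹` and `∂_y shrink > 0`, so the inverse function theorem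
presents `Ψ`, near each point of the domain, as the restriction to `t ≥ 0` of a `C¹` function defined
on a full neighbourhood (`IsRegularCdf.exists_local`); this also covers the boundary `t = 0`.
Differentiating the level identity in `y` gives `∂_x Ψ = f y / ∂_y shrink > 0`, and differentiating
it in `t` gives `∂_t Ψ - (y / F y) ∂_x Ψ = -1`; as `y / F y = x / Ψ_t(x)`, this is the differential
equation (`IsRegularCdf.hasDeriv_level`). The density of `(1 - t) ν_t` follows from the change of
variables `x ↦ Ψ_t(x)` (`IsRegularCdf.map_transport_eq_withDensity`), and `Ψ_t` is continuous because
that measure has no atoms.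
-/

open MeasureTheory Set

open Filter Topology

/-! ### Regular distribution functions and the shrinking map -/

/-- `F` is the distribution function, restricted to `[0, A]`, of a probability measure whose density
`f` is continuous and positive on `(0, A)`. -/
structure IsRegularCdf (A : ℝ) (f F : ℝ → ℝ) : Prop where
  A_pos : 0 < A
  zero : F 0 = 0
  top : F A = 1
  cont : ContinuousOn F (Icc 0 A)
  hasDeriv : ∀ y ∈ Ioo 0 A, HasDerivAt F (f y) y
  dens_cont : ContinuousOn f (Ioo 0 A)
  dens_pos : ∀ y ∈ Ioo 0 A, 0 < f y

/-- The value `(1 - t / v) · q(v)` of the transported variable, written in terms of the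
quantile `y = q(v)`, so that `v = F y`. -/
noncomputable def shrink (F : ℝ → ℝ) (t y : ℝ) : ℝ := (1 - t / F y) * y

/-- The quantiles `y` of the levels `v ∈ (t, 1)`. -/
def quantDom (A : ℝ) (F : ℝ → ℝ) (t : ℝ) : Set ℝ := {y | y ∈ Ioo 0 A ∧ t < F y}

namespace IsRegularCdf

variable {A : ℝ} {f F : ℝ → ℝ}

lemma strictMonoOn (h : IsRegularCdf A f F) : StrictMonoOn F (Icc 0 A) := by
  refine strictMonoOn_of_deriv_pos (convex_Icc 0 A) h.cont fun x hx => ?_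
  rw [interior_Icc] at hx
  rw [(h.hasDeriv x hx).deriv]
  exact h.dens_pos x hx

lemma pos (h : IsRegularCdf A f F) {y : ℝ} (hy : y ∈ Ioo 0 A) : 0 < F y := by
  have := h.strictMonoOn (left_mem_Icc.2 h.A_pos.le) (Ioo_subset_Icc_self hy) hy.1
  rwa [h.zero] at this

lemma lt_one (h : IsRegularCdf A f F) {y : ℝ} (hy : y ∈ Ioo 0 A) : F y < 1 := by
  have := h.strictMonoOn (Ioo_subset_Icc_self hy) (right_mem_Icc.2 h.A_pos.le) hy.2
  rwa [h.top] at this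

lemma exists_quantile (h : IsRegularCdf A f F) {v : ℝ} (hv : v ∈ Ioo (0 : ℝ) 1) :
    ∃ y ∈ Ioo 0 A, F y = v := by
  have := intermediate_value_Ioo h.A_pos.le h.cont
  rw [h.zero, h.top] at this
  exact this hv

lemma contDiffAt (h : IsRegularCdf A f F) {y : ℝ} (hy : y ∈ Ioo 0 A) : ContDiffAt ℝ 1 F y := by
  have : ContDiffOn ℝ (0 + 1) F (Ioo 0 A) := by
    rw [contDiffOn_succ_iff_deriv_of_isOpen isOpen_Ioo]
    refine ⟨fun x hx => (h.hasDeriv x hx).differentiableAt.differentiableWithinAt, by simp, ?_⟩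
    rw [contDiffOn_zero]
    exact h.dens_cont.congr fun x hx => (h.hasDeriv x hx).deriv
  rw [zero_add] at this
  exact this.contDiffAt (isOpen_Ioo.mem_nhds hy)

lemma shrink_strictMonoOn (h : IsRegularCdf A f F) {t : ℝ} (ht : 0 ≤ t) :
    StrictMonoOn (shrink F t) (quantDom A F t) := by
  intro y hy z hz hyz
  have hF := h.strictMonoOn (Ioo_subset_Icc_self hy.1) (Ioo_subset_Icc_self hz.1) hyz
  have hy0 := h.pos hy.1
  have h1 : t / F z ≤ t / F y := div_le_div_of_nonneg_left ht hy0 hF.le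
  have h2 : t / F y < 1 := (div_lt_one hy0).2 hy.2
  unfold shrink
  have := hy.1.1
  nlinarith

lemma shrink_mem (h : IsRegularCdf A f F) {t y : ℝ} (ht : 0 ≤ t) (hy : y ∈ quantDom A F t) :
    shrink F t y ∈ Ioo 0 (A * (1 - t)) := by
  have hy0 := h.pos hy.1
  have hy1 := h.lt_one hy.1
  have h1 : t ≤ t / F y := by
    rw [le_div_iff₀ hy0]; nlinarith
  have h2 : t / F y < 1 := (div_lt_one hy0).2 hy.2
  have := hy.1.1
  have := hy.1.2
  unfold shrink
  constructor
  · apply mul_pos <;> linarith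
  · nlinarith

lemma exists_shrink_eq (h : IsRegularCdf A f F) {t x : ℝ} (ht : t ∈ Ico (0 : ℝ) 1)
    (hx : x ∈ Ioo 0 (A * (1 - t))) : ∃ y ∈ quantDom A F t, shrink F t y = x := by
  rcases ht.1.eq_or_lt with rfl | ht0
  · have hx' : x ∈ Ioo 0 A := by simpa using hx
    exact ⟨x, ⟨hx', h.pos hx'⟩, by simp [shrink]⟩
  · obtain ⟨z, hz, hzt⟩ := h.exists_quantile ⟨ht0, ht.2⟩
    have hsub : Icc z A ⊆ Icc 0 A := Icc_subset_Icc_left hz.1.le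
    have hge : ∀ y ∈ Icc z A, t ≤ F y := fun y hy => by
      rw [← hzt]
      exact h.strictMonoOn.monotoneOn (Ioo_subset_Icc_self hz) (hsub hy) hy.1
    have hc : ContinuousOn (shrink F t) (Icc z A) := by
      refine ContinuousOn.mul (continuousOn_const.sub (continuousOn_const.div (h.cont.mono hsub)
        fun y hy => ?_)) continuousOn_id
      exact (ht0.trans_le (hge y hy)).ne'
    have := intermediate_value_Ioo hz.2.le hc
    have hz' : shrink F t z = 0 := by simp [shrink, hzt, ht0.ne']
    have hA' : shrink F t A = A * (1 - t) := by simp [shrink, h.top, mul_comm]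
    rw [hz', hA'] at this
    obtain ⟨y, hy, rfl⟩ := this hx
    refine ⟨y, ⟨⟨hz.1.trans hy.1, hy.2⟩, ?_⟩, rfl⟩
    rw [← hzt]
    exact h.strictMonoOn (Ioo_subset_Icc_self hz) (hsub (Ioo_subset_Icc_self hy)) hy.1

lemma shrink_contDiffAt (h : IsRegularCdf A f F) {t y : ℝ} (hy : y ∈ Ioo 0 A) :
    ContDiffAt ℝ 1 (fun p : ℝ × ℝ => shrink F p.1 p.2) (t, y) := by
  have hF : ContDiffAt ℝ 1 (fun p : ℝ × ℝ => F p.2) (t, y) :=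
    ContDiffAt.comp (t, y) (g := F) (f := Prod.snd) (h.contDiffAt hy) contDiffAt_snd
  exact (contDiffAt_const.sub (contDiffAt_fst.div hF (h.pos hy).ne')).mul contDiffAt_snd

/-- The derivative of `y ↦ (1 - t / F y) · y`. -/
noncomputable def shrinkDeriv (f F : ℝ → ℝ) (t y : ℝ) : ℝ := t * f y / F y ^ 2 * y + (1 - t / F y)

lemma hasDerivAt_shrink (h : IsRegularCdf A f F) {t y : ℝ} (hy : y ∈ Ioo 0 A) :
    HasDerivAt (shrink F t) (shrinkDeriv f F t y) y := by
  have h1 := ((((hasDerivAt_const y t).div (h.hasDeriv y hy) (h.pos hy).ne').const_sub 1).mul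
    (hasDerivAt_id y))
  refine h1.congr_deriv ?_
  simp [shrinkDeriv]
  ring

lemma shrinkDeriv_pos (h : IsRegularCdf A f F) {t y : ℝ} (ht : 0 ≤ t) (hy : y ∈ quantDom A F t) :
    0 < shrinkDeriv f F t y := by
  have hF := h.pos hy.1
  have h2 : t / F y < 1 := (div_lt_one hF).2 hy.2
  have := h.dens_pos y hy.1
  have h3 := hy.1.1
  have : 0 ≤ t * f y / F y ^ 2 * y := by positivity
  unfold shrinkDeriv
  linarith

/-- Inverse function theorem for `(t, y) ↦ (t, shrink F t y)`: near the image of a point of the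
domain, the level `F y - t` is a `C¹` function `H` of `(t, x)`, also across the boundary `t = 0`. -/
lemma exists_local (h : IsRegularCdf A f F) {t y : ℝ} (ht : 0 ≤ t) (hy : y ∈ quantDom A F t)
    {Ψ : ℝ → ℝ → ℝ}
    (hΨ : ∀ τ ∈ Ico (0 : ℝ) 1, ∀ z ∈ quantDom A F τ, Ψ τ (shrink F τ z) = F z - τ) :
    ∃ H : ℝ × ℝ → ℝ, ContDiffAt ℝ 1 H (t, shrink F t y) ∧
      (∀ᶠ q in 𝓝 (t, shrink F t y), 0 ≤ q.1 → Ψ q.1 q.2 = H q) ∧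
      (∀ᶠ p : ℝ × ℝ in 𝓝 (t, y), H (p.1, shrink F p.1 p.2) = F p.2 - p.1) := by
  set Φ : ℝ × ℝ → ℝ × ℝ := fun p => (p.1, shrink F p.1 p.2) with hΦdef
  have hG := h.shrink_contDiffAt (t := t) hy.1
  have hΦ : ContDiffAt ℝ 1 Φ (t, y) := contDiffAt_fst.prodMk hG
  obtain ⟨L, hL⟩ : ∃ L, HasFDerivAt (fun p : ℝ × ℝ => shrink F p.1 p.2) L (t, y) :=
    ⟨_, (hG.differentiableAt one_ne_zero).hasFDerivAt⟩
  have hd : L (0, 1) = shrinkDeriv f F t y := by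
    have h1 : HasDerivAt (fun z : ℝ => ((t, z) : ℝ × ℝ)) (0, 1) y :=
      (hasDerivAt_const y t).prodMk (hasDerivAt_id y)
    exact (hL.comp_hasDerivAt y h1).unique (h.hasDerivAt_shrink hy.1)
  have hd0 : L (0, 1) ≠ 0 := hd ▸ (h.shrinkDeriv_pos ht hy).ne'
  let e : (ℝ × ℝ) ≃L[ℝ] ℝ × ℝ :=
    (ContinuousLinearEquiv.refl ℝ ℝ).skewProd
      (ContinuousLinearEquiv.unitsEquivAut ℝ (Units.mk0 _ hd0))
      (L.comp (ContinuousLinearMap.inl ℝ ℝ ℝ))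
  have he : HasFDerivAt Φ (e : (ℝ × ℝ) →L[ℝ] ℝ × ℝ) (t, y) := by
    refine (hasFDerivAt_fst.prodMk hL).congr_fderiv ?_
    ext <;> simp [e]
    exact L.map_zero
  have hs := hΦ.hasStrictFDerivAt' he one_ne_zero
  let I := hs.localInverse Φ e (t, y)
  have hI : ContDiffAt ℝ 1 I (Φ (t, y)) := hΦ.to_localInverse he one_ne_zero
  have hIval : I (Φ (t, y)) = (t, y) := hs.localInverse_apply_image
  have hFc : ContDiffAt ℝ 1 F (I (Φ (t, y))).2 := by rw [hIval]; exact h.contDiffAt hy.1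
  refine ⟨fun q => F (I q).2 - q.1, ?_, ?_, ?_⟩
  · refine ContDiffAt.sub ?_ contDiffAt_fst
    exact ContDiffAt.comp (Φ (t, y)) (g := F) (f := fun q => (I q).2) hFc
      (contDiffAt_snd.comp (Φ (t, y)) hI)
  · have hev : ∀ᶠ p : ℝ × ℝ in 𝓝 (t, y), p.2 ∈ Ioo 0 A ∧ p.1 < F p.2 := by
      have c2 : ContinuousAt (fun p : ℝ × ℝ => F p.2) (t, y) :=
        ContinuousAt.comp (g := F) (f := Prod.snd) (h.hasDeriv y hy.1).continuousAt
          continuousAt_snd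
      exact (continuousAt_snd.eventually (isOpen_Ioo.mem_nhds hy.1)).and
        (continuousAt_fst.eventually_lt c2 hy.2)
    filter_upwards [hs.eventually_right_inverse, hs.localInverse_tendsto.eventually hev]
      with q hq1 hq2 hq0
    have hq1' : ((I q).1, shrink F (I q).1 (I q).2) = q := hq1
    have e1 : (I q).1 = q.1 := (Prod.ext_iff.1 hq1').1
    have e2 : shrink F (I q).1 (I q).2 = q.2 := (Prod.ext_iff.1 hq1').2
    change (I q).2 ∈ Ioo 0 A ∧ (I q).1 < F (I q).2 at hq2
    rw [e1] at e2 hq2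
    rw [← e2]
    exact hΨ q.1 ⟨hq0, hq2.2.trans (h.lt_one hq2.1)⟩ _ hq2
  · filter_upwards [hs.eventually_left_inverse] with p hp
    have : I (p.1, shrink F p.1 p.2) = p := hp
    simp [this]

end IsRegularCdf

/-! ### Regularity of the level function and its differential equation -/

namespace IsRegularCdf

variable {A : ℝ} {f F : ℝ → ℝ}

/-- Both partial derivatives of `Ψ` come from differentiating `Ψ τ (shrink F τ z) = F z - τ`,
once in `z` and once in `τ`. -/
lemma hasDeriv_level (h : IsRegularCdf A f F) {Ψ : ℝ → ℝ → ℝ}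
    (hΨ : ∀ τ ∈ Ico (0 : ℝ) 1, ∀ z ∈ quantDom A F τ, Ψ τ (shrink F τ z) = F z - τ)
    {t y : ℝ} (ht : t ∈ Ico (0 : ℝ) 1) (hy : y ∈ quantDom A F t) :
    HasDerivAt (Ψ t) (f y / shrinkDeriv f F t y) (shrink F t y) ∧
    HasDerivWithinAt (fun τ => Ψ τ (shrink F t y))
      (y / F y * (f y / shrinkDeriv f F t y) - 1) (Ico 0 1) t := by
  obtain ⟨H, hH, hΨH, hHF⟩ := h.exists_local ht.1 hy hΨ
  have hL := (hH.differentiableAt one_ne_zero).hasFDerivAt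
  set L := fderiv ℝ H (t, shrink F t y) with hLdef
  have hsplit : ∀ a b : ℝ, L (a, b) = a * L (1, 0) + b * L (0, 1) := fun a b => by
    have : ((a, b) : ℝ × ℝ) = a • (1, 0) + b • (0, 1) := by simp
    rw [this, map_add, map_smul, map_smul, smul_eq_mul, smul_eq_mul]
  have hd := (h.shrinkDeriv_pos ht.1 hy).ne'
  have hb : L (0, 1) = f y / shrinkDeriv f F t y := by
    have h1 : HasDerivAt (fun z => ((t, shrink F t z) : ℝ × ℝ)) (0, shrinkDeriv f F t y) y :=
      (hasDerivAt_const y t).prodMk (h.hasDerivAt_shrink hy.1)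
    have h2 : HasDerivAt (fun z => H (t, shrink F t z)) (L (0, shrinkDeriv f F t y)) y :=
      HasFDerivAt.comp_hasDerivAt (l := H) (f := fun z => ((t, shrink F t z) : ℝ × ℝ)) y hL h1
    have h3 : (fun z => H (t, shrink F t z)) =ᶠ[𝓝 y] fun z => F z - t :=
      (by fun_prop : Continuous fun z : ℝ => ((t, z) : ℝ × ℝ)).continuousAt.eventually hHF
    have h4 := (h2.congr_of_eventuallyEq h3.symm).unique ((h.hasDeriv y hy.1).sub_const t)
    rw [hsplit] at h4
    field_simp
    linarith
  have ha : L (1, 0) = y / F y * L (0, 1) - 1 := by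
    have h0 : HasDerivAt (fun τ => shrink F τ y) (-(1 / F y) * y) t := by
      unfold shrink
      exact (((hasDerivAt_id t).div_const (F y)).const_sub 1).mul_const y
    have h1 : HasDerivAt (fun τ => ((τ, shrink F τ y) : ℝ × ℝ)) (1, -(1 / F y) * y) t :=
      (hasDerivAt_id t).prodMk h0
    have h2 : HasDerivAt (fun τ => H (τ, shrink F τ y)) (L (1, -(1 / F y) * y)) t :=
      HasFDerivAt.comp_hasDerivAt (l := H) (f := fun τ => ((τ, shrink F τ y) : ℝ × ℝ)) t hL h1
    have h3 : (fun τ => H (τ, shrink F τ y)) =ᶠ[𝓝 t] fun τ => F y - τ :=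
      (by fun_prop : Continuous fun τ : ℝ => ((τ, y) : ℝ × ℝ)).continuousAt.eventually hHF
    have h4 := (h2.congr_of_eventuallyEq h3.symm).unique ((hasDerivAt_id t).const_sub (F y))
    rw [hsplit] at h4
    linear_combination h4
  constructor
  · rw [← hb]
    have h1 : HasDerivAt (fun x => ((t, x) : ℝ × ℝ)) (0, 1) (shrink F t y) :=
      (hasDerivAt_const _ t).prodMk (hasDerivAt_id _)
    have h2 := HasFDerivAt.comp_hasDerivAt (l := H) (f := fun x => ((t, x) : ℝ × ℝ))
      (shrink F t y) hL h1
    refine h2.congr_of_eventuallyEq ?_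
    filter_upwards [(by fun_prop : Continuous fun x : ℝ =>
      ((t, x) : ℝ × ℝ)).continuousAt.eventually hΨH] with x hx using hx ht.1
  · rw [← hb, ← ha]
    have h1 : HasDerivAt (fun τ => ((τ, shrink F t y) : ℝ × ℝ)) (1, 0) t :=
      (hasDerivAt_id t).prodMk (hasDerivAt_const _ _)
    have h2 := HasFDerivAt.comp_hasDerivAt (l := H) (f := fun τ => ((τ, shrink F t y) : ℝ × ℝ))
      t hL h1
    refine h2.hasDerivWithinAt.congr_of_eventuallyEq_of_mem ?_ ht
    filter_upwards [self_mem_nhdsWithin, mem_nhdsWithin_of_mem_nhds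
      ((by fun_prop : Continuous fun τ : ℝ =>
        ((τ, shrink F t y) : ℝ × ℝ)).continuousAt.eventually hΨH)] with τ hτ hx using hx hτ.1

lemma contDiffOn_level (h : IsRegularCdf A f F) {Ψ : ℝ → ℝ → ℝ}
    (hΨ : ∀ τ ∈ Ico (0 : ℝ) 1, ∀ z ∈ quantDom A F τ, Ψ τ (shrink F τ z) = F z - τ) :
    ContDiffOn ℝ 1 (fun p : ℝ × ℝ => Ψ p.1 p.2)
      {p : ℝ × ℝ | p.1 ∈ Ico (0 : ℝ) 1 ∧ p.2 ∈ Ioo 0 (A * (1 - p.1))} := by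
  rintro ⟨t, x⟩ ⟨ht, hx⟩
  simp only at ht hx
  obtain ⟨y, hy, rfl⟩ := h.exists_shrink_eq ht hx
  obtain ⟨H, hH, hΨH, -⟩ := h.exists_local ht.1 hy hΨ
  refine hH.contDiffWithinAt.congr_of_eventuallyEq_of_mem ?_ ⟨ht, hx⟩
  filter_upwards [self_mem_nhdsWithin, mem_nhdsWithin_of_mem_nhds hΨH] with q hq hx using hx hq.1.1

/-! ### The law of the transported variable -/

variable {q : ℝ → ℝ}

lemma exists_quantDom (h : IsRegularCdf A f F) (hq : ∀ y ∈ Ioo 0 A, q (F y) = y) {t v : ℝ}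
    (ht : 0 ≤ t) (hv : v ∈ Ioo t 1) :
    ∃ y ∈ quantDom A F t, F y = v ∧ (1 - t / v) * q v = shrink F t y := by
  obtain ⟨y, hy, rfl⟩ := h.exists_quantile ⟨ht.trans_lt hv.1, hv.2⟩
  exact ⟨y, ⟨hy, hv.1⟩, rfl, by rw [hq y hy]; rfl⟩

lemma transport_strictMonoOn (h : IsRegularCdf A f F) (hq : ∀ y ∈ Ioo 0 A, q (F y) = y) {t : ℝ}
    (ht : 0 ≤ t) : StrictMonoOn (fun v => (1 - t / v) * q v) (Ioo t 1) := by
  intro v hv w hw hvw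
  obtain ⟨y, hy, rfl, hy2⟩ := h.exists_quantDom hq ht hv
  obtain ⟨z, hz, rfl, hz2⟩ := h.exists_quantDom hq ht hw
  simp only
  rw [hy2, hz2]
  refine h.shrink_strictMonoOn ht hy hz ?_
  exact (h.strictMonoOn.lt_iff_lt (Ioo_subset_Icc_self hy.1) (Ioo_subset_Icc_self hz.1)).1 hvw

lemma transport_aemeasurable (h : IsRegularCdf A f F) (hq : ∀ y ∈ Ioo 0 A, q (F y) = y) {t : ℝ}
    (ht : 0 ≤ t) :
    AEMeasurable (fun v => (1 - t / v) * q v) (volume.restrict (Ioo t 1)) :=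
  aemeasurable_restrict_of_monotoneOn measurableSet_Ioo (h.transport_strictMonoOn hq ht).monotoneOn

lemma map_transport_apply (h : IsRegularCdf A f F) (hq : ∀ y ∈ Ioo 0 A, q (F y) = y) {t : ℝ}
    (ht : 0 ≤ t) {B : Set ℝ} (hB : MeasurableSet B) :
    (volume.restrict (Ioo t 1)).map (fun v => (1 - t / v) * q v) B
      = volume ({v | (1 - t / v) * q v ∈ B} ∩ Ioo t 1) := by
  rw [Measure.map_apply_of_aemeasurable (h.transport_aemeasurable hq ht) hB,
    Measure.restrict_apply' measurableSet_Ioo]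
  rfl

lemma map_transport_shrink (h : IsRegularCdf A f F) (hq : ∀ y ∈ Ioo 0 A, q (F y) = y) {t y : ℝ}
    (ht : 0 ≤ t) (hy : y ∈ quantDom A F t) :
    ((volume.restrict (Ioo t 1)).map (fun v => (1 - t / v) * q v) (Icc 0 (shrink F t y))).toReal
      = F y - t := by
  rw [h.map_transport_apply hq ht measurableSet_Icc]
  have : {v | (1 - t / v) * q v ∈ Icc 0 (shrink F t y)} ∩ Ioo t 1 = Ioc t (F y) := by
    ext v
    constructor
    · rintro ⟨hv1, hv⟩
      refine ⟨hv.1, ?_⟩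
      obtain ⟨z, hz, rfl, hz2⟩ := h.exists_quantDom hq ht hv
      rw [mem_ofPred_eq, hz2] at hv1
      exact h.strictMonoOn.monotoneOn (Ioo_subset_Icc_self hz.1) (Ioo_subset_Icc_self hy.1)
        (((h.shrink_strictMonoOn ht).le_iff_le hz hy).1 hv1.2)
    · intro hv
      have hv' : v ∈ Ioo t 1 := ⟨hv.1, hv.2.trans_lt (h.lt_one hy.1)⟩
      refine ⟨?_, hv'⟩
      obtain ⟨z, hz, rfl, hz2⟩ := h.exists_quantDom hq ht hv'
      rw [mem_ofPred_eq, hz2]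
      refine ⟨(h.shrink_mem ht hz).1.le, ((h.shrink_strictMonoOn ht).le_iff_le hz hy).2 ?_⟩
      exact (h.strictMonoOn.le_iff_le (Ioo_subset_Icc_self hz.1) (Ioo_subset_Icc_self hy.1)).1 hv.2
  rw [this, Real.volume_Ioc, ENNReal.toReal_ofReal (by linarith [hy.2])]

lemma map_transport_compl (h : IsRegularCdf A f F) (hq : ∀ y ∈ Ioo 0 A, q (F y) = y) {t : ℝ}
    (ht : 0 ≤ t) :
    (volume.restrict (Ioo t 1)).map (fun v => (1 - t / v) * q v) (Icc 0 (A * (1 - t)))ᶜ = 0 := by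
  rw [h.map_transport_apply hq ht measurableSet_Icc.compl]
  convert measure_empty (μ := (volume : Measure ℝ))
  rw [eq_empty_iff_forall_notMem]
  rintro v ⟨hv1, hv⟩
  obtain ⟨z, hz, rfl, hz2⟩ := h.exists_quantDom hq ht hv
  rw [mem_ofPred_eq, hz2] at hv1
  exact hv1 (Ioo_subset_Icc_self (h.shrink_mem ht hz))

/-- The change of variables `x ↦ Ψ t x = v - t`, which inverts the transport map `v ↦ x` up to a
translation by `t`. -/
lemma map_transport_eq_withDensity (h : IsRegularCdf A f F) (hq : ∀ y ∈ Ioo 0 A, q (F y) = y)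
    {Ψ : ℝ → ℝ → ℝ}
    (hΨ : ∀ τ ∈ Ico (0 : ℝ) 1, ∀ z ∈ quantDom A F τ, Ψ τ (shrink F τ z) = F z - τ)
    {t : ℝ} (ht : t ∈ Ico (0 : ℝ) 1) :
    (volume.restrict (Ioo t 1)).map (fun v => (1 - t / v) * q v) = volume.withDensity
      (fun x => ENNReal.ofReal ((Ioo 0 (A * (1 - t))).indicator (fun y => deriv (Ψ t) y) x)) := by
  set J := Ioo 0 (A * (1 - t)) with hJ
  ext B hB
  rw [h.map_transport_apply hq ht.1 hB, withDensity_apply _ hB]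
  have hind : (fun x => ENNReal.ofReal (J.indicator (fun y => deriv (Ψ t) y) x))
      = J.indicator (fun x => ENNReal.ofReal (deriv (Ψ t) x)) := by
    ext x
    by_cases hx : x ∈ J <;> simp [hx]
  have hJB : MeasurableSet (J ∩ B) := measurableSet_Ioo.inter hB
  rw [hind, setLIntegral_indicator measurableSet_Ioo]
  have hder : ∀ x ∈ J, HasDerivAt (Ψ t) (deriv (Ψ t) x) x ∧ 0 < deriv (Ψ t) x := by
    intro x hx
    obtain ⟨y, hy, rfl⟩ := h.exists_shrink_eq ht hx
    have := (h.hasDeriv_level hΨ ht hy).1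
    refine ⟨this.differentiableAt.hasDerivAt, ?_⟩
    rw [this.deriv]
    exact div_pos (h.dens_pos y hy.1) (h.shrinkDeriv_pos ht.1 hy)
  have hinj : InjOn (Ψ t) (J ∩ B) := by
    rintro x ⟨hx, -⟩ x' ⟨hx', -⟩ he
    obtain ⟨y, hy, rfl⟩ := h.exists_shrink_eq ht hx
    obtain ⟨z, hz, rfl⟩ := h.exists_shrink_eq ht hx'
    rw [hΨ t ht y hy, hΨ t ht z hz] at he
    rw [h.strictMonoOn.injOn (Ioo_subset_Icc_self hy.1) (Ioo_subset_Icc_self hz.1)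
      (by linarith : F y = F z)]
  have key := lintegral_image_eq_lintegral_abs_deriv_mul hJB
    (fun x hx => (hder x hx.1).1.hasDerivWithinAt) hinj (fun _ => 1)
  have hset : {v | (1 - t / v) * q v ∈ B} ∩ Ioo t 1 = (fun s => s + -t) ⁻¹' (Ψ t '' (J ∩ B)) := by
    ext v
    constructor
    · rintro ⟨hv1, hv⟩
      obtain ⟨z, hz, rfl, hz2⟩ := h.exists_quantDom hq ht.1 hv
      rw [mem_ofPred_eq, hz2] at hv1
      exact ⟨_, ⟨h.shrink_mem ht.1 hz, hv1⟩, by rw [hΨ t ht z hz]; ring⟩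
    · rintro ⟨x, ⟨hx, hxB⟩, he⟩
      obtain ⟨y, hy, rfl⟩ := h.exists_shrink_eq ht hx
      rw [hΨ t ht y hy] at he
      have hv : v = F y := by simp only at he; linarith
      subst hv
      refine ⟨?_, hy.2, h.lt_one hy.1⟩
      rw [mem_ofPred_eq, hq y hy.1]
      exact hxB
  rw [hset, measure_preimage_add_right, ← setLIntegral_one, key]
  refine setLIntegral_congr_fun hJB fun x hx => ?_
  simp only [mul_one]
  rw [abs_of_pos (hder x hx.1).2]

/-- The distribution function of `μ` is the primitive of the constant `1` against `μ`; the support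
hypothesis handles `x < 0`, where `Icc 0 x` is empty. -/
lemma continuous_level {μ : Measure ℝ} [IsFiniteMeasure μ] [NullSingletonClass μ] {c : ℝ}
    (hμ : μ (Icc 0 c)ᶜ = 0) : Continuous fun x => (μ (Icc 0 x)).toReal := by
  have h1 := intervalIntegral.continuous_primitive (μ := μ) (f := fun _ => (1 : ℝ))
    (fun a b => intervalIntegrable_const) 0
  refine h1.congr fun x => ?_
  rcases le_or_gt 0 x with hx | hx
  · rw [intervalIntegral.integral_of_le hx, setIntegral_const]
    simp [Measure.real, measure_congr (Ioc_ae_eq_Icc (μ := μ) (a := 0) (b := x))]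
  · rw [intervalIntegral.integral_of_ge hx.le, setIntegral_const]
    have h2 : μ (Ioc x 0) = 0 := by
      rw [← measure_congr (Ioo_ae_eq_Ioc (μ := μ) (a := x) (b := 0))]
      refine measure_mono_null ?_ hμ
      intro z hz hz'
      exact absurd hz.2 (not_lt.2 hz'.1)
    simp [Measure.real, h2, hx]

end IsRegularCdf

/-! ### The distribution function of the initial measure -/

/-- The distribution function `F` of `ν₀` is regular, and the quantile function inverts it. -/
lemma exists_isRegularCdf {A : ℝ} (hA : 0 < A) {ν0 : Measure ℝ} [IsProbabilityMeasure ν0]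
    {f : ℝ → ℝ} (hν0 : ν0 = volume.withDensity (fun x => ENNReal.ofReal (f x)))
    (hfsupp : ∀ x, x ∉ Icc 0 A → f x = 0) (hfcont : ContinuousOn f (Ioo 0 A))
    (hfpos : ∀ x ∈ Ioo 0 A, 0 < f x) :
    ∃ F : ℝ → ℝ, IsRegularCdf A f F ∧ ∀ y ∈ Ioo 0 A, quantileFn ν0 (F y) = y := by
  -- `f` may be negative at the two endpoints, so it is replaced by its restriction to `(0, A)`.
  set g : ℝ → ℝ := (Ioo 0 A).indicator f with hg
  have hg0 : ∀ x, 0 ≤ g x := fun x => indicator_nonneg (fun x hx => (hfpos x hx).le) x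
  have hgm : Measurable g := by
    classical
    rw [hg, ← piecewise_eq_indicator]
    exact hfcont.measurable_piecewise continuousOn_const measurableSet_Ioo
  have hfg : f =ᵐ[volume] g := by
    have : ∀ᵐ x : ℝ, x ≠ 0 ∧ x ≠ A :=
      (Measure.ae_ne volume 0).and (Measure.ae_ne volume A)
    filter_upwards [this] with x hx
    by_cases h : x ∈ Ioo 0 A
    · simp [hg, h]
    · rw [hg, indicator_of_notMem h]
      refine hfsupp x fun h' => h ⟨lt_of_le_of_ne h'.1 hx.1.symm, lt_of_le_of_ne h'.2 hx.2⟩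
  have hνg : ν0 = volume.withDensity (fun x => ENNReal.ofReal (g x)) := by
    rw [hν0]
    refine withDensity_congr_ae ?_
    filter_upwards [hfg] with x hx using by rw [hx]
  have hgi : Integrable g := by
    refine ⟨hgm.aestronglyMeasurable, ?_⟩
    rw [hasFiniteIntegral_iff_ofReal (ae_of_all _ hg0), ← setLIntegral_univ,
      ← withDensity_apply _ MeasurableSet.univ, ← hνg]
    exact measure_lt_top _ _
  have hFν : ∀ y, 0 ≤ y → ν0 (Icc 0 y) = ENNReal.ofReal (∫ x in (0 : ℝ)..y, g x) := by
    intro y hy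
    rw [intervalIntegral.integral_of_le hy, ← integral_Icc_eq_integral_Ioc,
      ofReal_integral_eq_lintegral_ofReal hgi.integrableOn (ae_of_all _ hg0), hνg,
      withDensity_apply _ measurableSet_Icc]
  have hreg : IsRegularCdf A f (fun y => ∫ x in (0 : ℝ)..y, g x) := by
    refine ⟨hA, by simp, ?_, ?_, ?_, hfcont, hfpos⟩
    · have h1 : ν0 (Icc 0 A) = 1 := by
        rw [prob_compl_eq_zero_iff measurableSet_Icc |>.symm, hνg,
          withDensity_apply _ measurableSet_Icc.compl]
        rw [setLIntegral_congr_fun measurableSet_Icc.compl (g := fun _ => 0)]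
        · simp
        · intro x hx
          have : x ∉ Ioo 0 A := fun h => hx (Ioo_subset_Icc_self h)
          simp [hg, indicator_of_notMem this]
      rw [hFν A hA.le] at h1
      simpa using h1
    · exact (intervalIntegral.continuous_primitive
        (fun a b => hgi.intervalIntegrable) 0).continuousOn
    · intro y hy
      have hgy : g y = f y := indicator_of_mem hy f
      have hc : ContinuousAt g y := by
        refine (hfcont.continuousAt (isOpen_Ioo.mem_nhds hy)).congr ?_
        filter_upwards [isOpen_Ioo.mem_nhds hy] with z hz using (indicator_of_mem hz f).symm
      rw [← hgy]
      exact intervalIntegral.integral_hasDerivAt_right hgi.intervalIntegrable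
        hgm.stronglyMeasurable.stronglyMeasurableAtFilter hc
  refine ⟨_, hreg, fun y hy => ?_⟩
  set F := fun y => ∫ x in (0 : ℝ)..y, g x with hF
  have hset : {z : ℝ | 0 ≤ z ∧ ENNReal.ofReal (F y) ≤ ν0 (Icc 0 z)} = Ici y := by
    ext z
    have hmono : ∀ {a b : ℝ}, 0 ≤ a → a ≤ b → F a ≤ F b := fun {a b} ha hab => by
      have h1 : ν0 (Icc 0 a) ≤ ν0 (Icc 0 b) := measure_mono (Icc_subset_Icc_right hab)
      rw [hFν a ha, hFν b (ha.trans hab)] at h1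
      refine (ENNReal.ofReal_le_ofReal_iff ?_).1 h1
      exact intervalIntegral.integral_nonneg (ha.trans hab) fun x _ => hg0 x
    constructor
    · rintro ⟨hz0, hz⟩
      rw [hFν z hz0] at hz
      by_contra hlt
      have hlt : z < y := not_le.1 hlt
      have h1 := hreg.strictMonoOn ⟨hz0, (hlt.trans hy.2).le⟩ (Ioo_subset_Icc_self hy) hlt
      exact absurd hz (not_le.2 ((ENNReal.ofReal_lt_ofReal_iff (hreg.pos hy)).2 h1))
    · intro hz
      have hz : y ≤ z := hz
      have hz0 := hy.1.le.trans hz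
      exact ⟨hz0, by rw [hFν z hz0]; exact ENNReal.ofReal_le_ofReal (hmono hy.1.le hz)⟩
  unfold quantileFn
  rw [hset, csInf_Ici]

/-- Let `ν₀` be a probability measure on `[0,∞)`, absolutely continuous
with Lebesgue density `f` supported on `[0,A]`, `f` continuous and strictly positive on
`(0,A)`. For `t ∈ [0,1)` let `ν_t` be the law of `(1 - t/V_t)·q_{ν₀}(V_t)`, `V_t`
uniform on `[t,1]`, and let `Ψ_t` be the distribution function of `(1-t)·ν_t`, with
`ψ(·,t) := deriv Ψ_t`. Then for all `t ∈ [0,1)`: `(1-t)·ν_t` is supported on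
`[0, A(1-t)]`; `Ψ_t` is continuous, differentiable with strictly positive derivative on
`(0, A(1-t))`, and `ψ(·,t)` is a Lebesgue density of `(1-t)·ν_t`; the map
`(t,x) ↦ Ψ_t(x)` is continuously differentiable on
`S = {(t,x) : t ∈ [0,1), 0 < x < A(1-t)}`; and on `S` the PDE
`∂Ψ_t(x)/∂t = x·(∂Ψ_t(x)/∂x)/Ψ_t(x) - 1` holds (the `t`-derivative being taken within
`[0,1)`). -/
theorem stmt15 (A : ℝ) (hA : 0 < A)
    (ν0 : Measure ℝ) [IsProbabilityMeasure ν0]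
    (f : ℝ → ℝ)
    (hν0 : ν0 = MeasureTheory.volume.withDensity (fun x => ENNReal.ofReal (f x)))
    (hfsupp : ∀ x, x ∉ Set.Icc 0 A → f x = 0)
    (hfcont : ContinuousOn f (Set.Ioo 0 A))
    (hfpos : ∀ x ∈ Set.Ioo 0 A, 0 < f x)
    (ν : ℝ → Measure ℝ)
    (hν : ∀ t : ℝ, ν t = Measure.map (fun v => (1 - t / v) * quantileFn ν0 v) (unifOn t 1))
    (Ψ : ℝ → ℝ → ℝ)
    (hΨ : ∀ t x : ℝ, Ψ t x = ((ENNReal.ofReal (1 - t) • ν t) (Set.Icc 0 x)).toReal) :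
    (∀ t ∈ Set.Ico (0 : ℝ) 1,
      (ENNReal.ofReal (1 - t) • ν t) (Set.Icc 0 (A * (1 - t)))ᶜ = 0 ∧
      Continuous (Ψ t) ∧
      (∀ x ∈ Set.Ioo 0 (A * (1 - t)),
        DifferentiableAt ℝ (Ψ t) x ∧ 0 < deriv (Ψ t) x) ∧
      (ENNReal.ofReal (1 - t) • ν t
        = MeasureTheory.volume.withDensity
            (fun x => ENNReal.ofReal
              ((Set.Ioo 0 (A * (1 - t))).indicator (fun y => deriv (Ψ t) y) x))))
    ∧
    ContDiffOn ℝ 1 (fun p : ℝ × ℝ => Ψ p.1 p.2)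
      {p : ℝ × ℝ | p.1 ∈ Set.Ico (0 : ℝ) 1 ∧ p.2 ∈ Set.Ioo 0 (A * (1 - p.1))}
    ∧
    (∀ t x : ℝ, t ∈ Set.Ico (0 : ℝ) 1 → x ∈ Set.Ioo 0 (A * (1 - t)) →
      derivWithin (fun τ => Ψ τ x) (Set.Ico (0 : ℝ) 1) t
        = x * deriv (Ψ t) x / Ψ t x - 1) := by
  obtain ⟨F, h, hq⟩ := exists_isRegularCdf hA hν0 hfsupp hfcont hfpos
  have hμ : ∀ t ∈ Ico (0 : ℝ) 1, ENNReal.ofReal (1 - t) • ν t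
      = (volume.restrict (Ioo t 1)).map (fun v => (1 - t / v) * quantileFn ν0 v) := by
    intro t ht
    have h0 : 0 < 1 - t := by linarith [ht.2]
    rw [hν, unifOn, Measure.map_smul, smul_smul,
      ENNReal.mul_inv_cancel (by simpa using h0) ENNReal.ofReal_ne_top, one_smul,
      Measure.restrict_congr_set Ioo_ae_eq_Icc]
  have hlev : ∀ t ∈ Ico (0 : ℝ) 1, ∀ y ∈ quantDom A F t, Ψ t (shrink F t y) = F y - t := by
    intro t ht y hy
    rw [hΨ, hμ t ht, h.map_transport_shrink hq ht.1 hy]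
  refine ⟨fun t ht => ⟨?_, ?_, ?_, ?_⟩, h.contDiffOn_level hlev, ?_⟩
  · rw [hμ t ht, h.map_transport_compl hq ht.1]
  · have hfun : Ψ t = fun x => ((ENNReal.ofReal (1 - t) • ν t) (Icc 0 x)).toReal := by
      ext x; exact hΨ t x
    rw [hfun, hμ t ht]
    have hsupp := h.map_transport_compl hq ht.1
    have hdens := h.map_transport_eq_withDensity hq hlev ht
    set μ := (volume.restrict (Ioo t 1)).map (fun v => (1 - t / v) * quantileFn ν0 v) with hμdef
    have : NullSingletonClass μ := by rw [hdens]; infer_instance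
    have : IsFiniteMeasure μ := by rw [hμdef]; infer_instance
    exact IsRegularCdf.continuous_level hsupp
  · intro x hx
    obtain ⟨y, hy, rfl⟩ := h.exists_shrink_eq ht hx
    have hd := (h.hasDeriv_level hlev ht hy).1
    refine ⟨hd.differentiableAt, ?_⟩
    rw [hd.deriv]
    exact div_pos (h.dens_pos y hy.1) (h.shrinkDeriv_pos ht.1 hy)
  · rw [hμ t ht, h.map_transport_eq_withDensity hq hlev ht]
  · intro t x ht hx
    obtain ⟨y, hy, rfl⟩ := h.exists_shrink_eq ht hx
    obtain ⟨hd, hdt⟩ := h.hasDeriv_level hlev ht hy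
    have hu : UniqueDiffWithinAt ℝ (Ico (0 : ℝ) 1) t := uniqueDiffOn_Ico 0 1 t ht
    rw [hdt.derivWithin hu, hd.deriv, hlev t ht y hy]
    have hF : F y ≠ 0 := ne_of_gt (h.pos hy.1)
    have hFt : F y - t ≠ 0 := ne_of_gt (sub_pos.2 hy.2)
    -- `x / Ψ t x = y / F y`, since `x = y (F y - t) / F y` and `Ψ t x = F y - t`.
    have hratio : shrink F t y / (F y - t) = y / F y := by
      unfold shrink
      field_simp
    rw [mul_div_right_comm, hratio]
end

section
/- Let A > 0 and let ν_0 be a probability measure on [0, ∞), absolutely continuous with respect to Lebesgue measure, supported on [0, A], with a density that is strictly positive and continuously differentiable on (0, A). For t ∈ [0,1), let ν_t be the law of (1 − t/V_t)·q_{ν_0}(V_t), where V_t is uniformly distributed on [t, 1], and let ψ(·, t) be the Lebesgue density of (1−t)·ν_t on (0, A(1−t)). Then ψ is continuously differentiable as a function of the two variables (x, t) on the set {(t, x) : t ∈ [0,1), 0 < x < A(1−t)}, and on this set it satisfies the partial differential equation ∂ψ(x,t)/∂t = ∂/∂x ( ψ(x,t) / ((1/x) ∫_0^x ψ(y,t)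 dy) ). -/
/-!
Let `F` be the distribution function of `ν0`, a `C²` strictly increasing bijection
`(0, A) → (0, 1)` whose inverse is the quantile function. For `t ∈ [0, 1)` the map
`y ↦ (1 - t / F y) * y` is strictly increasing where `F y > t` and takes every value in
`(0, A (1 - t))`. Hence, if `x = (1 - t / F y) * y`, the mass that `(1 - t) • ν t` gives to
`(-∞, x]` is `Φ(t, x) = F y - t` (`law_Iic`).

The relation between `x` and `y` reads `(F y - t) * y = x * F y`. Its `y`-derivative
`f y * (y - x) + (F y - t)` is positive, so `y` is locally a `C²` function of `(t, x)`
(`exists_implicit`), and so is `Φ`, even across the boundary `t = 0`. Differentiating the relation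
in both variables gives `∂ₓΦ > 0` and `∂ₜΦ = x ∂ₓΦ / Φ - 1` (`exists_local_mass`).

Since `ψ` is only a signed representative of the density, the fundamental theorem of calculus gives
`∂ₓΦ = max ψ 0`; positivity of `∂ₓΦ` then forces `ψ = ∂ₓΦ`, which is `C¹`
(`exists_local_density`). Differentiating `∂ₜΦ = x ψ / Φ - 1` in `x` and exchanging the mixed second
derivatives of `Φ` (`fderiv_slice_comm`) yields the equation.
-/

open MeasureTheory Set

open Filter Topology

/-! ### Distribution functions, quantiles and the law at time `t` -/

/-- The distribution function of a finite measure with density `g` on `(0, B)`, `g` continuous there.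
The sign of `g` is not prescribed, so `max g 0` is the actual density. -/
lemma cdf_of_density (μ : Measure ℝ) [IsFiniteMeasure μ] (B : ℝ) (g : ℝ → ℝ)
    (hg : ContinuousOn g (Ioo 0 B))
    (hμ : μ = volume.withDensity (fun x => ENNReal.ofReal ((Ioo 0 B).indicator g x))) :
    Continuous (fun x => μ.real (Iic x)) ∧ μ.real (Iic 0) = 0 ∧
    (∀ x, B ≤ x → μ.real (Iic x) = μ.real univ) ∧
    (∀ x ∈ Ioo 0 B, μ.real (Iic x) = ∫ z in (0 : ℝ)..x, max (g z) 0) ∧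
    (∀ x ∈ Ioo 0 B, HasDerivAt (fun x => μ.real (Iic x)) (max (g x) 0) x) := by
  set k : ℝ → ℝ := (Ioo 0 B).indicator (fun z => max (g z) 0) with hk
  have hcont : ContinuousOn (fun z => max (g z) 0) (Ioo 0 B) := hg.sup continuousOn_const
  have hk0 : ∀ x, 0 ≤ k x := fun x => indicator_nonneg (fun z _ => le_max_right _ _) x
  have hkm : AEStronglyMeasurable k volume :=
    (aestronglyMeasurable_indicator_iff measurableSet_Ioo).2
      (hcont.aestronglyMeasurable measurableSet_Ioo)
  have hμk : μ = volume.withDensity (fun x => ENNReal.ofReal (k x)) := by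
    rw [hμ]; congr 1; ext x
    by_cases hx : x ∈ Ioo 0 B
    · simp [hk, hx, ENNReal.ofReal_max]
    · simp [hk, hx]
  have hki : Integrable k := by
    refine ⟨hkm, ?_⟩
    rw [hasFiniteIntegral_iff_ofReal (ae_of_all _ hk0)]
    have : μ univ < ⊤ := measure_lt_top _ _
    rw [hμk] at this
    simpa [withDensity_apply] using this
  have hreal : ∀ s, MeasurableSet s → μ.real s = ∫ z in s, k z := by
    intro s hs
    rw [integral_eq_lintegral_of_nonneg_ae (ae_of_all _ hk0) hkm.restrict, measureReal_def, hμk,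
      withDensity_apply _ hs]
  have h0 : μ.real (Iic 0) = 0 := by
    rw [hreal _ measurableSet_Iic]
    refine setIntegral_eq_zero_of_forall_eq_zero fun x hx => ?_
    simp [hk, not_lt.2 (mem_Iic.1 hx)]
  have hprim : ∀ x, μ.real (Iic x) = ∫ z in (0 : ℝ)..x, k z := by
    intro x
    rw [← intervalIntegral.integral_Iic_sub_Iic hki.integrableOn hki.integrableOn,
      ← hreal _ measurableSet_Iic, ← hreal _ measurableSet_Iic, h0, sub_zero]
  refine ⟨?_, h0, ?_, ?_, ?_⟩
  · simp_rw [hprim]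
    exact intervalIntegral.continuous_primitive (fun a b => hki.intervalIntegrable) 0
  · intro x hx
    rw [hreal _ measurableSet_Iic, hreal _ MeasurableSet.univ, setIntegral_univ]
    refine setIntegral_eq_integral_of_forall_compl_eq_zero fun z hz => ?_
    have : ¬ z < B := by simp at hz; linarith
    simp [hk, this]
  · intro x hx
    rw [hprim]
    refine intervalIntegral.integral_congr_ae (ae_of_all _ fun z hz => ?_)
    rw [uIoc_of_le hx.1.le] at hz
    have : z ∈ Ioo 0 B := ⟨hz.1, hz.2.trans_lt hx.2⟩
    simp [hk, this]
  · intro x hx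
    have hca : ContinuousAt k x := by
      refine (hcont.continuousAt (isOpen_Ioo.mem_nhds hx)).congr ?_
      filter_upwards [isOpen_Ioo.mem_nhds hx] with z hz
      simp [hk, hz]
    have := intervalIntegral.integral_hasDerivAt_right (a := 0) (b := x) hki.intervalIntegrable
      (hkm.stronglyMeasurableAtFilter) hca
    rw [show (fun x => μ.real (Iic x)) = _ from funext hprim]
    exact this.congr_deriv (indicator_of_mem hx _)

/-- The quantile function inverts the distribution function where the latter is strictly increasing. -/
lemma quantileFn_cdf (μ : Measure ℝ) [IsFiniteMeasure μ] (A : ℝ)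
    (h0 : μ.real (Iic 0) = 0) (hmono : StrictMonoOn (fun x => μ.real (Iic x)) (Icc 0 A))
    (y : ℝ) (hy : y ∈ Icc 0 A) : quantileFn μ (μ.real (Iic y)) = y := by
  have key : ∀ z, 0 ≤ z → μ (Icc 0 z) = ENNReal.ofReal (μ.real (Iic z)) := by
    intro z hz
    rw [ofReal_measureReal]
    have h00 : μ (Iic 0) = 0 := (measureReal_eq_zero_iff).1 h0
    refine le_antisymm (measure_mono fun a ha => ha.2) ?_
    calc μ (Iic z) ≤ μ (Iic 0 ∪ Icc 0 z) := measure_mono fun a ha => by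
          rcases le_total a 0 with h | h
          · exact Or.inl h
          · exact Or.inr ⟨h, ha⟩
      _ ≤ _ := measure_union_le _ _
      _ = _ := by rw [h00, zero_add]
  have : {z : ℝ | 0 ≤ z ∧ ENNReal.ofReal (μ.real (Iic y)) ≤ μ (Icc 0 z)} = Ici y := by
    ext z
    simp only [mem_ofPred_eq, mem_Ici]
    constructor
    · rintro ⟨hz, h⟩
      rw [key z hz, ENNReal.ofReal_le_ofReal_iff measureReal_nonneg] at h
      by_contra! hzy
      exact absurd (hmono ⟨hz, hzy.le.trans hy.2⟩ hy hzy) (not_lt.2 h)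
    · intro h
      have hz := hy.1.trans h
      refine ⟨hz, ?_⟩
      rw [key z hz]
      exact ENNReal.ofReal_le_ofReal (measureReal_mono (Iic_subset_Iic.2 h))
  rw [quantileFn, this, csInf_Ici]

lemma flow_strictMono {F : ℝ → ℝ} {A t : ℝ} (ht : 0 ≤ t) (hF : StrictMonoOn F (Icc 0 A))
    {z y : ℝ} (hz : z ∈ Ioo 0 A) (hy : y ∈ Ioo 0 A) (htz : t < F z) (hzy : z < y) :
    (1 - t / F z) * z < (1 - t / F y) * y := by
  have hlt := hF (Ioo_subset_Icc_self hz) (Ioo_subset_Icc_self hy) hzy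
  have hFz : 0 < F z := ht.trans_lt htz
  have h1 : 0 < 1 - t / F z := by rw [sub_pos, div_lt_one hFz]; exact htz
  have h2 : t / F y ≤ t / F z := by gcongr
  have := hz.1
  nlinarith

/-- With `F` the distribution function of `μ`, the measure `(1 - t) • ν t` gives mass `F y - t` to
`(-∞, (1 - t / F y) * y]`: up to endpoints, the variable `V_t` lies in `(t, F y]` there. -/
lemma law_Iic (μ : Measure ℝ) [IsProbabilityMeasure μ] (A : ℝ) (hA : 0 < A)
    (hc : Continuous (fun x => μ.real (Iic x)))
    (h0 : μ.real (Iic 0) = 0) (h1 : μ.real (Iic A) = 1)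
    (hmono : StrictMonoOn (fun x => μ.real (Iic x)) (Icc 0 A))
    (t : ℝ) (ht : t ∈ Ico (0 : ℝ) 1) (y : ℝ) (hy : y ∈ Ioo 0 A) (hty : t < μ.real (Iic y)) :
    (ENNReal.ofReal (1 - t) •
      Measure.map (fun v => (1 - t / v) * quantileFn μ v) (unifOn t 1)).real
        (Iic ((1 - t / μ.real (Iic y)) * y)) = μ.real (Iic y) - t := by
  set F : ℝ → ℝ := fun x => μ.real (Iic x) with hF
  have hq : ∀ y ∈ Icc 0 A, quantileFn μ (F y) = y := quantileFn_cdf μ A h0 hmono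
  have hsurj : ∀ v ∈ Ioo (0 : ℝ) 1, ∃ z ∈ Ioo 0 A, F z = v := by
    intro v hv
    have := intermediate_value_Ioo hA.le hc.continuousOn
    rw [show F 0 = 0 from h0, show F A = 1 from h1] at this
    exact this hv
  have hqm : MonotoneOn (quantileFn μ) (Ioo 0 1) := by
    intro a ha b hb hab
    obtain ⟨z, hz, rfl⟩ := hsurj a ha
    obtain ⟨w, hw, rfl⟩ := hsurj b hb
    rw [hq z (Ioo_subset_Icc_self hz), hq w (Ioo_subset_Icc_self hw)]
    exact (hmono.le_iff_le (Ioo_subset_Icc_self hz) (Ioo_subset_Icc_self hw)).1 hab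
  have hres : volume.restrict (Icc t 1) = volume.restrict (Ioo t 1) :=
    (Measure.restrict_congr_set Ioo_ae_eq_Icc).symm
  have hqae : AEMeasurable (quantileFn μ) (volume.restrict (Ioo t 1)) :=
    aemeasurable_restrict_of_monotoneOn measurableSet_Ioo
      (hqm.mono (Ioo_subset_Ioo_left ht.1))
  have hTae : AEMeasurable (fun v => (1 - t / v) * quantileFn μ v) (unifOn t 1) := by
    rw [unifOn, hres]
    refine AEMeasurable.smul_measure (AEMeasurable.mul ?_ hqae) _
    exact (measurable_const.sub (measurable_const.div measurable_id)).aemeasurable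
  have hFy1 : F y < 1 := by
    rw [← h1]
    exact hmono (Ioo_subset_Icc_self hy) ⟨hA.le, le_rfl⟩ hy.2
  have hset : volume.restrict (Ioo t 1)
      ((fun v => (1 - t / v) * quantileFn μ v) ⁻¹' Iic ((1 - t / F y) * y))
      = ENNReal.ofReal (F y - t) := by
    rw [Measure.restrict_apply' measurableSet_Ioo]
    have : (fun v => (1 - t / v) * quantileFn μ v) ⁻¹' Iic ((1 - t / F y) * y) ∩ Ioo t 1
        = Ioc t (F y) := by
      ext v
      simp only [mem_inter_iff, mem_preimage, mem_Iic, mem_Ioo, mem_Ioc]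
      constructor
      · rintro ⟨hle, htv, hv1⟩
        refine ⟨htv, ?_⟩
        obtain ⟨z, hz, rfl⟩ := hsurj v ⟨ht.1.trans_lt htv, hv1⟩
        rw [hq z (Ioo_subset_Icc_self hz)] at hle
        by_contra! hlt
        rw [hmono.lt_iff_lt (Ioo_subset_Icc_self hy) (Ioo_subset_Icc_self hz)] at hlt
        exact absurd hle (not_le.2 (flow_strictMono ht.1 hmono hy hz hty hlt))
      · rintro ⟨htv, hle⟩
        have hv1 := hle.trans_lt hFy1
        refine ⟨?_, htv, hv1⟩
        obtain ⟨z, hz, rfl⟩ := hsurj v ⟨ht.1.trans_lt htv, hv1⟩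
        rw [hq z (Ioo_subset_Icc_self hz)]
        rcases ((hmono.le_iff_le (Ioo_subset_Icc_self hz) (Ioo_subset_Icc_self hy)).1 hle).eq_or_lt
          with h | h
        · rw [h]
        · exact (flow_strictMono ht.1 hmono hz hy htv h).le
    rw [this, Real.volume_Ioc]
  have h1t : 0 < 1 - t := by linarith [ht.2]
  rw [measureReal_def, Measure.smul_apply, Measure.map_apply_of_aemeasurable hTae measurableSet_Iic,
    unifOn, Measure.smul_apply, hres, hset, smul_eq_mul, smul_eq_mul, ← mul_assoc,
    ENNReal.mul_inv_cancel (by simpa using h1t) ENNReal.ofReal_ne_top, one_mul,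
    ENNReal.toReal_ofReal (by linarith)]

/-! ### The cumulative mass as a `C²` function of time and space -/

lemma contDiffOn_two_of_hasDerivAt {F f : ℝ → ℝ} {A : ℝ}
    (hFd : ∀ y ∈ Ioo 0 A, HasDerivAt F (f y) y) (hf : ContDiffOn ℝ 1 f (Ioo 0 A)) :
    ContDiffOn ℝ 2 F (Ioo 0 A) := by
  rw [show (2 : WithTop ℕ∞) = 1 + 1 by norm_num, contDiffOn_succ_iff_deriv_of_isOpen isOpen_Ioo]
  exact ⟨fun y hy => (hFd y hy).differentiableAt.differentiableWithinAt, by simp,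
    hf.congr fun y hy => (hFd y hy).deriv⟩

/-- The equation `(F y - t) * y = x * F y`, a form of `x = (1 - t / F y) * y` free of division, can
be solved locally for `y` as a `C²` function of `(t, x)`. The solution is defined in a full
neighbourhood, including negative times if `t = 0`. -/
lemma exists_implicit {F f : ℝ → ℝ} {A : ℝ}
    (hFd : ∀ y ∈ Ioo 0 A, HasDerivAt F (f y) y) (hf : ContDiffOn ℝ 1 f (Ioo 0 A))
    (hfpos : ∀ y ∈ Ioo 0 A, 0 < f y)
    {t x y : ℝ} (ht : 0 ≤ t) (hy : y ∈ Ioo 0 A) (hty : t < F y)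
    (hx : (F y - t) * y = x * F y) :
    ∃ Y : ℝ × ℝ → ℝ, ContDiffAt ℝ 2 Y (t, x) ∧ Y (t, x) = y ∧
      ∀ᶠ p in 𝓝 (t, x), (F (Y p) - p.1) * Y p = p.2 * F (Y p) := by
  have hF2 := contDiffOn_two_of_hasDerivAt hFd hf
  have hF2y : ContDiffAt ℝ 2 F y := hF2.contDiffAt (isOpen_Ioo.mem_nhds hy)
  set G : (ℝ × ℝ) × ℝ → ℝ := fun u => (F u.2 - u.1.1) * u.2 - u.1.2 * F u.2 with hG
  set u : (ℝ × ℝ) × ℝ := ((t, x), y) with hu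
  have hFu : ContDiffAt ℝ 2 (fun u : (ℝ × ℝ) × ℝ => F u.2) u :=
    ContDiffAt.comp u (g := F) (f := Prod.snd) hF2y contDiffAt_snd
  have hGc : ContDiffAt ℝ 2 G u := by
    refine ((hFu.sub ?_).mul ?_).sub (ContDiffAt.mul ?_ hFu) <;> fun_prop
  set D : ℝ := f y * (y - x) + (F y - t) with hD
  have hFy : 0 < F y := ht.trans_lt hty
  have hDpos : 0 < D := by
    have : 0 ≤ y - x := by
      have : (y - x) * F y = t * y := by linarith
      have h2 : 0 ≤ (y - x) * F y := this ▸ mul_nonneg ht hy.1.le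
      exact nonneg_of_mul_nonneg_left h2 hFy
    have := mul_nonneg (hfpos y hy).le this
    rw [hD]; linarith
  have hpartial : (fderiv ℝ G u) (0, 1) = D := by
    have h1 : HasDerivAt (fun s : ℝ => G ((t, x), s)) ((fderiv ℝ G u) (0, 1)) y := by
      have hG' := (hGc.differentiableAt (by norm_num)).hasFDerivAt
      exact HasFDerivAt.comp_hasDerivAt (f := fun s : ℝ => (((t, x), s) : (ℝ × ℝ) × ℝ)) y hG'
        ((hasDerivAt_const y (t, x)).prodMk (hasDerivAt_id y))
    have h2 : HasDerivAt (fun s : ℝ => G ((t, x), s)) D y := by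
      have := (((hFd y hy).sub_const t).mul (hasDerivAt_id y)).sub ((hFd y hy).const_mul x)
      refine this.congr_deriv ?_
      simp [hD]; ring
    exact h1.unique h2
  have hinv : (fderiv ℝ G u ∘L .inr ℝ (ℝ × ℝ) ℝ).IsInvertible := by
    refine ⟨ContinuousLinearEquiv.smulLeft (Units.mk0 D hDpos.ne'), ?_⟩
    ext
    simp [hpartial]
  have hGu : G u = 0 := by simp [hG, hu]; linarith
  refine ⟨hGc.implicitFunction (by norm_num) hinv,
    hGc.contDiffAt_implicitFunction (by norm_num) hinv,
    hGc.implicitFunction_apply_self (by norm_num) hinv, ?_⟩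
  filter_upwards [hGc.eventually_apply_implicitFunction (by norm_num) hinv] with p hp
  rw [hGu] at hp
  simp only [hG] at hp
  linarith

/-- The local `C²` function `Φ (t, x) = F y - t`, where `x = (1 - t / F y) * y`, is strictly
increasing in `x` and satisfies `∂ₜΦ = x ∂ₓΦ / Φ - 1` at nonnegative times. -/
lemma exists_local_mass {F f : ℝ → ℝ} {A : ℝ}
    (hFd : ∀ y ∈ Ioo 0 A, HasDerivAt F (f y) y) (hf : ContDiffOn ℝ 1 f (Ioo 0 A))
    (hfpos : ∀ y ∈ Ioo 0 A, 0 < f y)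
    {t x y : ℝ} (ht : 0 ≤ t) (hy : y ∈ Ioo 0 A) (hty : t < F y)
    (hx : (F y - t) * y = x * F y) :
    ∃ Φ : ℝ × ℝ → ℝ, ContDiffAt ℝ 2 Φ (t, x) ∧ ∀ᶠ p in 𝓝 (t, x), 0 ≤ p.1 →
      (∃ z ∈ Ioo 0 A, p.1 < F z ∧ p.2 = (1 - p.1 / F z) * z ∧ Φ p = F z - p.1) ∧
      0 < fderiv ℝ Φ p (0, 1) ∧
      fderiv ℝ Φ p (1, 0) = p.2 * fderiv ℝ Φ p (0, 1) / Φ p - 1 := by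
  obtain ⟨Y, hYc, hY0, hYeq⟩ := exists_implicit hFd hf hfpos ht hy hty hx
  have hF2 := contDiffOn_two_of_hasDerivAt hFd hf
  have hF2y : ContDiffAt ℝ 2 F (Y (t, x)) := hY0 ▸ hF2.contDiffAt (isOpen_Ioo.mem_nhds hy)
  have hFY : ContDiffAt ℝ 2 (fun p => F (Y p)) (t, x) := ContDiffAt.comp (t, x) hF2y hYc
  have hmem : ∀ᶠ p in 𝓝 (t, x), Y p ∈ Ioo 0 A :=
    hYc.continuousAt.eventually (by rw [hY0]; exact isOpen_Ioo.mem_nhds hy)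
  have hlt : ∀ᶠ p : ℝ × ℝ in 𝓝 (t, x), p.1 < F (Y p) :=
    continuousAt_fst.eventually_lt hFY.continuousAt (by simpa [hY0] using hty)
  refine ⟨fun p => F (Y p) - p.1, hFY.sub contDiffAt_fst, ?_⟩
  filter_upwards [hmem, hlt, hYeq.eventually_nhds, hYc.eventually (by simp)] with
    p hpm hpl hpe hpc hp0
  have hFp : 0 < F (Y p) := hp0.trans_lt hpl
  have hpe0 := hpe.self_of_nhds
  have hYd : HasFDerivAt Y (fderiv ℝ Y p) p := (hpc.differentiableAt (by norm_num)).hasFDerivAt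
  have hFYd : HasFDerivAt (fun p => F (Y p)) (f (Y p) • fderiv ℝ Y p) p :=
    (hFd _ hpm).comp_hasFDerivAt p hYd
  have hΦd : HasFDerivAt (fun p : ℝ × ℝ => F (Y p) - p.1)
      (f (Y p) • fderiv ℝ Y p - ContinuousLinearMap.fst ℝ ℝ ℝ) p := hFYd.sub hasFDerivAt_fst
  -- Differentiate both sides of `(F (Y p) - p.1) * Y p = p.2 * F (Y p)`.
  have hL := hΦd.mul hYd
  have hR := (hasFDerivAt_snd (𝕜 := ℝ) (p := p)).mul hFYd
  have hLR := (hL.congr_of_eventuallyEq (hpe.mono fun q hq => hq.symm)).unique hR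
  have ex := DFunLike.congr_fun hLR ((0, 1) : ℝ × ℝ)
  have et := DFunLike.congr_fun hLR ((1, 0) : ℝ × ℝ)
  simp at ex et
  rw [hΦd.fderiv]
  simp only [sub_apply, smul_apply, smul_eq_mul,
    ContinuousLinearMap.coe_fst']
  set b := fderiv ℝ Y p (1, 0)
  set a := fderiv ℝ Y p (0, 1)
  set φ := f (Y p)
  have hφ : 0 < φ := hfpos _ hpm
  set C := F (Y p)
  set y' := Y p
  have hΦ : 0 < C - p.1 := by linarith
  have hyx : 0 ≤ y' - p.2 := by
    have h1 : (y' - p.2) * C = p.1 * y' := by linarith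
    have h2 : 0 ≤ (y' - p.2) * C := h1 ▸ mul_nonneg hp0 hpm.1.le
    exact nonneg_of_mul_nonneg_left h2 hFp
  have hD : 0 < φ * (y' - p.2) + (C - p.1) := by
    have := mul_nonneg hφ.le hyx
    linarith
  have ha : a * (φ * (y' - p.2) + (C - p.1)) = C := by linarith
  have hb : b * (φ * (y' - p.2) + (C - p.1)) = y' := by linarith
  refine ⟨⟨y', hpm, hpl, ?_, rfl⟩, ?_, ?_⟩
  · change p.2 = (1 - p.1 / C) * y'
    field_simp
    linarith
  · have : 0 < a := pos_of_mul_pos_left (hFp.trans_eq ha.symm) hD.le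
    simpa using mul_pos hφ this
  · have : b * (C - p.1) = p.2 * a := by
      apply mul_right_cancel₀ hD.ne'
      linear_combination (C - p.1) * hb - p.2 * ha + hpe0
    rw [sub_zero, eq_comm, sub_left_inj, div_eq_iff hΦ.ne']
    linear_combination -φ * this

/-- Every `x ∈ (0, A (1 - t))` is of the form `(1 - t / F y) * y` with `F y > t`. -/
lemma exists_flow_eq {F : ℝ → ℝ} {A : ℝ} (hA : 0 < A) (hc : Continuous F) (h0 : F 0 = 0)
    (h1 : F A = 1) (hmono : StrictMonoOn F (Icc 0 A)) {t x : ℝ} (ht : t ∈ Ico (0 : ℝ) 1)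
    (hx : x ∈ Ioo 0 (A * (1 - t))) :
    ∃ y ∈ Ioo 0 A, t < F y ∧ x = (1 - t / F y) * y := by
  rcases ht.1.eq_or_lt with rfl | htpos
  · have hx' : x ∈ Ioo 0 A := by simpa using hx
    refine ⟨x, hx', ?_, by simp⟩
    have := hmono ⟨le_rfl, hA.le⟩ (Ioo_subset_Icc_self hx') hx'.1
    rwa [h0] at this
  · have hs := intermediate_value_Ioo hA.le hc.continuousOn
    rw [h0, h1] at hs
    obtain ⟨w, hw, hwt⟩ := hs ⟨htpos, ht.2⟩
    have hgt : ∀ y ∈ Icc w A, F y ≠ 0 := fun y hy => by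
      have := hmono.monotoneOn (Ioo_subset_Icc_self hw) ⟨hw.1.le.trans hy.1, hy.2⟩ hy.1
      exact (htpos.trans_le (hwt ▸ this)).ne'
    have hcont : ContinuousOn (fun y => (1 - t / F y) * y) (Icc w A) :=
      (continuousOn_const.sub (continuousOn_const.div hc.continuousOn hgt)).mul continuousOn_id
    have hi := intermediate_value_Ioo hw.2.le hcont
    simp only [hwt, h1, div_self htpos.ne', sub_self, zero_mul, div_one] at hi
    obtain ⟨y, hy, hyx⟩ := hi ⟨hx.1, by linarith [hx.2]⟩
    have hy' : y ∈ Ioo 0 A := ⟨hw.1.trans hy.1, hy.2⟩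
    refine ⟨y, hy', ?_, hyx.symm⟩
    rw [← hwt]
    have hmem := Ioo_subset_Icc_self hy'
    exact hmono (Ioo_subset_Icc_self hw) hmem hy.1

/-! ### Identification of the density and the equation -/

/-- Any family `M t` of distribution functions with `M t ((1 - t / F y) * y) = F y - t` and density
`max ψ 0` agrees locally with a `C²` function `Φ`, and `ψ` is then positive and equal to `∂ₓΦ`. -/
lemma exists_local_density {F f : ℝ → ℝ} {A : ℝ} (hA : 0 < A) (hc : Continuous F) (h0 : F 0 = 0)
    (h1 : F A = 1) (hmono : StrictMonoOn F (Icc 0 A))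
    (hFd : ∀ y ∈ Ioo 0 A, HasDerivAt F (f y) y) (hf : ContDiffOn ℝ 1 f (Ioo 0 A))
    (hfpos : ∀ y ∈ Ioo 0 A, 0 < f y)
    {M ψ : ℝ → ℝ → ℝ}
    (hM : ∀ t ∈ Ico (0 : ℝ) 1, ∀ y ∈ Ioo 0 A, t < F y → M t ((1 - t / F y) * y) = F y - t)
    (hMd : ∀ t ∈ Ico (0 : ℝ) 1, ∀ x ∈ Ioo 0 (A * (1 - t)), HasDerivAt (M t) (max (ψ x t) 0) x)
    {t x : ℝ} (ht : t ∈ Ico (0 : ℝ) 1) (hx : x ∈ Ioo 0 (A * (1 - t))) :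
    ∃ Φ : ℝ × ℝ → ℝ, ContDiffAt ℝ 2 Φ (t, x) ∧ ∀ᶠ p in 𝓝 (t, x), p.1 ∈ Ico (0 : ℝ) 1 →
      p.2 ∈ Ioo 0 (A * (1 - p.1)) →
      M p.1 p.2 = Φ p ∧ 0 < ψ p.2 p.1 ∧ ψ p.2 p.1 = fderiv ℝ Φ p (0, 1) ∧
      fderiv ℝ Φ p (1, 0) = p.2 * ψ p.2 p.1 / M p.1 p.2 - 1 := by
  obtain ⟨y, hy, hty, hxy⟩ := exists_flow_eq hA hc h0 h1 hmono ht hx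
  have hFy : 0 < F y := ht.1.trans_lt hty
  have hx' : (F y - t) * y = x * F y := by rw [hxy]; field_simp
  obtain ⟨Φ, hΦc, hΦ⟩ := exists_local_mass hFd hf hfpos ht.1 hy hty hx'
  refine ⟨Φ, hΦc, ?_⟩
  have hMΦ : ∀ᶠ p in 𝓝 (t, x), p.1 ∈ Ico (0 : ℝ) 1 → M p.1 p.2 = Φ p := by
    filter_upwards [hΦ] with p hp hp1
    obtain ⟨⟨z, hz, hpz, hp2, hΦp⟩, -⟩ := hp hp1.1
    rw [hp2, hΦp]
    exact hM _ hp1 z hz hpz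
  filter_upwards [hΦ, hMΦ.eventually_nhds, hΦc.eventually (by simp)] with p hp hpM hpc hp1 hp2
  obtain ⟨-, hpos, hid⟩ := hp hp1.1
  have hder : HasDerivAt (fun s => Φ (p.1, s)) (fderiv ℝ Φ p (0, 1)) p.2 :=
    HasFDerivAt.comp_hasDerivAt (f := fun s : ℝ => ((p.1, s) : ℝ × ℝ)) p.2
      (hpc.differentiableAt (by norm_num)).hasFDerivAt
      ((hasDerivAt_const p.2 p.1).prodMk (hasDerivAt_id p.2))
  have hev : ∀ᶠ s in 𝓝 p.2, M p.1 s = Φ (p.1, s) := by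
    have hcs : ContinuousAt (fun s : ℝ => ((p.1, s) : ℝ × ℝ)) p.2 := by fun_prop
    filter_upwards [hcs.eventually hpM] with s hs using hs hp1
  have hmax : max (ψ p.2 p.1) 0 = fderiv ℝ Φ p (0, 1) :=
    (hMd _ hp1 _ hp2).unique (hder.congr_of_eventuallyEq hev)
  have hψpos : 0 < ψ p.2 p.1 := by
    rw [← hmax] at hpos
    simpa using hpos
  rw [max_eq_left hψpos.le] at hmax
  have hMp := hpM.self_of_nhds hp1
  exact ⟨hMp, hψpos, hmax, by rw [hid, hMp, hmax]⟩

/-- For a `C²` function `Φ` of `(t, x)`, the partial derivative `∂ₓΦ` is `C¹`, and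
`∂ₜ∂ₓΦ = ∂ₓ∂ₜΦ` in terms of one-variable derivatives. -/
lemma fderiv_slice_comm {Φ : ℝ × ℝ → ℝ} {t x : ℝ} (hΦ : ContDiffAt ℝ 2 Φ (t, x)) :
    ContDiffAt ℝ 1 (fun p => fderiv ℝ Φ p (0, 1)) (t, x) ∧
    ∃ d, HasDerivAt (fun τ => fderiv ℝ Φ (τ, x) (0, 1)) d t ∧
      HasDerivAt (fun y => fderiv ℝ Φ (t, y) (1, 0)) d x := by
  have h1 : ContDiffAt ℝ 1 (fderiv ℝ Φ) (t, x) := hΦ.fderiv_right (by norm_num)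
  have hd := (h1.differentiableAt (by norm_num)).hasFDerivAt
  have hsymm := hΦ.isSymmSndFDerivAt (by simp)
  refine ⟨h1.clm_apply contDiffAt_const, fderiv ℝ (fderiv ℝ Φ) (t, x) (1, 0) (0, 1), ?_, ?_⟩
  · have := HasFDerivAt.comp_hasDerivAt (f := fun s : ℝ => ((s, x) : ℝ × ℝ)) t hd
      ((hasDerivAt_id t).prodMk (hasDerivAt_const t x))
    simpa using this.clm_apply (hasDerivAt_const t ((0, 1) : ℝ × ℝ))
  · have := HasFDerivAt.comp_hasDerivAt (f := fun s : ℝ => ((t, s) : ℝ × ℝ)) x hd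
      ((hasDerivAt_const x t).prodMk (hasDerivAt_id x))
    rw [hsymm.eq]
    simpa using this.clm_apply (hasDerivAt_const x ((1, 0) : ℝ × ℝ))

/-- Let `ν₀` be a probability measure on `[0,∞)`, absolutely continuous
with Lebesgue density `f` supported on `[0,A]`, `f` strictly positive and continuously
differentiable on `(0,A)`. For `t ∈ [0,1)` let `ν_t` be the law of
`(1 - t/V_t)·q_{ν₀}(V_t)`, `V_t` uniform on `[t,1]`, and let `ψ(·,t)` be the (continuous)
Lebesgue density of `(1-t)·ν_t` on `(0, A(1-t))`. Then `ψ` is continuously differentiable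
in the two variables on `S = {(t,x) : t ∈ [0,1), 0 < x < A(1-t)}` and, on `S`,
`∂ψ(x,t)/∂t = ∂/∂x (ψ(x,t) / ((1/x)∫₀ˣ ψ(y,t) dy))` (the `t`-derivative being taken
within `[0,1)`). -/
theorem stmt16 (A : ℝ) (hA : 0 < A)
    (ν0 : Measure ℝ) [IsProbabilityMeasure ν0]
    (f : ℝ → ℝ)
    (hν0 : ν0 = MeasureTheory.volume.withDensity (fun x => ENNReal.ofReal (f x)))
    (hfsupp : ∀ x, x ∉ Set.Icc 0 A → f x = 0)
    (hfdiff : ContDiffOn ℝ 1 f (Set.Ioo 0 A))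
    (hfpos : ∀ x ∈ Set.Ioo 0 A, 0 < f x)
    (ν : ℝ → Measure ℝ)
    (hν : ∀ t : ℝ, ν t = Measure.map (fun v => (1 - t / v) * quantileFn ν0 v) (unifOn t 1))
    (ψ : ℝ → ℝ → ℝ)
    (hψcont : ∀ t ∈ Set.Ico (0 : ℝ) 1,
      ContinuousOn (fun x => ψ x t) (Set.Ioo 0 (A * (1 - t))))
    (hψdens : ∀ t ∈ Set.Ico (0 : ℝ) 1,
      ENNReal.ofReal (1 - t) • ν t
        = MeasureTheory.volume.withDensity
            (fun x => ENNReal.ofReal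
              ((Set.Ioo 0 (A * (1 - t))).indicator (fun y => ψ y t) x))) :
    ContDiffOn ℝ 1 (fun p : ℝ × ℝ => ψ p.2 p.1)
      {p : ℝ × ℝ | p.1 ∈ Set.Ico (0 : ℝ) 1 ∧ p.2 ∈ Set.Ioo 0 (A * (1 - p.1))}
    ∧
    (∀ t x : ℝ, t ∈ Set.Ico (0 : ℝ) 1 → x ∈ Set.Ioo 0 (A * (1 - t)) →
      derivWithin (fun τ => ψ x τ) (Set.Ico (0 : ℝ) 1) t
        = deriv (fun y => ψ y t / ((1 / y) * ∫ z in (0 : ℝ)..y, ψ z t)) x) := by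
  -- The endpoints `0`, `A`, where `f` is unconstrained, form a null set.
  have hν0' : ν0 = volume.withDensity
      (fun x => ENNReal.ofReal ((Ioo 0 A).indicator f x)) := by
    rw [hν0]
    refine withDensity_congr_ae ?_
    filter_upwards [Ioo_ae_eq_Icc (μ := volume) (a := (0 : ℝ)) (b := A)] with x hx
    by_cases hxm : x ∈ Ioo 0 A
    · simp [hxm]
    · have hx' : x ∉ Icc 0 A := fun h => hxm (hx.mpr h)
      rw [indicator_of_notMem hxm, hfsupp x hx']
  obtain ⟨hc, h0, h1, -, hd⟩ := cdf_of_density ν0 A f hfdiff.continuousOn hν0'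
  set F : ℝ → ℝ := fun x => ν0.real (Iic x) with hF
  have hFd : ∀ y ∈ Ioo 0 A, HasDerivAt F (f y) y := fun y hy => by
    simpa [(hfpos y hy).le] using hd y hy
  have hFA : F A = 1 := by simpa using h1 A le_rfl
  have hmono : StrictMonoOn F (Icc 0 A) := by
    refine strictMonoOn_of_deriv_pos (convex_Icc 0 A) hc.continuousOn fun y hy => ?_
    rw [interior_Icc] at hy
    rw [(hFd y hy).deriv]
    exact hfpos y hy
  -- `M t` is the distribution function of `(1 - t) • ν t`.
  set M : ℝ → ℝ → ℝ := fun t x => (ENNReal.ofReal (1 - t) • ν t).real (Iic x) with hMdef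
  have hM : ∀ t ∈ Ico (0 : ℝ) 1, ∀ y ∈ Ioo 0 A, t < F y →
      M t ((1 - t / F y) * y) = F y - t := by
    intro t ht y hy hty
    simp only [hMdef, hν]
    exact law_Iic ν0 A hA hc h0 hFA hmono t ht y hy hty
  have hfin : ∀ t ∈ Ico (0 : ℝ) 1, IsFiniteMeasure (ENNReal.ofReal (1 - t) • ν t) := by
    intro t ht
    have h1t : 0 < 1 - t := by linarith [ht.2]
    have : IsFiniteMeasure (unifOn t 1) := by
      rw [unifOn]
      exact Measure.smul_finite _ (ENNReal.inv_ne_top.2 (by simpa using h1t))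
    have : IsFiniteMeasure (ν t) := by rw [hν]; infer_instance
    exact Measure.smul_finite _ ENNReal.ofReal_ne_top
  have hMd : ∀ t ∈ Ico (0 : ℝ) 1, ∀ x ∈ Ioo 0 (A * (1 - t)),
      HasDerivAt (M t) (max (ψ x t) 0) x := fun t ht =>
    have := hfin t ht
    (cdf_of_density _ _ _ (hψcont t ht) (hψdens t ht)).2.2.2.2
  have hloc : ∀ t ∈ Ico (0 : ℝ) 1, ∀ x ∈ Ioo 0 (A * (1 - t)), _ := fun t ht x hx =>
    exists_local_density hA hc h0 hFA hmono hFd hfdiff hfpos hM hMd ht hx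
  have hψpos : ∀ t ∈ Ico (0 : ℝ) 1, ∀ x ∈ Ioo 0 (A * (1 - t)), 0 < ψ x t := by
    intro t ht x hx
    obtain ⟨Φ, -, hΦ⟩ := hloc t ht x hx
    exact (hΦ.self_of_nhds ht hx).2.1
  have hMint : ∀ t ∈ Ico (0 : ℝ) 1, ∀ x ∈ Ioo 0 (A * (1 - t)),
      M t x = ∫ z in (0 : ℝ)..x, ψ z t := by
    intro t ht x hx
    have := hfin t ht
    have h := (cdf_of_density _ _ _ (hψcont t ht) (hψdens t ht)).2.2.2.1 x hx
    refine h.trans (intervalIntegral.integral_congr_ae (ae_of_all _ fun z hz => ?_))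
    rw [uIoc_of_le hx.1.le] at hz
    exact max_eq_left (hψpos t ht z ⟨hz.1, hz.2.trans_lt hx.2⟩).le
  constructor
  · rintro ⟨t, x⟩ ⟨ht, hx⟩
    obtain ⟨Φ, hΦc, hΦ⟩ := hloc t ht x hx
    refine (fderiv_slice_comm hΦc).1.contDiffWithinAt.congr_of_eventuallyEq ?_
      (hΦ.self_of_nhds ht hx).2.2.1
    filter_upwards [nhdsWithin_le_nhds hΦ, self_mem_nhdsWithin] with p hp hpS
    exact (hp hpS.1 hpS.2).2.2.1
  · intro t x ht hx
    obtain ⟨Φ, hΦc, hΦ⟩ := hloc t ht x hx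
    obtain ⟨-, d, hdt, hdx⟩ := fderiv_slice_comm hΦc
    have hL : HasDerivWithinAt (fun τ => ψ x τ) d (Ico (0 : ℝ) 1) t := by
      refine hdt.hasDerivWithinAt.congr_of_eventuallyEq ?_ (hΦ.self_of_nhds ht hx).2.2.1
      have hcs : ContinuousAt (fun τ : ℝ => ((τ, x) : ℝ × ℝ)) t := by fun_prop
      have hxτ : ∀ᶠ τ in 𝓝 t, x < A * (1 - τ) :=
        (continuousAt_const (y := x)).eventually_lt (by fun_prop) hx.2
      filter_upwards [nhdsWithin_le_nhds (hcs.eventually hΦ), nhdsWithin_le_nhds hxτ,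
        self_mem_nhdsWithin] with τ h hlt hτ
      exact (h hτ ⟨hx.1, hlt⟩).2.2.1
    have hR : HasDerivAt (fun y => ψ y t / ((1 / y) * ∫ z in (0 : ℝ)..y, ψ z t)) d x := by
      refine (hdx.add_const 1).congr_of_eventuallyEq ?_
      have hcs : ContinuousAt (fun y : ℝ => ((t, y) : ℝ × ℝ)) x := by fun_prop
      filter_upwards [hcs.eventually hΦ, isOpen_Ioo.mem_nhds hx] with y h hy
      obtain ⟨-, -, -, hid⟩ := h ht hy
      rw [hid, hMint t ht y hy, sub_add_cancel, one_div, ← div_div, div_inv_eq_mul, mul_comm]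
    rw [hL.derivWithin (uniqueDiffOn_Ico 0 1 t ht), hR.deriv]
end
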